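/- arXiv:1510.06328 — 2 statements merged into one kernel-verified Lean document; each statement's English description precedes it below -/
import Mathlib

section
/- For a permutation σ of length n avoiding 4213 and 2143, let left(σ) = min{j : there exists k such that (j,k) is a G-gridding of σ} (the minimal number of left points over all G-griddings of σ). Then the average of left(σ) over all permutations of length n avoiding 4213 and 2143 converges to 175/132 as n → ∞, and its variance converges to 74795/17424 (so the limiting standard deviation is √74795/132). -/
open Filter Topology PowerSeries

/-- `σ` contains the pattern `π`. -/
def PatternContains {n k : ℕ} (σ : Equiv.Perm (Fin n)) (π : Fin k → Fin k) : Prop :=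
  ∃ f : Fin k → Fin n, StrictMono f ∧ ∀ a b : Fin k, π a < π b ↔ σ (f a) < σ (f b)

/-- `σ` avoids the pattern `π`. -/
def PatternAvoids {n k : ℕ} (σ : Equiv.Perm (Fin n)) (π : Fin k → Fin k) : Prop :=
  ¬ PatternContains σ π

/-- The pattern 4213 (zero-indexed values). -/
def p4213 : Fin 4 → Fin 4 := ![3, 1, 0, 2]

/-- The pattern 2413 (zero-indexed values). -/
def p2413 : Fin 4 → Fin 4 := ![1, 3, 0, 2]

/-- The pattern 2143 (zero-indexed values). -/
def p2143 : Fin 4 → Fin 4 := ![1, 0, 3, 2]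

/-- The pattern 213 (zero-indexed values). -/
def p213 : Fin 3 → Fin 3 := ![1, 0, 2]

/-- `σ` avoids 4213, 2413 and 2143. -/
def AvoidsH {n : ℕ} (σ : Equiv.Perm (Fin n)) : Prop :=
  PatternAvoids σ p4213 ∧ PatternAvoids σ p2413 ∧ PatternAvoids σ p2143

/-- `σ` avoids 4213 and 2143. -/
def AvoidsD {n : ℕ} (σ : Equiv.Perm (Fin n)) : Prop :=
  PatternAvoids σ p4213 ∧ PatternAvoids σ p2143

/-- An H-gridding of `σ`: a value cutoff `k ∈ {0,…,n}` such that the subsequence of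
entries with (1-based) values `> k` is increasing and the subsequence of entries with
values `≤ k` avoids 213. -/
def HGridding {n : ℕ} (σ : Equiv.Perm (Fin n)) (k : ℕ) : Prop :=
  k ≤ n ∧
  (∀ i j : Fin n, i < j → k < (σ i : ℕ) + 1 → k < (σ j : ℕ) + 1 → σ i < σ j) ∧
  ¬ ∃ f : Fin 3 → Fin n, StrictMono f ∧ (∀ a, (σ (f a) : ℕ) + 1 ≤ k) ∧
      (∀ a b : Fin 3, p213 a < p213 b ↔ σ (f a) < σ (f b))

/-- A G-gridding of `σ`: a pair `(j, k)` with `0 ≤ j, k ≤ n` such that (i) the first `j`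
entries have values `≤ k` and are increasing, (ii) the subsequence of entries at
(1-based) positions `> j` with values `> k` is increasing, and (iii) the subsequence of
entries at positions `> j` with values `≤ k` avoids 213. -/
def GGridding {n : ℕ} (σ : Equiv.Perm (Fin n)) (j k : ℕ) : Prop :=
  j ≤ n ∧ k ≤ n ∧
  (∀ i : Fin n, (i : ℕ) < j → (σ i : ℕ) + 1 ≤ k) ∧
  (∀ i₁ i₂ : Fin n, i₁ < i₂ → (i₂ : ℕ) < j → σ i₁ < σ i₂) ∧
  (∀ i₁ i₂ : Fin n, i₁ < i₂ → j ≤ (i₁ : ℕ) → k < (σ i₁ : ℕ) + 1 → k < (σ i₂ : ℕ) + 1 →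
      σ i₁ < σ i₂) ∧
  ¬ ∃ f : Fin 3 → Fin n, StrictMono f ∧ (∀ a, j ≤ ((f a) : ℕ) ∧ (σ (f a) : ℕ) + 1 ≤ k) ∧
      (∀ a b : Fin 3, p213 a < p213 b ↔ σ (f a) < σ (f b))

/-- The number of permutations of length `n` avoiding 4213, 2413 and 2143. -/
noncomputable def hCount (n : ℕ) : ℕ :=
  Nat.card {σ : Equiv.Perm (Fin n) // AvoidsH σ}

/-- The number of permutations of length `n` avoiding 4213 and 2143. -/
noncomputable def dCount (n : ℕ) : ℕ :=
  Nat.card {σ : Equiv.Perm (Fin n) // AvoidsD σ}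

/-- The minimal number of top points over all H-griddings of `σ`. -/
noncomputable def topPts {n : ℕ} (σ : Equiv.Perm (Fin n)) : ℕ :=
  n - sSup {k | HGridding σ k}

/-- The minimal number of left points over all G-griddings of `σ`. -/
noncomputable def leftPts {n : ℕ} (σ : Equiv.Perm (Fin n)) : ℕ :=
  sInf {j | ∃ k, GGridding σ j k}


/-! ### Prepending an entry to a permutation -/

/-- The permutation obtained from `σ` by adding a first entry of value `v`. -/
def prepend {n : ℕ} (v : Fin (n + 1)) (σ : Equiv.Perm (Fin n)) : Equiv.Perm (Fin (n + 1)) :=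
  ((finSuccEquiv' 0).trans (Equiv.optionCongr σ)).trans (finSuccEquiv' v).symm

@[simp] lemma prepend_zero {n : ℕ} (v : Fin (n + 1)) (σ : Equiv.Perm (Fin n)) :
    prepend v σ 0 = v := by
  simp [prepend]

@[simp] lemma prepend_succ {n : ℕ} (v : Fin (n + 1)) (σ : Equiv.Perm (Fin n)) (i : Fin n) :
    prepend v σ i.succ = v.succAbove (σ i) := by
  have h : finSuccEquiv' (0 : Fin (n + 1)) i.succ = some i := by
    simp
  simp [prepend, h]

lemma prepend_bijective (n : ℕ) :
    Function.Bijective fun p : Fin (n + 1) × Equiv.Perm (Fin n) => prepend p.1 p.2 := by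
  rw [Fintype.bijective_iff_injective_and_card]
  refine ⟨?_, by simp [Fintype.card_perm, Nat.factorial_succ]⟩
  rintro ⟨v, σ⟩ ⟨v', σ'⟩ h
  have hv : v = v' := by simpa using congrArg (fun τ => τ 0) h
  subst hv
  have hσ : σ = σ' := by
    ext i
    have := congrArg (fun τ => τ i.succ) h
    simp only [prepend_succ] at this
    rw [Fin.succAbove_right_injective this]
  rw [hσ]

lemma sum_perm_succ {n : ℕ} {M : Type*} [AddCommMonoid M] (F : Equiv.Perm (Fin (n + 1)) → M) :
    ∑ τ, F τ = ∑ σ : Equiv.Perm (Fin n), ∑ v, F (prepend v σ) := by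
  rw [← (prepend_bijective n).sum_comp F, Fintype.sum_prod_type_right]

/-- The value that `x` takes after a new value `v` is inserted. -/
def lift (v x : ℕ) : ℕ := if x < v then x else x + 1

lemma prepend_succ_val {n : ℕ} (v : Fin (n + 1)) (σ : Equiv.Perm (Fin n)) (i : Fin n) :
    (prepend v σ i.succ : ℕ) = lift v (σ i) := by
  rw [prepend_succ, lift, Fin.succAbove]
  simp only [Fin.lt_def, Fin.val_castSucc]
  split_ifs <;> simp

/-! ### Patterns separated by a value gap

A gap `g` lies below all the entries of value at least `g` and above the others. -/

section Gaps

variable {n : ℕ} (σ : Equiv.Perm (Fin n))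

/-- Some 213 lies below the gap `g`. -/
def Below213 (g : ℕ) : Prop :=
  ∃ i j k : Fin n, i < j ∧ j < k ∧ (σ j : ℕ) < σ i ∧ (σ i : ℕ) < σ k ∧ (σ k : ℕ) < g

/-- The gap `g` separates the 1 from the 32 in some 132. -/
def Split132 (g : ℕ) : Prop :=
  ∃ i j k : Fin n, i < j ∧ j < k ∧ (σ i : ℕ) < g ∧ g ≤ σ k ∧ (σ k : ℕ) < σ j

/-- The gap `g` separates the 1 from the 32 in some 312. -/
def Split312 (g : ℕ) : Prop :=
  ∃ i j k : Fin n, i < j ∧ j < k ∧ (σ j : ℕ) < g ∧ g ≤ σ k ∧ (σ k : ℕ) < σ i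

/-- Some 21 lies above the gap `g`. -/
def Above21 (g : ℕ) : Prop :=
  ∃ i j : Fin n, i < j ∧ g ≤ σ j ∧ (σ j : ℕ) < σ i

/-- Some 12 below the gap `h` is split by the gap `g`. -/
def Split12 (g h : ℕ) : Prop :=
  ∃ i j : Fin n, i < j ∧ (σ i : ℕ) < g ∧ g ≤ σ j ∧ (σ j : ℕ) < h

/-- `σ` contains 2413 with its first entry at position at least `m`. -/
def Has2413From (m : ℕ) : Prop :=
  ∃ a b c d : Fin n, m ≤ a ∧ a < b ∧ b < c ∧ c < d ∧
    (σ c : ℕ) < σ a ∧ (σ a : ℕ) < σ d ∧ (σ d : ℕ) < σ b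

end Gaps

lemma patternContains_four {n : ℕ} {σ : Equiv.Perm (Fin n)} {π : Fin 4 → Fin 4} :
    PatternContains σ π ↔ ∃ a b c d : Fin n, a < b ∧ b < c ∧ c < d ∧
      ∀ x y : Fin 4, π x < π y ↔ σ (![a, b, c, d] x) < σ (![a, b, c, d] y) := by
  constructor
  · rintro ⟨f, hf, h⟩
    refine ⟨f 0, f 1, f 2, f 3, hf (by decide), hf (by decide), hf (by decide), ?_⟩
    have : ![f 0, f 1, f 2, f 3] = f := by ext i; fin_cases i <;> rfl
    rwa [this]
  · rintro ⟨a, b, c, d, hab, hbc, hcd, h⟩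
    refine ⟨![a, b, c, d], ?_, h⟩
    rw [Fin.strictMono_iff_lt_succ]
    intro i
    fin_cases i <;> simpa

lemma contains_4213 {n : ℕ} {σ : Equiv.Perm (Fin n)} :
    PatternContains σ p4213 ↔ ∃ a b c d : Fin n, a < b ∧ b < c ∧ c < d ∧
      (σ c : ℕ) < σ b ∧ (σ b : ℕ) < σ d ∧ (σ d : ℕ) < σ a := by
  rw [patternContains_four]
  refine exists_congr fun a => exists_congr fun b => exists_congr fun c => exists_congr fun d =>
    and_congr_right fun _ => and_congr_right fun _ => and_congr_right fun _ => ?_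
  simp [Fin.forall_fin_succ, p4213]
  simp only [Fin.lt_def, Fin.le_def]
  omega

lemma contains_2143 {n : ℕ} {σ : Equiv.Perm (Fin n)} :
    PatternContains σ p2143 ↔ ∃ a b c d : Fin n, a < b ∧ b < c ∧ c < d ∧
      (σ b : ℕ) < σ a ∧ (σ a : ℕ) < σ d ∧ (σ d : ℕ) < σ c := by
  rw [patternContains_four]
  refine exists_congr fun a => exists_congr fun b => exists_congr fun c => exists_congr fun d =>
    and_congr_right fun _ => and_congr_right fun _ => and_congr_right fun _ => ?_
  simp [Fin.forall_fin_succ, p2143]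
  simp only [Fin.lt_def, Fin.le_def]
  omega

lemma exists_lt_fin_succ {n : ℕ} {P : Fin (n + 1) → Fin (n + 1) → Prop} :
    (∃ i j, i < j ∧ P i j) ↔
      (∃ j : Fin n, P 0 j.succ) ∨ ∃ i j : Fin n, i < j ∧ P i.succ j.succ := by
  simp [Fin.exists_fin_succ]

lemma exists_lt_lt_fin_succ {n : ℕ} {P : Fin (n + 1) → Fin (n + 1) → Fin (n + 1) → Prop} :
    (∃ i j k, i < j ∧ j < k ∧ P i j k) ↔
      (∃ j k : Fin n, j < k ∧ P 0 j.succ k.succ) ∨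
        ∃ i j k : Fin n, i < j ∧ j < k ∧ P i.succ j.succ k.succ := by
  simp [Fin.exists_fin_succ]

lemma exists_lt_lt_lt_fin_succ {n : ℕ}
    {P : Fin (n + 1) → Fin (n + 1) → Fin (n + 1) → Fin (n + 1) → Prop} :
    (∃ i j k l, i < j ∧ j < k ∧ k < l ∧ P i j k l) ↔
      (∃ j k l : Fin n, j < k ∧ k < l ∧ P 0 j.succ k.succ l.succ) ∨
        ∃ i j k l : Fin n, i < j ∧ j < k ∧ k < l ∧ P i.succ j.succ k.succ l.succ := by
  simp [Fin.exists_fin_succ]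

lemma lift_lt_lift {v x y : ℕ} : lift v x < lift v y ↔ x < y := by
  unfold lift; split_ifs <;> omega

lemma lift_lt {v x : ℕ} : lift v x < v ↔ x < v := by
  unfold lift; split_ifs <;> omega

lemma lt_lift {v x : ℕ} : v < lift v x ↔ v ≤ x := by
  unfold lift; split_ifs <;> omega

lemma lift_lt_of_le {v g x : ℕ} (h : g ≤ v) : lift v x < g ↔ x < g := by
  unfold lift; split_ifs <;> omega

lemma le_lift_of_le {v g x : ℕ} (h : g ≤ v) : g ≤ lift v x ↔ g ≤ x := by
  unfold lift; split_ifs <;> omega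

lemma lift_lt_succ {v g x : ℕ} (h : v ≤ g) : lift v x < g + 1 ↔ x < g := by
  unfold lift; split_ifs <;> omega

lemma succ_le_lift {v g x : ℕ} (h : v ≤ g) : g + 1 ≤ lift v x ↔ g ≤ x := by
  unfold lift; split_ifs <;> omega

section Prepend

variable {n : ℕ} {v : Fin (n + 1)} {σ : Equiv.Perm (Fin n)} {g h : ℕ}

lemma avoidsD_prepend :
    AvoidsD (prepend v σ) ↔ AvoidsD σ ∧ ¬ Below213 σ v ∧ ¬ Split132 σ v := by
  simp only [AvoidsD, PatternAvoids, contains_4213, contains_2143, Below213, Split132,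
    exists_lt_lt_lt_fin_succ, prepend_zero, prepend_succ_val, lift_lt_lift, lift_lt, lt_lift]
  rw [not_or, not_or]
  exact ⟨fun ⟨⟨a, b⟩, c, d⟩ => ⟨⟨b, d⟩, a, c⟩, fun ⟨⟨b, d⟩, a, c⟩ => ⟨⟨a, b⟩, c, d⟩⟩

lemma has2413From_prepend_zero :
    Has2413From (prepend v σ) 0 ↔ Has2413From σ 0 ∨ Split312 σ v := by
  simp only [Has2413From, Split312, Nat.zero_le, true_and,
    exists_lt_lt_lt_fin_succ, prepend_zero, prepend_succ_val, lift_lt_lift, lift_lt, lt_lift]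
  exact or_comm

lemma has2413From_prepend_succ {m : ℕ} :
    Has2413From (prepend v σ) (m + 1) ↔ Has2413From σ m := by
  constructor
  · rintro ⟨a, b, c, d, hm, hab, hbc, hcd, h₁, h₂, h₃⟩
    have ha : a ≠ 0 := by rintro rfl; simp at hm
    obtain ⟨a, rfl⟩ := Fin.exists_succ_eq.2 ha
    obtain ⟨b, rfl⟩ := Fin.exists_succ_eq.2 (hab.trans' a.succ_pos).ne'
    obtain ⟨c, rfl⟩ := Fin.exists_succ_eq.2 (hbc.trans' b.succ_pos).ne'
    obtain ⟨d, rfl⟩ := Fin.exists_succ_eq.2 (hcd.trans' c.succ_pos).ne'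
    simp only [prepend_succ_val, lift_lt_lift, Fin.succ_lt_succ_iff, Fin.val_succ] at *
    exact ⟨a, b, c, d, by omega, hab, hbc, hcd, h₁, h₂, h₃⟩
  · rintro ⟨a, b, c, d, hm, hab, hbc, hcd, h₁, h₂, h₃⟩
    refine ⟨a.succ, b.succ, c.succ, d.succ, by simpa, by simpa, by simpa, by simpa, ?_⟩
    simp only [prepend_succ_val, lift_lt_lift]
    exact ⟨h₁, h₂, h₃⟩

lemma below213_prepend_of_le (hg : g ≤ v) : Below213 (prepend v σ) g ↔ Below213 σ g := by
  simp only [Below213, exists_lt_lt_fin_succ, prepend_zero, prepend_succ_val, lift_lt_lift,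
    lift_lt, lt_lift, lift_lt_of_le hg]
  refine or_iff_right ?_
  rintro ⟨_, _, _, _, _, _⟩
  omega

lemma below213_prepend_succ (hg : v ≤ g) :
    Below213 (prepend v σ) (g + 1) ↔ Below213 σ g ∨ Split12 σ v g := by
  simp only [Below213, Split12, exists_lt_lt_fin_succ, prepend_zero, prepend_succ_val,
    lift_lt_lift, lift_lt, lt_lift, lift_lt_succ hg]
  exact or_comm

lemma split132_prepend_of_le (hg : g ≤ v) : Split132 (prepend v σ) g ↔ Split132 σ g := by
  simp only [Split132, exists_lt_lt_fin_succ, prepend_zero, prepend_succ_val, lift_lt_lift,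
    lift_lt_of_le hg, le_lift_of_le hg]
  refine or_iff_right ?_
  rintro ⟨_, _, _, _, _⟩
  omega

lemma split132_prepend_succ (hg : v ≤ g) :
    Split132 (prepend v σ) (g + 1) ↔ Split132 σ g ∨ Above21 σ g := by
  simp only [Split132, Above21, exists_lt_lt_fin_succ, prepend_zero, prepend_succ_val,
    lift_lt_lift, lift_lt_succ hg, succ_le_lift hg, Nat.lt_succ_iff.2 hg, true_and]
  exact or_comm

lemma split312_prepend_of_le (hg : g ≤ v) :
    Split312 (prepend v σ) g ↔ Split312 σ g ∨ Split12 σ g v := by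
  simp only [Split312, Split12, exists_lt_lt_fin_succ, prepend_zero, prepend_succ_val,
    lift_lt_lift, lift_lt, lift_lt_of_le hg, le_lift_of_le hg]
  exact or_comm

lemma above21_prepend_of_le (hg : g ≤ v) :
    Above21 (prepend v σ) g ↔ Above21 σ g ∨ g < v := by
  simp only [Above21, exists_lt_fin_succ, prepend_zero, prepend_succ_val,
    lift_lt_lift, lift_lt, le_lift_of_le hg]
  rw [or_comm]
  refine or_congr_right ⟨?_, fun hlt => ⟨σ.symm ⟨g, by omega⟩, by simp, by simpa⟩⟩
  rintro ⟨_, _, _⟩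
  omega

lemma above21_prepend_succ (hg : v ≤ g) : Above21 (prepend v σ) (g + 1) ↔ Above21 σ g := by
  simp only [Above21, exists_lt_fin_succ, prepend_zero, prepend_succ_val,
    lift_lt_lift, lift_lt, succ_le_lift hg]
  refine or_iff_right ?_
  rintro ⟨_, _, _⟩
  omega

lemma split12_prepend_of_le_succ (hg : g ≤ v) (hh : v ≤ h) :
    Split12 (prepend v σ) g (h + 1) ↔ Split12 σ g h := by
  simp only [Split12, exists_lt_fin_succ, prepend_zero, prepend_succ_val,
    lift_lt_of_le hg, lift_lt_succ hh, le_lift_of_le hg]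
  refine or_iff_right ?_
  rintro ⟨_, _, _⟩
  omega

lemma split12_prepend_succ_succ (hg : v ≤ g) (hgn : g < n) :
    Split12 (prepend v σ) (g + 1) (g + 1 + 1) := by
  simp only [Split12, exists_lt_fin_succ, prepend_zero, prepend_succ_val]
  exact Or.inl ⟨σ.symm ⟨g, hgn⟩, by omega, by simp [succ_le_lift hg],
    by simp [lift_lt_succ (hg.trans g.le_succ)]⟩

lemma Split312.above21 (hg : Split312 σ g) : Above21 σ g := by
  obtain ⟨i, j, k, hij, hjk, _, h₁, h₂⟩ := hg
  exact ⟨i, k, hij.trans hjk, h₁, h₂⟩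

lemma Above21.mono (hg : Above21 σ g) (hh : h ≤ g) : Above21 σ h := by
  obtain ⟨i, j, hij, h₁, h₂⟩ := hg
  exact ⟨i, j, hij, hh.trans h₁, h₂⟩

lemma Split12.mono {h' : ℕ} (hg : Split12 σ g h) (hh : h ≤ h') : Split12 σ g h' := by
  obtain ⟨i, j, hij, h₁, h₂, h₃⟩ := hg
  exact ⟨i, j, hij, h₁, h₂, h₃.trans_le hh⟩

lemma not_split12_self : ¬ Split12 σ g g := by
  rintro ⟨i, j, _, _, _, _⟩
  omega

lemma Below213.mono (hg : Below213 σ g) (hh : g ≤ h) : Below213 σ h := by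
  obtain ⟨i, j, k, hij, hjk, h₁, h₂, h₃⟩ := hg
  exact ⟨i, j, k, hij, hjk, h₁, h₂, h₃.trans_le hh⟩

end Prepend

/-! ### Minimal griddings -/

section LeftPts

variable {n : ℕ} {σ : Equiv.Perm (Fin n)}

lemma exists_213_iff {Q : Fin n → Prop} :
    (∃ f : Fin 3 → Fin n, StrictMono f ∧ (∀ a, Q (f a)) ∧
      ∀ a b : Fin 3, p213 a < p213 b ↔ σ (f a) < σ (f b)) ↔
    ∃ a b c : Fin n, a < b ∧ b < c ∧ (Q a ∧ Q b ∧ Q c) ∧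
      (σ b : ℕ) < σ a ∧ (σ a : ℕ) < σ c := by
  constructor
  · rintro ⟨f, hf, hQ, h⟩
    exact ⟨f 0, f 1, f 2, hf (by decide), hf (by decide), ⟨hQ 0, hQ 1, hQ 2⟩,
      (h 1 0).1 (by decide), (h 0 2).1 (by decide)⟩
  · rintro ⟨a, b, c, hab, hbc, ⟨ha, hb, hc⟩, h₁, h₂⟩
    refine ⟨![a, b, c], ?_, ?_, ?_⟩
    · rw [Fin.strictMono_iff_lt_succ]
      intro i
      fin_cases i <;> simpa
    · intro i
      fin_cases i <;> simpa
    · simp [Fin.forall_fin_succ, p213]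
      simp only [Fin.lt_def, Fin.le_def]
      omega

lemma GGridding.not_has2413From {j k : ℕ} (h : GGridding σ j k) : ¬ Has2413From σ j := by
  obtain ⟨-, -, -, -, htop, hbot⟩ := h
  rintro ⟨a, b, c, d, hj, hab, hbc, hcd, h₁, h₂, h₃⟩
  rw [exists_213_iff (Q := fun i => j ≤ (i : ℕ) ∧ (σ i : ℕ) + 1 ≤ k)] at hbot
  have hd : (σ d : ℕ) + 1 ≤ k := by
    by_contra hk
    have := htop b d (hbc.trans hcd) (by omega) (by omega) (by omega)
    omega
  exact hbot ⟨a, c, d, hab.trans hbc, hcd, ⟨⟨by omega, by omega⟩, ⟨by omega, by omega⟩,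
    ⟨by omega, by omega⟩⟩, h₁, h₂⟩

lemma exists_gGridding (hσ : AvoidsD σ) {j : ℕ} (hj : ¬ Has2413From σ j)
    (hmin : j = 0 ∨ Has2413From σ (j - 1)) : ∃ k, GGridding σ j k := by
  classical
  obtain ⟨h4213, h2143⟩ := hσ
  rw [PatternAvoids, contains_4213] at h4213
  rw [PatternAvoids, contains_2143] at h2143
  have hex : ∃ x, x = n ∨ ∃ a b c : Fin n, a < b ∧ b < c ∧ j ≤ (a : ℕ) ∧
      (σ b : ℕ) < σ a ∧ (σ a : ℕ) < σ c ∧ (σ c : ℕ) = x := ⟨n, Or.inl rfl⟩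
  let k := Nat.find hex
  have hkn : k ≤ n := Nat.find_min' hex (Or.inl rfl)
  have htop : ∀ x y : Fin n, x < y → j ≤ (x : ℕ) → k ≤ σ x → k ≤ σ y → (σ x : ℕ) < σ y := by
    intro x y hxy hjx hx hy
    by_contra hlt
    have hne : (σ x : ℕ) ≠ σ y := fun he => hxy.ne (σ.injective (Fin.ext he))
    rcases Nat.find_spec hex with hk | ⟨a, b, c, hab, hbc, hja, h₁, h₂, h₃⟩
    · change k = n at hk
      have := (σ x).2
      omega
    · change _ = k at h₃
      rcases lt_trichotomy x a with h | rfl | h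
      · exact h4213 ⟨x, a, b, c, h, hab, hbc, h₁, h₂, by omega⟩
      · omega
      rcases lt_trichotomy x b with h' | rfl | h'
      · exact hj ⟨a, x, b, c, hja, h, h', hbc, h₁, h₂, by omega⟩
      · omega
      · exact h2143 ⟨a, b, x, y, hab, h', hxy, h₁, by omega, by omega⟩
  have hbot : ¬ ∃ a b c : Fin n, a < b ∧ b < c ∧
      ((j ≤ (a : ℕ) ∧ (σ a : ℕ) + 1 ≤ k) ∧ (j ≤ (b : ℕ) ∧ (σ b : ℕ) + 1 ≤ k) ∧
        (j ≤ (c : ℕ) ∧ (σ c : ℕ) + 1 ≤ k)) ∧ (σ b : ℕ) < σ a ∧ (σ a : ℕ) < σ c := by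
    rintro ⟨a, b, c, hab, hbc, ⟨⟨ha, -⟩, -, -, hc⟩, h₁, h₂⟩
    exact Nat.find_min hex hc (Or.inr ⟨a, b, c, hab, hbc, ha, h₁, h₂, rfl⟩)
  refine ⟨k, ?_⟩
  unfold GGridding
  rw [exists_213_iff (Q := fun i => j ≤ (i : ℕ) ∧ (σ i : ℕ) + 1 ≤ k)]
  suffices h : j ≤ n ∧ (∀ i : Fin n, (i : ℕ) < j → (σ i : ℕ) + 1 ≤ k) ∧
      (∀ i₁ i₂ : Fin n, i₁ < i₂ → (i₂ : ℕ) < j → σ i₁ < σ i₂) from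
    ⟨h.1, hkn, h.2.1, h.2.2, fun x y hxy hjx hx hy =>
      htop x y hxy hjx (by omega) (by omega), hbot⟩
  rcases hmin with rfl | ⟨a, b, c, d, hja, hab, hbc, hcd, h₁, h₂, h₃⟩
  · exact ⟨n.zero_le, by simp, by simp⟩
  have haj : (a : ℕ) < j := by
    by_contra h
    exact hj ⟨a, b, c, d, by omega, hab, hbc, hcd, h₁, h₂, h₃⟩
  have hdk : (σ d : ℕ) ≤ k := by
    by_contra h
    have := htop b d (hbc.trans hcd) (by omega) (by omega) (by omega)
    omega
  refine ⟨by omega, fun i hi => ?_, fun x y hxy hy => ?_⟩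
  · by_contra h
    have hia : i ≠ a := by rintro rfl; omega
    have hid : (σ i : ℕ) ≠ σ d := fun he => by
      have := σ.injective (Fin.ext he)
      omega
    exact h4213 ⟨i, a, c, d, by omega, hab.trans hbc, hcd, h₁, h₂, by omega⟩
  · by_contra h
    have hne : (σ x : ℕ) ≠ σ y := fun he => hxy.ne (σ.injective (Fin.ext he))
    have hya : y ≤ a := by rw [Fin.le_def]; omega
    have hxd : (σ x : ℕ) < σ d := by
      have hxa : x ≠ a := (hxy.trans_le hya).ne
      by_contra hx
      have hxd : (σ x : ℕ) ≠ σ d := fun he => by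
        have := σ.injective (Fin.ext he)
        omega
      exact h4213 ⟨x, a, c, d, by omega, hab.trans hbc, hcd, h₁, h₂, by omega⟩
    exact h2143 ⟨x, y, b, d, hxy, hya.trans_lt hab, hbc.trans hcd, by omega, hxd, h₃⟩

lemma leftPts_eq_sInf (hσ : AvoidsD σ) : leftPts σ = sInf {j | ¬ Has2413From σ j} := by
  classical
  have hne : ∃ j, ¬ Has2413From σ j := ⟨n, by rintro ⟨a, _, _, _, h, _⟩; omega⟩
  have hmin : ∃ k, GGridding σ (sInf {j | ¬ Has2413From σ j}) k := by
    refine exists_gGridding hσ (Nat.sInf_mem hne) ?_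
    rcases Nat.eq_zero_or_pos (sInf {j | ¬ Has2413From σ j}) with h | h
    · exact Or.inl h
    · right
      by_contra h'
      have : sInf {j | ¬ Has2413From σ j} ≤ sInf {j | ¬ Has2413From σ j} - 1 := Nat.sInf_le h'
      omega
  refine le_antisymm (Nat.sInf_le hmin) (Nat.sInf_le ?_)
  obtain ⟨k, hk⟩ := Nat.sInf_mem (s := {j | ∃ k, GGridding σ j k}) ⟨_, hmin⟩
  exact hk.not_has2413From

lemma leftPts_eq_zero (hσ : AvoidsD σ) (h : ¬ Has2413From σ 0) : leftPts σ = 0 := by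
  rw [leftPts_eq_sInf hσ]
  exact Nat.sInf_eq_zero.2 (Or.inl h)

lemma leftPts_prepend {v : Fin (n + 1)} (hv : AvoidsD (prepend v σ))
    (h : Has2413From (prepend v σ) 0) : leftPts (prepend v σ) = leftPts σ + 1 := by
  have hσ := (avoidsD_prepend.1 hv).1
  have hne : ∃ j, ¬ Has2413From σ j := ⟨n, by rintro ⟨a, _, _, _, h, _⟩; omega⟩
  have hne' : ∃ j, ¬ Has2413From (prepend v σ) j :=
    ⟨n + 1, by rintro ⟨a, _, _, _, h, _⟩; omega⟩
  rw [leftPts_eq_sInf hv, leftPts_eq_sInf hσ]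
  refine le_antisymm (Nat.sInf_le fun h' => ?_) ?_
  · exact Nat.sInf_mem hne (has2413From_prepend_succ.1 h')
  · have hmem : ¬ Has2413From (prepend v σ) (sInf {j | ¬ Has2413From (prepend v σ) j}) :=
      Nat.sInf_mem hne'
    generalize sInf {j | ¬ Has2413From (prepend v σ) j} = s at hmem ⊢
    cases s with
    | zero => exact absurd h hmem
    | succ s => exact Nat.succ_le_succ (Nat.sInf_le fun h' => hmem (has2413From_prepend_succ.2 h'))

end LeftPts

/-! ### The generating tree -/

section Tree

variable {n : ℕ} {σ : Equiv.Perm (Fin n)}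

/-- The gaps in a list of blocks, each block `(b, I)` consisting of the gaps `I` followed by `b`. -/
def flat : List (ℕ × List ℕ) → List ℕ
  | [] => []
  | (b, I) :: L => I ++ b :: flat L

lemma flat_append (P L : List (ℕ × List ℕ)) : flat (P ++ L) = flat P ++ flat L := by
  induction P with
  | nil => rfl
  | cons a P ih => simp [flat, ih]

lemma mem_flat_of_mem {b : ℕ × List ℕ} {L : List (ℕ × List ℕ)} (hb : b ∈ L) : b.1 ∈ flat L := by
  obtain ⟨P, Q, rfl⟩ := List.append_of_mem hb
  simp [flat_append, flat]

lemma mem_flat_of_mem_snd {b : ℕ × List ℕ} {L : List (ℕ × List ℕ)} (hb : b ∈ L) {g : ℕ}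
    (hg : g ∈ b.2) : g ∈ flat L := by
  obtain ⟨P, Q, rfl⟩ := List.append_of_mem hb
  simp [flat_append, flat, hg]

lemma mem_suffix_of_pairwise_gt {P Q : List ℕ} {v g : ℕ} (h : (P ++ v :: Q).Pairwise (· > ·))
    (hg : g ≤ v) : g ∈ P ++ v :: Q ↔ g ∈ v :: Q := by
  rw [List.mem_append, or_iff_right]
  intro hP
  have := (List.pairwise_append.1 h).2.2 g hP v (by simp)
  omega

lemma le_of_pairwise_gt {Q : List ℕ} {v g : ℕ} (h : (v :: Q).Pairwise (· > ·))
    (hg : g ∈ v :: Q) : g ≤ v := by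
  rcases List.mem_cons.1 hg with rfl | hg
  · exact le_rfl
  · exact (List.rel_of_pairwise_cons h hg).le

/-- A permutation containing 2413 whose admissible new first values are the elements of `G`. -/
structure RepL (σ : Equiv.Perm (Fin n)) (G : List ℕ) : Prop where
  avoids : AvoidsD σ
  has2413 : Has2413From σ 0
  sorted : G.Pairwise (· > ·)
  le : ∀ g ∈ G, g ≤ n
  mem : ∀ g, g ≤ n → (¬ Below213 σ g ∧ ¬ Split132 σ g ↔ g ∈ G)
  above : ∀ g ∈ G, Above21 σ g

/-- A permutation avoiding 2413 whose admissible new first values are `top` and the gaps in the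
blocks `(β, I) :: L`. -/
structure RepH (σ : Equiv.Perm (Fin n)) (path : Bool) (top β : ℕ) (I : List ℕ)
    (L : List (ℕ × List ℕ)) : Prop where
  avoids : AvoidsD σ
  not2413 : ¬ Has2413From σ 0
  top_le : top ≤ n
  below : ∀ g ≤ n, (Below213 σ g ↔ top < g)
  mem : ∀ g ≤ top, (¬ Split132 σ g ↔ g ∈ top :: flat ((β, I) :: L))
  sorted : (top :: flat ((β, I) :: L)).Pairwise (· > ·)
  inner : ∀ g ∈ I, Split12 σ g (g + 1) ∧ ¬ Above21 σ g
  outer : ∀ b ∈ L, ∀ g ∈ b.2, Split312 σ g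
  bound : ∀ b ∈ (β, I) :: L, ¬ Split12 σ b.1 top ∧ ¬ Split312 σ b.1
  top_above : ¬ Above21 σ top
  path_iff : Above21 σ β ↔ path = false
  above : ∀ g < β, Above21 σ g

lemma RepL.prepend {G P Q : List ℕ} {v : Fin (n + 1)} (h : RepL σ G)
    (hG : G = P ++ (v : ℕ) :: Q) : RepL (prepend v σ) ((v : ℕ) :: Q) := by
  subst hG
  have hs : ((v : ℕ) :: Q).Pairwise (· > ·) := (List.pairwise_append.1 h.sorted).2.1
  have hv := (h.mem v (by omega)).2 (by simp)
  have hle : ∀ g ∈ (v : ℕ) :: Q, g ≤ v := fun g => le_of_pairwise_gt hs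
  refine ⟨avoidsD_prepend.2 ⟨h.avoids, hv⟩, has2413From_prepend_zero.2 (Or.inl h.has2413), hs,
    fun g hg => (hle g hg).trans (by omega), fun g hg => ?_, fun g hg => ?_⟩
  · rcases le_or_gt g v with hgv | hgv
    · rw [below213_prepend_of_le hgv, split132_prepend_of_le hgv, h.mem g (by omega),
        mem_suffix_of_pairwise_gt h.sorted hgv]
    · obtain ⟨g, rfl⟩ : ∃ g', g = g' + 1 := ⟨g - 1, by omega⟩
      rw [below213_prepend_succ (by omega), split132_prepend_succ (by omega)]
      refine iff_of_false ?_ fun hg => by have := hle _ hg; omega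
      rintro ⟨h₁, h₂⟩
      rw [not_or] at h₁ h₂
      exact h₂.2 (h.above g ((h.mem g (by omega)).1 ⟨h₁.1, h₂.1⟩))
  · exact (above21_prepend_of_le (hle g hg)).2 (Or.inl (h.above g (by
      rw [mem_suffix_of_pairwise_gt h.sorted (hle g hg)]; exact hg)))

lemma RepH.allowed {path : Bool} {top β : ℕ} {I : List ℕ} {L : List (ℕ × List ℕ)}
    (h : RepH σ path top β I L) {g : ℕ} (hg : g ≤ n) :
    ¬ Below213 σ g ∧ ¬ Split132 σ g ↔ g ∈ top :: flat ((β, I) :: L) := by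
  rw [h.below g hg, not_lt]
  constructor
  · rintro ⟨h₁, h₂⟩
    exact (h.mem g h₁).1 h₂
  · intro h'
    have := le_of_pairwise_gt h.sorted h'
    exact ⟨this, (h.mem g this).2 h'⟩

lemma RepH.prepend_inner {path : Bool} {top β : ℕ} {I : List ℕ} {L : List (ℕ × List ℕ)}
    (h : RepH σ path top β I L) {P Q : List ℕ} {v : Fin (n + 1)}
    (hI : top :: I = P ++ (v : ℕ) :: Q) :
    RepH (prepend v σ) true (v + 1) v [] ((β, Q) :: L) := by
  have hgaps : top :: flat ((β, I) :: L) = P ++ (v : ℕ) :: flat ((β, Q) :: L) := by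
    simp only [flat, ← List.cons_append, hI, ← List.append_assoc]
  have hsorted := h.sorted
  rw [hgaps] at hsorted
  have hs : ((v : ℕ) :: flat ((β, Q) :: L)).Pairwise (· > ·) :=
    (List.pairwise_append.1 hsorted).2.1
  have hlt : ∀ g ∈ flat ((β, Q) :: L), g < v := fun g hg => List.rel_of_pairwise_cons hs hg
  have hvtop : (v : ℕ) ≤ top := le_of_pairwise_gt h.sorted (by rw [hgaps]; simp)
  have hv : (v : ℕ) ∈ top :: I := by rw [hI]; simp
  have hv21 : ¬ Above21 σ v := by
    rcases List.mem_cons.1 hv with hv | hv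
    · rw [hv]; exact h.top_above
    · exact (h.inner _ hv).2
  have hv312 : ¬ Split312 σ v := fun h' => hv21 h'.above21
  have hallow := (h.allowed (g := v) (by omega)).2 (by rw [hgaps]; simp)
  have hsub : ∀ b ∈ (β, Q) :: L, ¬ Split12 σ b.1 top ∧ ¬ Split312 σ b.1 := by
    intro b hb
    rcases List.mem_cons.1 hb with rfl | hb
    · exact h.bound (β, I) (by simp)
    · exact h.bound b (by simp [hb])
  refine ⟨avoidsD_prepend.2 ⟨h.avoids, hallow⟩, ?_, by omega, ?_, ?_, ?_, by simp, ?_, ?_,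
    ?_, ?_, ?_⟩
  · rw [has2413From_prepend_zero, not_or]
    exact ⟨h.not2413, hv312⟩
  · intro g hg
    rcases le_or_gt g v with hgv | hgv
    · rw [below213_prepend_of_le hgv, h.below g (by omega)]
      omega
    · obtain ⟨g, rfl⟩ : ∃ g', g = g' + 1 := ⟨g - 1, by omega⟩
      rw [below213_prepend_succ (by omega), h.below g (by omega)]
      rcases eq_or_lt_of_le (Nat.lt_succ_iff.1 hgv) with hgv | hgv
      · rw [hgv]
        exact iff_of_false (by rw [not_or]; exact ⟨by omega, not_split12_self⟩) (by omega)
      · refine iff_of_true ?_ (by omega)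
        rcases List.mem_cons.1 hv with hv | hv
        · exact Or.inl (by omega)
        · exact Or.inr ((h.inner _ hv).1.mono (by omega))
  · intro g hg
    rcases le_or_gt g v with hgv | hgv
    · rw [split132_prepend_of_le hgv, h.mem g (by omega), hgaps,
        mem_suffix_of_pairwise_gt hsorted hgv]
      conv_rhs => rw [flat, List.nil_append, List.mem_cons]
      rw [or_iff_right (by omega)]
    · obtain rfl : g = v + 1 := by omega
      rw [split132_prepend_succ le_rfl]
      exact iff_of_true (by rw [not_or]; exact ⟨hallow.2, hv21⟩) (by simp)
  · refine List.pairwise_cons.2 ⟨fun g hg => ?_, hs⟩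
    have := le_of_pairwise_gt hs hg
    omega
  · intro b hb g hg
    have hgv : g < v := hlt g (mem_flat_of_mem_snd hb hg)
    rw [split312_prepend_of_le hgv.le]
    rcases List.mem_cons.1 hb with rfl | hb
    · refine Or.inr ((h.inner g ?_).1.mono hgv)
      cases P with
      | nil =>
        simp only [List.nil_append, List.cons.injEq] at hI
        rw [hI.2]; exact hg
      | cons p P =>
        simp only [List.cons_append, List.cons.injEq] at hI
        rw [hI.2]
        simp only [List.mem_append, List.mem_cons]
        exact Or.inr (Or.inr hg)
    · exact Or.inl (h.outer b hb g hg)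
  · intro b hb
    rcases List.mem_cons.1 hb with rfl | hb
    · rw [split12_prepend_of_le_succ le_rfl le_rfl, split312_prepend_of_le le_rfl, not_or]
      exact ⟨not_split12_self, hv312, not_split12_self⟩
    · have hgv : b.1 < v := hlt _ (mem_flat_of_mem hb)
      rw [split12_prepend_of_le_succ hgv.le le_rfl, split312_prepend_of_le hgv.le, not_or]
      have := hsub b hb
      exact ⟨fun h' => this.1 (h'.mono hvtop), this.2, fun h' => this.1 (h'.mono hvtop)⟩
  · rwa [above21_prepend_succ le_rfl]
  · rw [above21_prepend_of_le le_rfl]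
    exact iff_of_false (by simpa) (by simp)
  · intro g hg
    exact (above21_prepend_of_le hg.le).2 (Or.inr hg)

lemma RepH.prepend_bound {path path' : Bool} {top β : ℕ} {I J : List ℕ}
    {L P L' : List (ℕ × List ℕ)} (h : RepH σ path top β I L) {v : Fin (n + 1)}
    (hL : (β, I) :: L = P ++ ((v : ℕ), J) :: L') (hpath : Above21 σ v ↔ path' = false) :
    RepH (prepend v σ) path' (top + 1) v (I.map Nat.succ ++ if path then [β + 1] else []) L' := by
  have hgaps : top :: flat ((β, I) :: L) = (top :: flat P ++ J) ++ (v : ℕ) :: flat L' := by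
    rw [hL, flat_append, flat]
    simp
  have hsorted := h.sorted
  rw [hgaps] at hsorted
  have hs : ((v : ℕ) :: flat L').Pairwise (· > ·) := (List.pairwise_append.1 hsorted).2.1
  have hlt : ∀ g ∈ flat L', g < v := fun g hg => List.rel_of_pairwise_cons hs hg
  have hvbound : ((v : ℕ), J) ∈ (β, I) :: L := by rw [hL]; simp
  have hvflat : (v : ℕ) ∈ flat ((β, I) :: L) := mem_flat_of_mem hvbound
  have hsI : (I ++ β :: flat L).Pairwise (· > ·) := (List.pairwise_cons.1 h.sorted).2
  have hltop : ∀ g ∈ flat ((β, I) :: L), g < top := fun g hg =>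
    List.rel_of_pairwise_cons h.sorted hg
  have hvtop : (v : ℕ) < top := hltop _ hvflat
  have hβtop : β < top := hltop _ (by simp [flat])
  have hIβ : ∀ g ∈ I, β < g := fun g hg => (List.pairwise_append.1 hsI).2.2 g hg β (by simp)
  have hvβ : (v : ℕ) ≤ β := by
    cases P with
    | nil =>
      simp only [List.nil_append, List.cons.injEq, Prod.mk.injEq] at hL
      exact hL.1.1.ge
    | cons p P =>
      simp only [List.cons_append, List.cons.injEq] at hL
      have hv : (v : ℕ) ∈ flat L := by rw [hL.2, flat_append]; simp [flat]
      exact (List.rel_of_pairwise_cons (List.pairwise_append.1 hsI).2.1 hv).le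
  have hv12 := h.bound _ hvbound
  have hallow := (h.allowed (g := v) (by omega)).2 (by rw [hgaps]; simp)
  have hsub : ∀ b ∈ L', ¬ Split12 σ b.1 top ∧ ¬ Split312 σ b.1 := fun b hb =>
    h.bound b (by rw [hL]; simp [hb])
  have hnew : ∀ g, g ∈ I.map Nat.succ ++ (if path then [β + 1] else []) ↔
      ∃ g', g = g' + 1 ∧ (g' ∈ I ∨ path = true ∧ g' = β) := by
    intro g
    cases path
    · simp [eq_comm, and_comm]
    · simp only [List.mem_append, List.mem_map, if_true, List.mem_singleton, true_and]
      constructor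
      · rintro (⟨g', hg', rfl⟩ | rfl)
        · exact ⟨g', rfl, Or.inl hg'⟩
        · exact ⟨β, rfl, Or.inr rfl⟩
      · rintro ⟨g', rfl, hg' | rfl⟩
        · exact Or.inl ⟨g', hg', rfl⟩
        · exact Or.inr rfl
  have hnew21 : ∀ g, g ≤ top → (¬ Split132 σ g ∧ ¬ Above21 σ g ↔
      g = top ∨ g ∈ I ∨ path = true ∧ g = β) := by
    intro g hg
    rw [h.mem g hg]
    constructor
    · rintro ⟨h₁, h₂⟩
      simp only [flat, List.mem_cons, List.mem_append] at h₁
      rcases h₁ with rfl | h₁ | rfl | h₁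
      · exact Or.inl rfl
      · exact Or.inr (Or.inl h₁)
      · rw [h.path_iff] at h₂
        exact Or.inr (Or.inr ⟨by simpa using h₂, rfl⟩)
      · exact absurd (h.above g (List.rel_of_pairwise_cons (List.pairwise_append.1 hsI).2.1 h₁)) h₂
    · rintro (rfl | h₁ | ⟨h₁, rfl⟩)
      · exact ⟨by simp, h.top_above⟩
      · exact ⟨by simp [flat, h₁], (h.inner g h₁).2⟩
      · exact ⟨by simp [flat], by rw [h.path_iff]; simp [h₁]⟩
  refine ⟨avoidsD_prepend.2 ⟨h.avoids, hallow⟩, ?_, by have := h.top_le; omega, ?_, ?_, ?_, ?_, ?_,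
    ?_, ?_, ?_, ?_⟩
  · rw [has2413From_prepend_zero, not_or]
    exact ⟨h.not2413, hv12.2⟩
  · intro g hg
    rcases le_or_gt g v with hgv | hgv
    · rw [below213_prepend_of_le hgv, h.below g (by omega)]
      omega
    · obtain ⟨g, rfl⟩ : ∃ g', g = g' + 1 := ⟨g - 1, by omega⟩
      rw [below213_prepend_succ (by omega), h.below g (by omega), Nat.succ_lt_succ_iff]
      refine or_iff_left_of_imp fun h' => ?_
      by_contra hle
      exact hv12.1 (h'.mono (by omega))
  · intro g hg
    rw [flat, List.mem_cons, List.mem_append, hnew, List.mem_cons]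
    rcases le_or_gt g v with hgv | hgv
    · rw [split132_prepend_of_le hgv, h.mem g (by omega), hgaps,
        mem_suffix_of_pairwise_gt hsorted hgv, List.mem_cons]
      constructor
      · exact fun h' => Or.inr (Or.inr h')
      · rintro (h' | ⟨g', rfl, h' | ⟨-, rfl⟩⟩ | h')
        · omega
        · have := hIβ g' h'
          omega
        · omega
        · exact h'
    · obtain ⟨g, rfl⟩ : ∃ g', g = g' + 1 := ⟨g - 1, by omega⟩
      rw [split132_prepend_succ (by omega), not_or, hnew21 g (by omega)]
      have h₁ : g + 1 ∉ flat L' := fun h' => by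
        have := hlt _ h'
        omega
      have h₂ : g + 1 ≠ v := by omega
      simp [h₁, h₂]
  · have hv' : ∀ g ∈ I.map Nat.succ ++ (if path then [β + 1] else []),
        (v : ℕ) < g ∧ g < top + 1 := by
      intro g hg
      rw [hnew] at hg
      obtain ⟨g', rfl, hg' | ⟨-, rfl⟩⟩ := hg
      · have := hIβ g' hg'
        have := hltop g' (by simp [flat, hg'])
        omega
      · omega
    rw [flat, List.pairwise_cons]
    refine ⟨fun g hg => ?_, ?_⟩
    · rcases List.mem_append.1 hg with hg | hg
      · exact (hv' g hg).2
      · have := le_of_pairwise_gt hs hg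
        omega
    · refine List.pairwise_append.2 ⟨?_, hs, fun g hg g' hg' => ?_⟩
      · refine List.pairwise_append.2 ⟨?_, ?_, ?_⟩
        · rw [List.pairwise_map]
          exact (List.pairwise_append.1 hsI).1.imp fun h' => Nat.succ_lt_succ h'
        · cases path <;> simp
        · intro g hg g' hg'
          obtain ⟨x, hx, rfl⟩ := List.mem_map.1 hg
          have := hIβ x hx
          cases path
          · simp at hg'
          · simp at hg'
            omega
      · have := le_of_pairwise_gt hs hg'
        have := hv' g hg
        omega
  · intro g hg
    rw [hnew] at hg
    obtain ⟨g, rfl, hg⟩ := hg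
    have hgv : (v : ℕ) ≤ g ∧ g < top := by
      rcases hg with hg | ⟨-, rfl⟩
      · have := hIβ g hg
        have := hltop g (by simp [flat, hg])
        omega
      · omega
    have htop := h.top_le
    refine ⟨split12_prepend_succ_succ hgv.1 (by omega), ?_⟩
    rw [above21_prepend_succ hgv.1]
    exact ((hnew21 g hgv.2.le).2 (Or.inr hg)).2
  · intro b hb g hg
    have hgv : g < v := hlt g (mem_flat_of_mem_snd hb hg)
    rw [split312_prepend_of_le hgv.le]
    refine Or.inl (h.outer b ?_ g hg)
    cases P with
    | nil =>
      simp only [List.nil_append, List.cons.injEq] at hL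
      rw [hL.2]
      exact hb
    | cons p P =>
      simp only [List.cons_append, List.cons.injEq] at hL
      rw [hL.2]
      simp [hb]
  · intro b hb
    have hgv : b.1 ≤ v ∧ ¬ Split12 σ b.1 top ∧ ¬ Split312 σ b.1 := by
      rcases List.mem_cons.1 hb with rfl | hb
      · exact ⟨le_rfl, hv12⟩
      · exact ⟨(hlt _ (mem_flat_of_mem hb)).le, hsub b hb⟩
    rw [split12_prepend_of_le_succ hgv.1 hvtop.le, split312_prepend_of_le hgv.1, not_or]
    exact ⟨hgv.2.1, hgv.2.2, fun h' => hgv.2.1 (h'.mono hvtop.le)⟩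
  · rw [above21_prepend_succ hvtop.le]
    exact h.top_above
  · rw [above21_prepend_of_le le_rfl, or_iff_left (lt_irrefl _), hpath]
  · intro g hg
    exact (above21_prepend_of_le hg.le).2 (Or.inr hg)

lemma Split312.above21_or_split12 {v g : ℕ} (h : Split312 σ v) :
    Above21 σ g ∨ Split12 σ v g := by
  obtain ⟨i, j, k, hij, hjk, h₁, h₂, h₃⟩ := h
  rcases le_or_gt g (σ k) with hg | hg
  · exact Or.inl ⟨i, k, hij.trans hjk, hg, h₃⟩
  · exact Or.inr ⟨j, k, hjk, h₁, h₂, hg⟩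

lemma RepH.prepend_outer {path : Bool} {top β b : ℕ} {I P' Q : List ℕ}
    {L P L' : List (ℕ × List ℕ)} (h : RepH σ path top β I L) {v : Fin (n + 1)}
    (hL : L = P ++ (b, P' ++ (v : ℕ) :: Q) :: L') :
    RepL (prepend v σ) ((v : ℕ) :: flat ((b, Q) :: L')) := by
  have hgaps : top :: flat ((β, I) :: L) =
      (top :: (I ++ β :: flat P ++ P')) ++ (v : ℕ) :: flat ((b, Q) :: L') := by
    rw [hL]
    simp [flat, flat_append]
  have hsorted := h.sorted
  rw [hgaps] at hsorted
  have hs : ((v : ℕ) :: flat ((b, Q) :: L')).Pairwise (· > ·) :=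
    (List.pairwise_append.1 hsorted).2.1
  have hle : ∀ g ∈ (v : ℕ) :: flat ((b, Q) :: L'), g ≤ v := fun g => le_of_pairwise_gt hs
  have hvtop : (v : ℕ) ≤ top := le_of_pairwise_gt h.sorted (by rw [hgaps]; simp)
  have hv312 : Split312 σ v := h.outer (b, P' ++ (v : ℕ) :: Q) (by rw [hL]; simp) v (by simp)
  have hallow := (h.allowed (g := v) (by omega)).2 (by rw [hgaps]; simp)
  refine ⟨avoidsD_prepend.2 ⟨h.avoids, hallow⟩, has2413From_prepend_zero.2 (Or.inr hv312), hs,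
    fun g hg => (hle g hg).trans (by omega), fun g hg => ?_, fun g hg => ?_⟩
  · rcases le_or_gt g v with hgv | hgv
    · rw [below213_prepend_of_le hgv, split132_prepend_of_le hgv, h.allowed (by omega), hgaps,
        mem_suffix_of_pairwise_gt hsorted hgv]
    · obtain ⟨g, rfl⟩ : ∃ g', g = g' + 1 := ⟨g - 1, by omega⟩
      rw [below213_prepend_succ (by omega), split132_prepend_succ (by omega)]
      refine iff_of_false ?_ fun hg => by have := hle _ hg; omega
      rintro ⟨h₁, h₂⟩
      rw [not_or] at h₁ h₂
      exact hv312.above21_or_split12.elim h₂.2 h₁.2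
  · rw [above21_prepend_of_le (hle g hg)]
    rcases List.mem_cons.1 hg with rfl | hg
    · exact Or.inl hv312.above21
    · exact Or.inr (List.rel_of_pairwise_cons hs hg)

end Tree

/-! ### Weighted counts along the generating tree -/

section Weights

variable {R : Type*} [CommRing R] (w : R)

open scoped Classical in
/-- The sum of `w ^ leftPts τ` over the `τ` avoiding 4213 and 2143 that arise from `σ` by adding
`m` entries on the left. -/
noncomputable def extWeight : ℕ → ∀ {n : ℕ}, Equiv.Perm (Fin n) → R
  | 0, _, σ => if AvoidsD σ then w ^ leftPts σ else 0
  | m + 1, _, σ => ∑ v, extWeight m (prepend v σ)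

lemma sum_extWeight (m n : ℕ) : ∑ σ : Equiv.Perm (Fin n), extWeight w m σ =
    ∑ τ : Equiv.Perm (Fin (n + m)), extWeight w 0 τ := by
  induction m generalizing n with
  | zero => rfl
  | succ m ih =>
    simp only [extWeight.eq_2]
    rw [← sum_perm_succ (fun τ => extWeight w m τ), ih, Nat.succ_add_eq_add_succ]

lemma extWeight_eq_zero {n : ℕ} {σ : Equiv.Perm (Fin n)} (h : ¬ AvoidsD σ) (m : ℕ) :
    extWeight w m σ = 0 := by
  induction m generalizing n with
  | zero => simp [extWeight, h]
  | succ m ih =>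
    rw [extWeight]
    exact Finset.sum_eq_zero fun v _ => ih fun h' => h (avoidsD_prepend.1 h').1

lemma extWeight_succ_eq_sum {n : ℕ} {σ : Equiv.Perm (Fin n)} {G : List ℕ}
    (hG : G.Nodup) (hle : ∀ g ∈ G, g ≤ n)
    (hmem : ∀ g ≤ n, (¬ Below213 σ g ∧ ¬ Split132 σ g ↔ g ∈ G)) (m : ℕ) :
    extWeight w (m + 1) σ =
      (G.map fun g => extWeight w m (prepend (Fin.ofNat (n + 1) g) σ)).sum := by
  rw [extWeight, ← List.sum_toFinset _ hG]
  have h : ∀ v : Fin (n + 1), extWeight w m (prepend v σ) =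
      extWeight w m (prepend (Fin.ofNat (n + 1) v) σ) := fun v => by
    congr 2
    ext
    simp
  rw [Finset.sum_congr rfl fun v _ => h v, Fin.sum_univ_eq_sum_range
    (fun g => extWeight w m (prepend (Fin.ofNat (n + 1) g) σ)) (n + 1)]
  symm
  refine Finset.sum_subset (fun g hg => ?_) fun g hg hgG => ?_
  · rw [Finset.mem_range, Nat.lt_succ_iff]
    exact hle g (List.mem_toFinset.1 hg)
  · rw [Finset.mem_range] at hg
    refine extWeight_eq_zero w (fun h' => hgG ?_) m
    have h' := (avoidsD_prepend.1 h').2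
    rw [Fin.val_ofNat, Nat.mod_eq_of_lt hg] at h'
    exact List.mem_toFinset.2 ((hmem g (by omega)).1 h')

lemma sum_map_eq_sum_range {G : List ℕ} {F : ℕ → R} {H : ℕ → R}
    (h : ∀ P v Q, G = P ++ v :: Q → F v = H Q.length) :
    (G.map F).sum = ∑ i ∈ Finset.range G.length, H i := by
  induction G with
  | nil => simp
  | cons a G ih =>
    rw [List.map_cons, List.sum_cons, List.length_cons, Finset.sum_range_succ, add_comm,
      h [] a G rfl, ih fun P v Q hG => h (a :: P) v Q (by simp [hG])]

/-- The number of ways of adding `m` further left entries when there are `r` admissible values. -/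
def weightL : ℕ → ℕ → R
  | 0, _ => 1
  | m + 1, r => w * ∑ i ∈ Finset.range r, weightL m (i + 1)

/-- The number of gaps in a list of blocks of the given numbers of inner gaps. -/
def blockSize : List ℕ → ℕ
  | [] => 0
  | c :: L => c + 1 + blockSize L

/-- A sum over the gaps of a list of blocks. -/
def blockSum (f : List ℕ → R) (k : ℕ → R) : List ℕ → R
  | [] => 0
  | c :: L => ∑ i ∈ Finset.range c, k (i + 1 + blockSize L) + f L + blockSum f k L

/-- The weighted number of ways of adding `m` further entries to a permutation avoiding 2413. -/
def weightH : ℕ → Bool → ℕ → List ℕ → R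
  | 0, _, _, _ => 1
  | m + 1, path, e, L => ∑ i ∈ Finset.range (e + 1), weightH m true 0 (i :: L)
      + weightH m path (e + path.toNat) L
      + blockSum (weightH m false (e + path.toNat)) (fun r => w * weightL w m (r + 1)) L

lemma RepL.extWeight {n : ℕ} {σ : Equiv.Perm (Fin n)} {G : List ℕ} (h : RepL σ G) (m : ℕ) :
    extWeight w m σ = w ^ leftPts σ * weightL w m G.length := by
  induction m generalizing n G with
  | zero => simp [_root_.extWeight, h.avoids, weightL]
  | succ m ih =>
    rw [extWeight_succ_eq_sum w (h.sorted.imp fun h' => (ne_of_gt h')) h.le h.mem,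
      sum_map_eq_sum_range (H := fun i => w ^ (leftPts σ + 1) * weightL w m (i + 1)),
      ← Finset.mul_sum, weightL, pow_succ, mul_assoc]
    intro P v Q hG
    have hv : ((Fin.ofNat (n + 1) v : Fin (n + 1)) : ℕ) = v := by
      have := h.le v (by simp [hG])
      rw [Fin.val_ofNat, Nat.mod_eq_of_lt (by omega)]
    rw [← hv] at hG
    have h' := h.prepend hG
    rw [ih h', leftPts_prepend h'.avoids h'.has2413, List.length_cons]

lemma length_flat (L : List (ℕ × List ℕ)) :
    (flat L).length = blockSize (L.map fun b => b.2.length) := by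
  induction L with
  | nil => rfl
  | cons b L ih =>
    simp only [flat, List.length_append, List.length_cons, ih, List.map_cons, blockSize]
    omega

lemma RepH.extWeight {n : ℕ} {σ : Equiv.Perm (Fin n)} {path : Bool} {top β : ℕ} {I : List ℕ}
    {L : List (ℕ × List ℕ)} (h : RepH σ path top β I L) (m : ℕ) :
    extWeight w m σ = weightH w m path I.length (L.map fun b => b.2.length) := by
  induction m generalizing n path top β I L with
  | zero => simp [_root_.extWeight, h.avoids, weightH, leftPts_eq_zero h.avoids h.not2413]
  | succ m ih =>
    have hle : ∀ g ∈ top :: flat ((β, I) :: L), g ≤ n := fun g hg =>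
      (le_of_pairwise_gt h.sorted hg).trans h.top_le
    have hv : ∀ v ∈ top :: flat ((β, I) :: L),
        ((Fin.ofNat (n + 1) v : Fin (n + 1)) : ℕ) = v := by
      intro v hv
      have := hle v hv
      rw [Fin.val_ofNat, Nat.mod_eq_of_lt (by omega)]
    rw [extWeight_succ_eq_sum w (h.sorted.imp fun h' => (ne_of_gt h')) hle
      fun g hg => h.allowed hg]
    set F : ℕ → R := fun g => _root_.extWeight w m (_root_.prepend (Fin.ofNat (n + 1) g) σ) with hF
    have hlen : (I.map Nat.succ ++ if path then [β + 1] else []).length =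
        I.length + path.toNat := by
      cases path <;> simp
    have hinner : ((top :: I).map F).sum = ∑ i ∈ Finset.range (I.length + 1),
        weightH w m true 0 (i :: L.map fun b => b.2.length) := by
      rw [sum_map_eq_sum_range
        (H := fun i => weightH w m true 0 (i :: L.map fun b => b.2.length)), List.length_cons]
      intro P v Q hG
      have hv' := hv v (by
        rw [flat, ← List.cons_append, hG]
        simp)
      rw [← hv'] at hG
      rw [hF]
      exact ih (h.prepend_inner hG)
    have hbound : F β = weightH w m path (I.length + path.toNat) (L.map fun b => b.2.length) := by
      have hv' := hv β (by simp [flat])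
      have := ih (h.prepend_bound (P := []) (L' := L) (v := Fin.ofNat (n + 1) β) (J := I)
        (by rw [hv']; rfl) (by rw [hv']; exact h.path_iff))
      rw [hlen] at this
      exact this
    have houter : ∀ P L', L = P ++ L' → ((flat L').map F).sum =
        blockSum (weightH w m false (I.length + path.toNat)) (fun r => w * weightL w m (r + 1))
          (L'.map fun b => b.2.length) := by
      intro P L' hL
      induction L' generalizing P with
      | nil => simp [flat, blockSum]
      | cons b L' ihL =>
        obtain ⟨b, J⟩ := b
        have hsub : ∀ v ∈ flat ((b, J) :: L'), v ∈ flat L := fun v hv => by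
          rw [hL, flat_append]
          exact List.mem_append_right _ hv
        rw [flat, List.map_append, List.sum_append, List.map_cons, List.sum_cons, ← add_assoc,
          ihL (P ++ [(b, J)]) (by simp [hL]), List.map_cons, blockSum]
        congr 2
        · refine sum_map_eq_sum_range (H := fun i => w * weightL w m
            (i + 1 + blockSize (L'.map fun b => b.2.length) + 1)) ?_
          intro P' v Q hJ
          have hv' := hv v (by
            have := hsub v (by simp [flat, hJ])
            simp [flat, this])
          rw [← hv'] at hJ
          rw [hJ] at hL
          have h' := h.prepend_outer hL
          rw [hF]
          simp only
          rw [h'.extWeight, leftPts_prepend h'.avoids h'.has2413,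
            leftPts_eq_zero h.avoids h.not2413, List.length_cons, length_flat, zero_add, pow_one]
          simp only [List.map_cons, blockSize]
        · have hb : b ∈ flat L := hsub b (by simp [flat])
          have hv' := hv b (by simp [flat, hb])
          have hbβ : b < β := by
            have := (List.pairwise_append.1 (List.pairwise_cons.1 h.sorted).2).2.1
            exact List.rel_of_pairwise_cons this hb
          have := ih (h.prepend_bound (P := (β, I) :: P) (L' := L') (v := Fin.ofNat (n + 1) b)
            (J := J) (path' := false) (by rw [hv', hL]; rfl)
            (by rw [hv']; exact iff_of_true (h.above b hbβ) rfl))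
          rw [hlen] at this
          exact this
    rw [flat, ← List.cons_append, List.map_append, List.sum_append, hinner, List.map_cons,
      List.sum_cons, hbound, houter [] L rfl, weightH, add_assoc]

lemma repH_one (σ : Equiv.Perm (Fin 1)) : RepH σ true 1 0 [] [] := by
  have h1 : ∀ i j : Fin 1, ¬ i < j := fun i j h => by omega
  refine ⟨⟨?_, ?_⟩, ?_, le_rfl, ?_, ?_, ?_, ?_, ?_, ?_, ?_, ?_, ?_⟩
  · rw [PatternAvoids, contains_4213]
    rintro ⟨a, b, _, _, h, _⟩
    exact h1 a b h
  · rw [PatternAvoids, contains_2143]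
    rintro ⟨a, b, _, _, h, _⟩
    exact h1 a b h
  · rintro ⟨a, b, _, _, _, h, _⟩
    exact h1 a b h
  · intro g hg
    refine iff_of_false ?_ (by omega)
    rintro ⟨a, b, _, h, _⟩
    exact h1 a b h
  · intro g hg
    refine iff_of_true ?_ (by simp [flat]; omega)
    rintro ⟨a, b, _, h, _⟩
    exact h1 a b h
  · simp [flat]
  · simp
  · simp
  · simp only [List.mem_singleton, forall_eq]
    constructor
    · rintro ⟨a, b, h, _⟩
      exact h1 a b h
    · rintro ⟨a, b, _, h, _⟩
      exact h1 a b h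
  · rintro ⟨a, b, h, _⟩
    exact h1 a b h
  · refine iff_of_false ?_ (by simp)
    rintro ⟨a, b, h, _⟩
    exact h1 a b h
  · intro g hg
    omega

open scoped Classical in
theorem sum_pow_leftPts (n : ℕ) :
    (∑ σ : Equiv.Perm (Fin (n + 1)), if AvoidsD σ then w ^ leftPts σ else 0) =
      weightH w n true 0 [] := by
  have h := sum_extWeight w n 1
  rw [Fintype.sum_unique, (repH_one _).extWeight, add_comm 1 n] at h
  exact h.symm

end Weights

/-! ### Algebraic identities -/

section Identities

variable {A : Type*} [CommRing A] {z u p q h y r G : A}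

set_option maxHeartbeats 1000000 in
lemma identity_top (hp : p * (1 - z) = 1) (hq : q = 1 + z * p * q ^ 2)
    (hh : h * (1 - z * q) = 1) (hy : y * (1 - u) = 1) (hr : r * (1 - z * y) = 1) :
    (h - p - z * p ^ 2 * h * q - z * (h * q) * r * y * p + z * p ^ 2 * h * q * y
        + (1 - z * p ^ 2 * q) * (h * (q - 1)))
      * ((1 - u - z * p * q) * (1 - u - z) - u * (z * p) * z * q * h)
      + (z * y - z * r * y * p + (1 - z * p ^ 2 * q) * (1 - z * y))
        * (u * (z * p) * z * q ^ 2 * h ^ 2) = 0 := by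
  grind

set_option maxHeartbeats 1000000 in
lemma identity_const (hp : p * (1 - z) = 1) (hq : q = 1 + z * p * q ^ 2)
    (hh : h * (1 - z * q) = 1) (hy : y * (1 - u) = 1) (hr : r * (1 - z * y) = 1) :
    (z ^ 2 * (h * q) * (r * y ^ 2 + r * y * p) - z ^ 2 * p * (1 + p) * h * q * y
        - z * (h * q) * r * y * p + z * p ^ 2 * h * q * y
        + y * (z * p + z ^ 2 * p * (1 + p) * h * q + h - p - z * p ^ 2 * h * q))
      * ((1 - u - z * p * q) * (1 - u - z) - u * (z * p) * z * q * h)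
      + (z ^ 2 * (r * y ^ 2 + r * y * p) + z * y - z * r * y * p)
        * (u * (z * p) * z * q ^ 2 * h ^ 2) = 0 := by
  grind
end Identities

/-! ### Solving the recurrence -/

section Solution

variable {A : Type*} [CommRing A]

/-- A weighted sum over the proper tails of a list. -/
def tailSum (p : A) (f : List ℕ → A) : List ℕ → A
  | [] => 0
  | _ :: L => p * (f L + tailSum p f L)

lemma tailSum_combination (p a b c : A) (f g k : List ℕ → A) (L : List ℕ) :
    tailSum p (fun L => a * f L + b * g L + c * k L) L =
      a * tailSum p f L + b * tailSum p g L + c * tailSum p k L := by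
  induction L with
  | nil => simp [tailSum]
  | cons _ L ih =>
    simp only [tailSum, ih]
    ring

/-- Parameters solving the recurrence, in terms of the variable `z` and `u = z * w`. -/
structure Params (z u p q h y r V : A) : Prop where
  hp : p * (1 - z) = 1
  hq : q = 1 + z * p * q ^ 2
  hh : h * (1 - z * q) = 1
  hy : y * (1 - u) = 1
  hr : r * (1 - z * y) = 1
  hV : ((1 - u - z * p * q) * (1 - u - z) - u * (z * p) * z * q * h) * V = 1

/-- The contribution of the gaps that create a 2413. -/
def solJ (y : A) : List ℕ → A
  | [] => 1
  | c :: L => solJ y L + (y ^ (c + 1) - y) * y ^ blockSize L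

/-- The exponential part of the solution. -/
def solT (z q h y G : A) : List ℕ → A
  | [] => h * (q - 1) + G * (1 - z * y)
  | c :: L => h * (q - 1) * solJ y (c :: L) + G * (1 - z * y) * y ^ blockSize (c :: L)
      + q * solT z q h y G L

/-- The part of the solution at `c :: L` not depending on `c`. -/
def solA (z q h y G : A) (L : List ℕ) : A :=
  h * q * solJ y L - h * q * y * y ^ blockSize L + q * solT z q h y G L

/-- A geometric sum. -/
def geom (y : A) (e : ℕ) : A := ∑ i ∈ Finset.range (e + 1), y ^ (i + 1)

lemma geom_zero (y : A) : geom y 0 = y := by simp [geom]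

lemma geom_succ (y : A) (e : ℕ) : geom y (e + 1) = y + y * geom y e := by
  rw [geom, Finset.sum_range_succ', geom, Finset.mul_sum, add_comm]
  simp [pow_succ']

/-- The inhomogeneous term of the recurrence. -/
def solF (z q h y G : A) (e : ℕ) (L : List ℕ) : A :=
  1 * solJ y L + z * (e + 1) * solA z q h y G L + z * geom y e * (h * q + G) * y ^ blockSize L

/-- The solution of the recurrence off the path. -/
def solN (z p q h y G : A) (e : ℕ) (L : List ℕ) : A :=
  p * (solF z q h y G e L + z * tailSum p (solF z q h y G e) L)

/-- The solution of the recurrence on the path. -/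
def solP (z p q h y r G : A) (e : ℕ) (L : List ℕ) : A :=
  p * solJ y L + z * (p * (e + 1) + z * p ^ 2) * solA z q h y G L
    + z * (h * q + G) * (r * geom y e + z * y * r * p) * y ^ blockSize L
    + z * (p * tailSum p (solJ y) L
      + z * (p * (e + 2) + z * p ^ 2) * tailSum p (solA z q h y G) L
      + z * (h * q + G) * (r * geom y (e + 1) + z * y * r * p)
        * tailSum p (fun L => y ^ blockSize L) L)

lemma tailSum_solF (z p q h y G : A) (e : ℕ) (L : List ℕ) :
    tailSum p (solF z q h y G e) L = tailSum p (solJ y) L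
      + z * (e + 1) * tailSum p (solA z q h y G) L
      + z * geom y e * (h * q + G) * tailSum p (fun L => y ^ blockSize L) L := by
  have := tailSum_combination p 1 (z * (e + 1)) (z * geom y e * (h * q + G)) (solJ y)
    (solA z q h y G) (fun L => y ^ blockSize L) L
  rw [one_mul] at this
  exact this

variable {z u p q h y r V : A}

lemma Params.sum_pow (hyp : Params z u p q h y r V) (c s : ℕ) :
    u * ∑ i ∈ Finset.range c, y ^ (i + 1 + s + 1) = (y ^ (c + 1) - y) * y ^ s := by
  induction c with
  | zero => simp
  | succ c ih =>
    rw [Finset.sum_range_succ, mul_add, ih]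
    linear_combination (- y ^ (c + 1) * y ^ s) * hyp.hy

lemma Params.solP_recurrence (hyp : Params z u p q h y r V) (G : A) (e : ℕ) (L : List ℕ) :
    solP z p q h y r G e L = solF z q h y G e L + z * solP z p q h y r G (e + 1) L
      + z * tailSum p (solF z q h y G (e + 1)) L := by
  rw [tailSum_solF]
  simp only [solP, solF, geom_succ y (e + 1), geom_succ y e]
  push_cast
  generalize solJ y L = a
  generalize solA z q h y G L = b
  generalize y ^ blockSize L = c
  generalize tailSum p (solJ y) L = ta
  generalize tailSum p (solA z q h y G) L = tb
  generalize tailSum p (fun L => y ^ blockSize L) L = tc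
  generalize geom y e = g
  generalize (e : A) = e
  have hp := hyp.hp
  have hr := hyp.hr
  linear_combination (a + z * ta + z * b * (e + 1) + z * z * p * b + z ^ 2 * tb * (e + 2)
      + z ^ 3 * tb * p
    + z ^ 2 * (h * q + G) * y * r * c + z ^ 3 * (h * q + G) * y * r * tc) * hp
    + (z * (h * q + G) * g * c + z ^ 2 * (h * q + G) * (y + y * g) * tc) * hr

lemma Params.tailSum_closed (hyp : Params z u p q h y r V) {G : A}
    (hG : G = u * (z * p) * z * q ^ 2 * h ^ 2 * V) (L : List ℕ) :
    z * p * tailSum p (solJ y) L + z ^ 2 * p * (1 + p) * tailSum p (solA z q h y G) L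
      + z ^ 2 * (h * q + G) * (r * y ^ 2 + r * y * p) * tailSum p (fun L => y ^ blockSize L) L
    = (h - p - z * p ^ 2 * h * q) * solJ y L
      + (G * z * y - z * (h * q + G) * r * y * p + z * p ^ 2 * h * q * y) * y ^ blockSize L
      + (1 - z * p ^ 2 * q) * solT z q h y G L := by
  have hV := hyp.hV
  have top : h - p - z * p ^ 2 * h * q
      + (G * z * y - z * (h * q + G) * r * y * p + z * p ^ 2 * h * q * y)
      + (1 - z * p ^ 2 * q) * (h * (q - 1) + G * (1 - z * y)) = 0 := by
    rw [hG]
    linear_combination V * identity_top hyp.hp hyp.hq hyp.hh hyp.hy hyp.hr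
      - (h - p - z * p ^ 2 * h * q - z * (h * q) * r * y * p + z * p ^ 2 * h * q * y
        + (1 - z * p ^ 2 * q) * (h * (q - 1))) * hV
  have const : z ^ 2 * (h * q + G) * (r * y ^ 2 + r * y * p) - z ^ 2 * p * (1 + p) * h * q * y
      + (G * z * y - z * (h * q + G) * r * y * p + z * p ^ 2 * h * q * y)
      + y * (z * p + z ^ 2 * p * (1 + p) * h * q + (h - p - z * p ^ 2 * h * q)) = 0 := by
    rw [hG]
    linear_combination V * identity_const hyp.hp hyp.hq hyp.hh hyp.hy hyp.hr
      - (z ^ 2 * (h * q) * (r * y ^ 2 + r * y * p) - z ^ 2 * p * (1 + p) * h * q * y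
        - z * (h * q) * r * y * p + z * p ^ 2 * h * q * y
        + y * (z * p + z ^ 2 * p * (1 + p) * h * q + h - p - z * p ^ 2 * h * q)) * hV
  have hJ : (h - p - z * p ^ 2 * h * q) + (1 - z * p ^ 2 * q) * (h * (q - 1)) =
      p * (z * p + z ^ 2 * p * (1 + p) * h * q + (h - p - z * p ^ 2 * h * q)) := by
    have := hyp.hp
    have := hyp.hq
    have := hyp.hh
    clear hyp hG hV top const
    grind
  have hT : (1 - z * p ^ 2 * q) * q = p * (z ^ 2 * p * (1 + p) * q + (1 - z * p ^ 2 * q)) := by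
    have := hyp.hp
    have := hyp.hq
    clear hyp hG hV top const hJ
    grind
  induction L with
  | nil =>
    simp only [tailSum, solJ, solT, blockSize, pow_zero]
    linear_combination - top
  | cons c L ih =>
    simp only [tailSum, solT]
    simp only [solJ, blockSize, solA, pow_add _ (c + 1)] at ih ⊢
    linear_combination p * ih - hJ * (solJ y L) - y ^ (c + 1) * y ^ blockSize L * top
      + p * y ^ blockSize L * const + y ^ blockSize L * y * hJ - hT * solT z q h y G L

lemma Params.solP_zero (hyp : Params z u p q h y r V) {G : A}
    (hG : G = u * (z * p) * z * q ^ 2 * h ^ 2 * V) (L : List ℕ) :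
    solP z p q h y r G 0 L =
      h * solJ y L + G * z * y * y ^ blockSize L + solT z q h y G L := by
  have hT := hyp.tailSum_closed hG L
  have hA : solA z q h y G L = h * q * solJ y L - h * q * y * y ^ blockSize L
    + q * solT z q h y G L := rfl
  simp only [solP, geom_succ, geom_zero, Nat.cast_zero]
  linear_combination hT - (z * p * solA z q h y G L + z * (h * q + G) * r * y * y ^ blockSize L
    + z ^ 2 * p * tailSum p (solA z q h y G) L
    + z ^ 2 * (h * q + G) * r * y * tailSum p (fun L => y ^ blockSize L) L) * hyp.hp
    + z * p ^ 2 * hA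

lemma Params.solP_zero_cons (hyp : Params z u p q h y r V) {G : A}
    (hG : G = u * (z * p) * z * q ^ 2 * h ^ 2 * V) (c : ℕ) (L : List ℕ) :
    solP z p q h y r G 0 (c :: L) =
      solA z q h y G L + (h * q + G) * y ^ (c + 1) * y ^ blockSize L := by
  rw [hyp.solP_zero hG, solT, solJ, solA, blockSize, pow_add _ (c + 1)]
  ring


/-- The solution of the recurrence. -/
def sol (z p q h y r G : A) : Bool → ℕ → List ℕ → A
  | true => solP z p q h y r G
  | false => solN z p q h y G

lemma Params.solF_eq (hyp : Params z u p q h y r V) {G : A}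
    (hG : G = u * (z * p) * z * q ^ 2 * h ^ 2 * V) (e : ℕ) (L : List ℕ) :
    solF z q h y G e L = solJ y L
      + z * ∑ i ∈ Finset.range (e + 1), solP z p q h y r G 0 (i :: L) := by
  simp only [hyp.solP_zero_cons hG, Finset.sum_add_distrib, ← Finset.sum_mul, ← Finset.mul_sum,
    Finset.sum_const, Finset.card_range, nsmul_eq_mul, solF, geom]
  push_cast
  ring

lemma Params.blockSum_solN (hyp : Params z u p q h y r V) {w : A} (hu : u = z * w) (G : A) (e : ℕ)
    (L : List ℕ) :
    z * blockSum (solN z p q h y G e) (fun s => w * y ^ (s + 1)) L =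
      solJ y L - 1 + z * tailSum p (solF z q h y G e) L := by
  induction L with
  | nil => simp [blockSum, solJ, tailSum]
  | cons c L ih =>
    have hs := hyp.sum_pow c (blockSize L)
    rw [hu] at hs
    rw [blockSum, solJ, tailSum, mul_add, ih, ← Finset.mul_sum, solN]
    linear_combination hs - z * tailSum p (solF z q h y G e) L * hyp.hp

lemma Params.sol_recurrence (hyp : Params z u p q h y r V) {w : A} (hu : u = z * w) {G : A}
    (hG : G = u * (z * p) * z * q ^ 2 * h ^ 2 * V) (path : Bool) (e : ℕ) (L : List ℕ) :
    sol z p q h y r G path e L = 1 + z *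
      (∑ i ∈ Finset.range (e + 1), sol z p q h y r G true 0 (i :: L)
      + sol z p q h y r G path (e + path.toNat) L
      + blockSum (sol z p q h y r G false (e + path.toNat)) (fun s => w * y ^ (s + 1)) L) := by
  cases path
  · simp only [sol, Bool.toNat_false, add_zero]
    have h₁ := hyp.blockSum_solN hu G e L
    have h₂ := hyp.solF_eq hG e L
    have h₃ : solN z p q h y G e L = p * (solF z q h y G e L
      + z * tailSum p (solF z q h y G e) L) := rfl
    linear_combination - h₁ + h₂ + (1 - z) * h₃
      + (solF z q h y G e L + z * tailSum p (solF z q h y G e) L) * hyp.hp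
  · simp only [sol, Bool.toNat_true]
    have h₁ := hyp.blockSum_solN hu G (e + 1) L
    have h₂ := hyp.solF_eq hG e L
    have h₃ := hyp.solP_recurrence G e L
    linear_combination - h₁ + h₂ + h₃

lemma Params.sol_nil (hyp : Params z u p q h y r V) {G : A}
    (hG : G = u * (z * p) * z * q ^ 2 * h ^ 2 * V) :
    1 + z * sol z p q h y r G true 0 [] = h + z * G := by
  rw [sol, hyp.solP_zero hG, solJ, solT, blockSize, pow_zero]
  linear_combination - hyp.hh

end Solution

section Series

variable {R : Type*} [CommRing R] {w : R}

lemma coeff_pow_eq_weightL {y : R⟦X⟧} (hy : y * (1 - X * C w) = 1) (m s : ℕ) :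
    coeff m (y ^ s) = weightL w m s := by
  have hpow : ∀ s, y ^ s = 1 + X * (C w * ∑ i ∈ Finset.range s, y ^ (i + 1)) := by
    intro s
    induction s with
    | zero => simp
    | succ s ih =>
      rw [Finset.sum_range_succ]
      linear_combination ih + y ^ s * hy
  induction m generalizing s with
  | zero => rw [hpow]; simp [weightL]
  | succ m ih =>
    rw [hpow, map_add, coeff_succ_X_mul, coeff_C_mul, map_sum, weightL]
    simp [coeff_one, ih]

lemma coeff_blockSum (m : ℕ) (f : List ℕ → R⟦X⟧) (k : ℕ → R⟦X⟧) (L : List ℕ) :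
    coeff m (blockSum f k L) = blockSum (fun L => coeff m (f L)) (fun s => coeff m (k s)) L := by
  induction L with
  | nil => simp [blockSum]
  | cons c L ih => simp [blockSum, ih]

lemma Params.coeff_sol {p q h y r V : R⟦X⟧} (hyp : Params X (X * C w) p q h y r V) {G : R⟦X⟧}
    (hG : G = X * C w * (X * p) * X * q ^ 2 * h ^ 2 * V) (m : ℕ) (path : Bool) (e : ℕ)
    (L : List ℕ) : coeff m (sol X p q h y r G path e L) = weightH w m path e L := by
  induction m generalizing path e L with
  | zero => rw [hyp.sol_recurrence rfl hG]; simp [weightH]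
  | succ m ih =>
    rw [hyp.sol_recurrence rfl hG, map_add, coeff_succ_X_mul, map_add, map_add, map_sum,
      coeff_blockSum, weightH]
    simp only [ih, coeff_C_mul, coeff_pow_eq_weightL hyp.hy]
    simp [coeff_one]

end Series

/-! ### Coefficient asymptotics of order `n ^ (-3/2)` -/

section Asymptotics

/-- The weight `n ^ (3/2)`. -/
noncomputable def wt (n : ℕ) : ℝ := n * √n

lemma wt_nonneg (n : ℕ) : 0 ≤ wt n := by unfold wt; positivity

lemma wt_pos {n : ℕ} (hn : 0 < n) : 0 < wt n := by unfold wt; positivity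

/-- If `n ≤ b ^ 2 * m` then the weights differ by a factor of at most `b ^ 3`. -/
lemma wt_le_of_le_mul {b : ℝ} (hb : 0 ≤ b) {m n : ℕ} (h : (n : ℝ) ≤ b ^ 2 * m) :
    wt n ≤ b ^ 3 * wt m := by
  have h1 : √(n : ℝ) ≤ b * √(m : ℝ) := by
    rw [← Real.sqrt_sq hb, ← Real.sqrt_mul (sq_nonneg b)]
    exact Real.sqrt_le_sqrt h
  calc wt n ≤ (b ^ 2 * m) * (b * √(m : ℝ)) := by unfold wt; gcongr
    _ = b ^ 3 * wt m := by unfold wt; ring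

lemma wt_le_half {i n : ℕ} (h : 2 * i ≤ n) : wt n ≤ 8 * wt (n - i) := by
  have : (n : ℝ) ≤ 2 ^ 2 * ((n - i : ℕ) : ℝ) := by
    have : n ≤ 4 * (n - i) := by omega
    have := (Nat.cast_le (α := ℝ)).2 this
    push_cast at this ⊢
    linarith
  have := wt_le_of_le_mul (b := 2) (by norm_num) this
  norm_num at this
  exact this

lemma tendsto_wt_shift {g : ℕ → ℝ} {l : ℝ} (hg : Tendsto (fun n => wt n * g n) atTop (𝓝 l))
    (i : ℕ) : Tendsto (fun n => wt n * g (n - i)) atTop (𝓝 l) := by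
  rw [← tendsto_add_atTop_iff_nat i]
  have h1 : Tendsto (fun k : ℕ => 1 + (i : ℝ) / k) atTop (𝓝 1) := by
    simpa using (tendsto_const_div_atTop_nhds_zero_nat (i : ℝ)).const_add 1
  have h2 : Tendsto (fun k : ℕ => ((1 + (i : ℝ) / k) * √(1 + (i : ℝ) / k)) * (wt k * g k)) atTop
      (𝓝 l) := by
    simpa using (h1.mul h1.sqrt).mul hg
  refine h2.congr' ?_
  filter_upwards [eventually_gt_atTop 0] with k hk
  have hk' : (0 : ℝ) < k := by exact_mod_cast hk
  have h3 : (1 + (i : ℝ) / k) = ((k + i : ℕ) : ℝ) / k := by push_cast; field_simp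
  rw [h3, Real.sqrt_div (by positivity), Nat.add_sub_cancel]
  unfold wt
  have : √(k : ℝ) ≠ 0 := by positivity
  field_simp

lemma tendsto_sum_of_dominated {F : ℕ → ℝ} (hF : Summable F) {m : ℕ → ℕ}
    (hm : Tendsto m atTop atTop) {c : ℕ → ℕ → ℝ} {d : ℕ → ℝ} {C : ℝ}
    (hc : ∀ n i, i < m n → |c n i| ≤ C) (hd : ∀ i, Tendsto (fun n => c n i) atTop (𝓝 (d i))) :
    Tendsto (fun n => ∑ i ∈ Finset.range (m n), F i * c n i) atTop (𝓝 (∑' i, F i * d i)) := by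
  have key : Tendsto (fun n => ∑' i, if i < m n then F i * c n i else 0) atTop
      (𝓝 (∑' i, F i * d i)) := by
    refine tendsto_tsum_of_dominated_convergence (bound := fun i => |F i| * |C|)
      (hF.abs.mul_right _) ?_ ?_
    · intro i
      refine ((hd i).const_mul (F i)).congr' ?_
      filter_upwards [hm.eventually_gt_atTop i] with n hn
      simp [hn]
    · filter_upwards with n i
      split_ifs with h
      · rw [Real.norm_eq_abs, abs_mul]
        exact mul_le_mul_of_nonneg_left ((hc n i h).trans (le_abs_self C)) (abs_nonneg _)
      · simp only [norm_zero]; positivity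
  refine key.congr fun n => ?_
  rw [tsum_eq_sum (s := Finset.range (m n))]
  · exact Finset.sum_congr rfl fun i hi => by simp [Finset.mem_range.1 hi]
  · intro i hi
    simp [Finset.mem_range.not.1 hi]

lemma tendsto_half : Tendsto (fun n : ℕ => n / 2 + 1) atTop atTop :=
  tendsto_atTop_atTop.2 fun b => ⟨2 * b, fun n hn => by omega⟩

lemma tendsto_half' : Tendsto (fun n : ℕ => (n + 1) / 2) atTop atTop :=
  tendsto_atTop_atTop.2 fun b => ⟨2 * b, fun n hn => by omega⟩

lemma coeff_mul_split (F G : ℝ⟦X⟧) (n : ℕ) :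
    coeff n (F * G) = ∑ i ∈ Finset.range (n / 2 + 1), coeff i F * coeff (n - i) G
      + ∑ i ∈ Finset.range ((n + 1) / 2), coeff i G * coeff (n - i) F := by
  rw [coeff_mul, Finset.Nat.sum_antidiagonal_eq_sum_range_succ
    (fun i j => coeff i F * coeff j G)]
  rw [← Finset.sum_range_add_sum_Ico _ (show n / 2 + 1 ≤ n.succ by omega)]
  congr 1
  refine Finset.sum_bij' (fun i _ => n - i) (fun i _ => n - i) ?_ ?_ ?_ ?_ ?_
  all_goals intro i hi; simp only [Finset.mem_range, Finset.mem_Ico] at *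
  any_goals omega
  rw [Nat.sub_sub_self (by omega), mul_comm]

/-- The coefficients are summable with sum `f`, and `n ^ (3/2)` times the `n`-th one tends
to `l`. -/
structure HasSing (F : ℝ⟦X⟧) (f l : ℝ) : Prop where
  sum : HasSum (fun n => coeff n F) f
  lim : Tendsto (fun n => wt n * coeff n F) atTop (𝓝 l)

/-- The coefficients are `O(n ^ (-3/2))`. -/
def WtBdd (F : ℝ⟦X⟧) : Prop := ∃ C, ∀ n, |wt n * coeff n F| ≤ C

lemma HasSing.wtBdd {F : ℝ⟦X⟧} {f l : ℝ} (h : HasSing F f l) : WtBdd F := by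
  obtain ⟨C, hC⟩ := (Metric.isBounded_range_of_tendsto _ h.lim).exists_norm_le
  exact ⟨C, fun n => hC _ ⟨n, rfl⟩⟩

lemma wt_shift_bdd {g : ℕ → ℝ} {C : ℝ} (hC : ∀ n, |wt n * g n| ≤ C) {n i : ℕ} (hi : 2 * i ≤ n) :
    |wt n * g (n - i)| ≤ 8 * C := by
  rw [abs_mul, abs_of_nonneg (wt_nonneg n)]
  calc wt n * |g (n - i)| ≤ 8 * wt (n - i) * |g (n - i)| := by
        gcongr; exact wt_le_half hi
    _ = 8 * |wt (n - i) * g (n - i)| := by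
        rw [abs_mul, abs_of_nonneg (wt_nonneg _)]; ring
    _ ≤ 8 * C := by gcongr; exact hC _

lemma hasSum_coeff_mul {F G : ℝ⟦X⟧} {f g : ℝ} (hF : HasSum (fun n => coeff n F) f)
    (hG : HasSum (fun n => coeff n G) g) : HasSum (fun n => coeff n (F * G)) (f * g) := by
  have hF' : Summable fun n => ‖coeff n F‖ := hF.summable.norm
  have hG' : Summable fun n => ‖coeff n G‖ := hG.summable.norm
  have h1 := tsum_mul_tsum_eq_tsum_sum_antidiagonal_of_summable_norm hF' hG'
  have h2 := (summable_norm_sum_mul_antidiagonal_of_summable_norm hF' hG').of_norm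
  rw [hF.tsum_eq, hG.tsum_eq] at h1
  simp only [coeff_mul]
  rw [h1]
  exact h2.hasSum

lemma HasSing.mul {F G : ℝ⟦X⟧} {f l g k : ℝ} (hF : HasSing F f l) (hG : HasSing G g k) :
    HasSing (F * G) (f * g) (f * k + g * l) := by
  refine ⟨hasSum_coeff_mul hF.sum hG.sum, ?_⟩
  obtain ⟨C, hC⟩ := hF.wtBdd
  obtain ⟨C', hC'⟩ := hG.wtBdd
  have h1 := tendsto_sum_of_dominated hF.sum.summable tendsto_half
    (c := fun n i => wt n * coeff (n - i) G)
    (fun n i hi => wt_shift_bdd hC' (by omega)) (tendsto_wt_shift hG.lim)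
  have h2 := tendsto_sum_of_dominated hG.sum.summable tendsto_half'
    (c := fun n i => wt n * coeff (n - i) F)
    (fun n i hi => wt_shift_bdd hC (by omega)) (tendsto_wt_shift hF.lim)
  rw [tsum_mul_right, hF.sum.tsum_eq] at h1
  rw [tsum_mul_right, hG.sum.tsum_eq] at h2
  refine (h1.add h2).congr fun n => ?_
  rw [coeff_mul_split, mul_add, Finset.mul_sum, Finset.mul_sum]
  congr 1 <;> exact Finset.sum_congr rfl fun i _ => by ring

lemma HasSing.add {F G : ℝ⟦X⟧} {f l g k : ℝ} (hF : HasSing F f l) (hG : HasSing G g k) :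
    HasSing (F + G) (f + g) (l + k) := by
  refine ⟨by simpa using hF.sum.add hG.sum, ?_⟩
  simpa [mul_add] using hF.lim.add hG.lim

lemma HasSing.neg {F : ℝ⟦X⟧} {f l : ℝ} (hF : HasSing F f l) : HasSing (-F) (-f) (-l) := by
  refine ⟨by simpa using hF.sum.neg, ?_⟩
  simpa using hF.lim.neg

lemma HasSing.sub {F G : ℝ⟦X⟧} {f l g k : ℝ} (hF : HasSing F f l) (hG : HasSing G g k) :
    HasSing (F - G) (f - g) (l - k) := by
  simpa [sub_eq_add_neg] using hF.add hG.neg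

lemma HasSing.congr {F : ℝ⟦X⟧} {f l g k : ℝ} (hF : HasSing F f l) (h1 : f = g) (h2 : l = k) :
    HasSing F g k := h1 ▸ h2 ▸ hF

lemma WtBdd.mul {F G : ℝ⟦X⟧} (hF : WtBdd F) (hG : WtBdd G) (sF : Summable fun n => coeff n F)
    (sG : Summable fun n => coeff n G) : WtBdd (F * G) := by
  obtain ⟨C, hC⟩ := hF
  obtain ⟨D, hD⟩ := hG
  have hC0 : 0 ≤ C := (abs_nonneg _).trans (hC 0)
  have hD0 : 0 ≤ D := (abs_nonneg _).trans (hD 0)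
  have aux : ∀ (f g : ℕ → ℝ) (B : ℝ), 0 ≤ B → (∀ n, |wt n * g n| ≤ B) → Summable f →
      ∀ n m : ℕ, 2 * m ≤ n + 2 → |wt n * ∑ i ∈ Finset.range m, f i * g (n - i)| ≤
        8 * B * ∑' i, |f i| := by
    intro f g B hB0 hB hf n m hm
    rw [Finset.mul_sum]
    calc _ ≤ ∑ i ∈ Finset.range m, |wt n * (f i * g (n - i))| := Finset.abs_sum_le_sum_abs _ _
      _ ≤ ∑ i ∈ Finset.range m, 8 * B * |f i| := by
          refine Finset.sum_le_sum fun i hi => ?_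
          have hi' := Finset.mem_range.1 hi
          rw [mul_left_comm, abs_mul, mul_comm (8 * B)]
          exact mul_le_mul_of_nonneg_left (wt_shift_bdd hB (by omega)) (abs_nonneg _)
      _ = 8 * B * ∑ i ∈ Finset.range m, |f i| := by rw [Finset.mul_sum]
      _ ≤ _ := by
          gcongr
          exact hf.abs.sum_le_tsum _ fun _ _ => abs_nonneg _
  refine ⟨8 * D * ∑' i, |coeff i F| + 8 * C * ∑' i, |coeff i G|, fun n => ?_⟩
  rw [coeff_mul_split, mul_add]
  refine (abs_add_le _ _).trans (add_le_add ?_ ?_)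
  · exact aux _ _ D hD0 hD sF n _ (by omega)
  · exact aux _ _ C hC0 hC sG n _ (by omega)

/-- All coefficients are nonnegative. -/
def NonnegCoeff (F : ℝ⟦X⟧) : Prop := ∀ n, 0 ≤ coeff n F

lemma NonnegCoeff.mul {F G : ℝ⟦X⟧} (hF : NonnegCoeff F) (hG : NonnegCoeff G) :
    NonnegCoeff (F * G) := fun n => by
  rw [coeff_mul]
  exact Finset.sum_nonneg fun i _ => mul_nonneg (hF _) (hG _)

lemma NonnegCoeff.add {F G : ℝ⟦X⟧} (hF : NonnegCoeff F) (hG : NonnegCoeff G) :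
    NonnegCoeff (F + G) := fun n => by
  rw [map_add]
  exact add_nonneg (hF n) (hG n)

section Inverse

variable {W V : ℝ⟦X⟧} {ω l b : ℝ}

lemma nonnegCoeff_of_eq_one_add_mul (hW : NonnegCoeff W) (hW0 : coeff 0 W = 0)
    (hV : V = 1 + W * V) : NonnegCoeff V := by
  intro n
  induction n using Nat.strong_induction_on with
  | _ n ih =>
    rw [hV, map_add, coeff_mul]
    refine add_nonneg ?_ (Finset.sum_nonneg fun ij hij => ?_)
    · rw [coeff_one]; split_ifs <;> norm_num
    · rcases Nat.eq_zero_or_pos ij.1 with h0 | h0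
      · simp [h0, hW0]
      · have := Finset.HasAntidiagonal.mem_antidiagonal.1 hij
        exact mul_nonneg (hW _) (ih _ (by omega))

lemma sum_range_coeff_mul_le (hW : NonnegCoeff W) (hV : NonnegCoeff V)
    (hs : HasSum (fun n => coeff n W) ω) (N : ℕ) :
    ∑ n ∈ Finset.range N, coeff n (W * V) ≤ ω * ∑ n ∈ Finset.range N, coeff n V := by
  simp only [coeff_mul]
  rw [← Finset.sum_biUnion]
  · calc _ ≤ ∑ x ∈ Finset.range N ×ˢ Finset.range N, coeff x.1 W * coeff x.2 V := by
          refine Finset.sum_le_sum_of_subset_of_nonneg ?_ fun x _ _ => mul_nonneg (hW _) (hV _)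
          intro x hx
          simp only [Finset.mem_biUnion, Finset.mem_range, Finset.HasAntidiagonal.mem_antidiagonal,
            Finset.mem_product] at hx ⊢
          obtain ⟨n, hn, hx⟩ := hx
          omega
      _ = (∑ n ∈ Finset.range N, coeff n W) * ∑ n ∈ Finset.range N, coeff n V := by
          rw [Finset.sum_product, Finset.sum_mul_sum]
      _ ≤ _ := by
          refine mul_le_mul_of_nonneg_right ?_ (Finset.sum_nonneg fun i _ => hV i)
          exact sum_le_hasSum _ (fun i _ => hW i) hs
  · intro i _ j _ hij
    rw [Function.onFun, Finset.disjoint_left]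
    intro x hx hx'
    rw [Finset.HasAntidiagonal.mem_antidiagonal] at hx hx'
    exact hij (hx.symm.trans hx')

lemma hasSum_inverse (hW : NonnegCoeff W) (hW0 : coeff 0 W = 0) (hV : V = 1 + W * V)
    (hs : HasSum (fun n => coeff n W) ω) (hω : ω < 1) :
    HasSum (fun n => coeff n V) (1 / (1 - ω)) := by
  have hVn := nonnegCoeff_of_eq_one_add_mul hW hW0 hV
  have hω' : 0 < 1 - ω := by linarith
  have hsum : Summable fun n => coeff n V := by
    refine summable_of_sum_range_le (c := 1 / (1 - ω)) hVn fun N => ?_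
    have h1 := sum_range_coeff_mul_le hW hVn hs N
    have h2 : ∑ n ∈ Finset.range N, coeff n V =
        ∑ n ∈ Finset.range N, coeff n (1 : ℝ⟦X⟧) + ∑ n ∈ Finset.range N, coeff n (W * V) := by
      rw [← Finset.sum_add_distrib]
      refine Finset.sum_congr rfl fun n _ => ?_
      rw [← map_add, ← hV]
    have h3 : ∑ n ∈ Finset.range N, coeff n (1 : ℝ⟦X⟧) ≤ 1 := by
      simp only [coeff_one, Finset.sum_ite_eq']
      split_ifs <;> norm_num
    rw [le_div_iff₀ hω']
    linarith
  obtain ⟨v, hv⟩ := hsum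
  have h1 : HasSum (fun n => coeff n (1 : ℝ⟦X⟧)) 1 := by
    simp only [coeff_one]
    exact hasSum_ite_eq 0 1
  have h2 := h1.add (hasSum_coeff_mul hs hv)
  simp only [← map_add, ← hV] at h2
  have h3 := hv.unique h2
  rwa [show 1 / (1 - ω) = v by field_simp; linarith]

lemma wtBdd_inverse (hW : NonnegCoeff W) (hW0 : coeff 0 W = 0) (hV : V = 1 + W * V)
    (hs : HasSing W ω l) (hb : 1 < b) (hω : b ^ 3 * ω < 1) : WtBdd V := by
  have hVn := nonnegCoeff_of_eq_one_add_mul hW hW0 hV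
  have hω0 : 0 ≤ ω := hs.sum.nonneg hW
  have hω1 : ω < 1 := by
    have := mul_le_mul_of_nonneg_right (one_le_pow₀ hb.le (n := 3)) hω0
    linarith
  have hsV := hasSum_inverse hW hW0 hV hs.sum hω1
  obtain ⟨C, hC⟩ := hs.wtBdd
  have hC0 : 0 ≤ C := (abs_nonneg _).trans (hC 0)
  have hb1 : 0 < b ^ 2 - 1 := by nlinarith
  set d : ℝ := √(b ^ 2 / (b ^ 2 - 1)) with hd
  have hd2 : d ^ 2 = b ^ 2 / (b ^ 2 - 1) := Real.sq_sqrt (by positivity)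
  have hd0 : 0 ≤ d := Real.sqrt_nonneg _
  set v := 1 / (1 - ω)
  have hv0 : 0 ≤ v := hsV.nonneg hVn
  have hε : 0 < 1 - b ^ 3 * ω := by linarith
  set K := d ^ 3 * C * v / (1 - b ^ 3 * ω) with hK
  have hK0 : 0 ≤ K := by positivity
  have hKeq : b ^ 3 * K * ω + d ^ 3 * C * v = K := by rw [hK]; field_simp; ring
  refine ⟨K, fun n => ?_⟩
  rw [abs_of_nonneg (mul_nonneg (wt_nonneg n) (hVn n))]
  induction n using Nat.strong_induction_on with
  | _ n ih =>
    rcases Nat.eq_zero_or_pos n with rfl | hn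
    · simpa [wt] using hK0
    have hVeq : coeff n V = ∑ i ∈ Finset.range (n + 1), coeff i W * coeff (n - i) V := by
      conv_lhs => rw [hV]
      rw [map_add, coeff_one, if_neg hn.ne', zero_add, coeff_mul,
        Finset.Nat.sum_antidiagonal_eq_sum_range_succ (fun i j => coeff i W * coeff j V)]
    rw [hVeq, Finset.mul_sum]
    have hterm : ∀ i ∈ Finset.range (n + 1), wt n * (coeff i W * coeff (n - i) V) ≤
        b ^ 3 * K * coeff i W + d ^ 3 * C * coeff (n - i) V := by
      intro i hi
      have hin : i ≤ n := Nat.lt_succ_iff.1 (Finset.mem_range.1 hi)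
      have hWi := hW i
      have hVi := hVn (n - i)
      have hb0 : 0 < b := by linarith
      rcases Nat.eq_zero_or_pos i with rfl | hi0
      · simp only [hW0]
        have : 0 ≤ d ^ 3 * C * coeff (n - 0) V := by positivity
        linarith
      by_cases hcase : (n : ℝ) ≤ b ^ 2 * ((n - i : ℕ) : ℝ)
      · have h1 := wt_le_of_le_mul hb0.le hcase
        have h2 := ih (n - i) (by omega)
        calc wt n * (coeff i W * coeff (n - i) V)
            ≤ b ^ 3 * wt (n - i) * (coeff i W * coeff (n - i) V) := by gcongr
          _ = b ^ 3 * coeff i W * (wt (n - i) * coeff (n - i) V) := by ring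
          _ ≤ b ^ 3 * coeff i W * K := by gcongr
          _ ≤ _ := by
            have : 0 ≤ d ^ 3 * C * coeff (n - i) V := by positivity
            linarith
      · have h1 : (n : ℝ) ≤ d ^ 2 * i := by
          rw [hd2, div_mul_eq_mul_div, le_div_iff₀ hb1]
          rw [Nat.cast_sub hin] at hcase
          push Not at hcase
          linarith
        have h1 := wt_le_of_le_mul hd0 h1
        have h2 := (le_abs_self _).trans (hC i)
        calc wt n * (coeff i W * coeff (n - i) V)
            ≤ d ^ 3 * wt i * (coeff i W * coeff (n - i) V) := by gcongr
          _ = d ^ 3 * (wt i * coeff i W) * coeff (n - i) V := by ring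
          _ ≤ d ^ 3 * C * coeff (n - i) V := by gcongr
          _ ≤ _ := by
            have : 0 ≤ b ^ 3 * K * coeff i W := by positivity
            linarith
    refine (Finset.sum_le_sum hterm).trans ?_
    rw [Finset.sum_add_distrib, ← Finset.mul_sum, ← Finset.mul_sum]
    have h1 : ∑ i ∈ Finset.range (n + 1), coeff i W ≤ ω :=
      sum_le_hasSum _ (fun i _ => hW i) hs.sum
    have h2 : ∑ i ∈ Finset.range (n + 1), coeff (n - i) V ≤ v := by
      have := Finset.sum_range_reflect (fun i => coeff i V) (n + 1)
      simp only [Nat.add_sub_cancel] at this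
      rw [this]
      exact sum_le_hasSum _ (fun i _ => hVn i) hsV
    calc _ ≤ b ^ 3 * K * ω + d ^ 3 * C * v := by gcongr
      _ = K := hKeq

lemma HasSing.inverse (hs : HasSing W ω l) (hW : NonnegCoeff W) (hW0 : coeff 0 W = 0)
    (hV : V = 1 + W * V) (hb : 1 < b) (hω : b ^ 3 * ω < 1) :
    HasSing V (1 / (1 - ω)) (l / (1 - ω) ^ 2) := by
  have hVn := nonnegCoeff_of_eq_one_add_mul hW hW0 hV
  have hω0 : 0 ≤ ω := hs.sum.nonneg hW
  have hω1 : ω < 1 := by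
    have := mul_le_mul_of_nonneg_right (one_le_pow₀ hb.le (n := 3)) hω0
    linarith
  have hsV := hasSum_inverse hW hW0 hV hs.sum hω1
  refine ⟨hsV, ?_⟩
  have hVb := wtBdd_inverse hW hW0 hV hs hb hω
  obtain ⟨B, hB⟩ := hVb.mul hVb hsV.summable hsV.summable
  have hB0 : 0 ≤ B := (abs_nonneg _).trans (hB 0)
  have hU := hasSum_coeff_mul hsV hsV
  obtain ⟨C, hC⟩ := hs.wtBdd
  set U := V * V with hUdef
  have hder : X * d⁄dX ℝ V = U * (X * d⁄dX ℝ W) := by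
    have h1 : d⁄dX ℝ V = d⁄dX ℝ (1 + W * V) := by rw [← hV]
    rw [map_add, Derivation.map_one_eq_zero, Derivation.leibniz, smul_eq_mul, smul_eq_mul] at h1
    grind
  have hcoeff : ∀ (F : ℝ⟦X⟧) n, coeff n (X * d⁄dX ℝ F) = n * coeff n F := by
    intro F n
    cases n with
    | zero => simp
    | succ n => rw [coeff_succ_X_mul, coeff_derivative]; push_cast; ring
  have h1 := tendsto_sum_of_dominated hU.summable tendsto_half (C := 8 * C) (d := fun _ => l)
    (c := fun n i => (wt n * coeff (n - i) W) * (((n - i : ℕ) : ℝ) / n)) ?_ ?_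
  · have h2 := tendsto_sum_of_dominated hs.sum.summable tendsto_half' (C := 8 * B)
      (d := fun _ => 0) (c := fun n i => (wt n * coeff (n - i) U) * ((i : ℝ) / n)) ?_ ?_
    · rw [tsum_mul_right, hU.tsum_eq] at h1
      simp only [mul_zero, tsum_zero] at h2
      have h3 := h1.add h2
      rw [show 1 / (1 - ω) * (1 / (1 - ω)) * l + 0 = l / (1 - ω) ^ 2 by
        have : 1 - ω ≠ 0 := by linarith
        field_simp; ring] at h3
      refine h3.congr' ?_
      filter_upwards [eventually_gt_atTop 0] with n hn
      have hn' : (n : ℝ) ≠ 0 := by positivity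
      have h4 : wt n * coeff n V = √(n : ℝ) * coeff n (U * (X * d⁄dX ℝ W)) := by
        rw [← hder, hcoeff]; unfold wt; ring
      rw [h4, coeff_mul_split, mul_add, Finset.mul_sum, Finset.mul_sum]
      simp only [hcoeff]
      congr 1 <;> refine Finset.sum_congr rfl fun i _ => ?_ <;> unfold wt <;> field_simp
    · intro n i hi
      rw [abs_mul, ← mul_one (8 * B)]
      refine mul_le_mul (wt_shift_bdd hB (by omega)) ?_ (abs_nonneg _) (by positivity)
      rw [abs_of_nonneg (by positivity)]
      exact div_le_one_of_le₀ (by norm_cast; omega) (by positivity)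
    · intro i
      refine squeeze_zero_norm' (a := fun n : ℕ => 8 * B * ((i : ℝ) / n)) ?_ ?_
      · filter_upwards [eventually_ge_atTop (2 * i)] with n hn
        rw [norm_mul, Real.norm_eq_abs, Real.norm_eq_abs, abs_of_nonneg (a := (i : ℝ) / n)
          (by positivity)]
        exact mul_le_mul_of_nonneg_right (wt_shift_bdd hB hn) (by positivity)
      · simpa using (tendsto_const_div_atTop_nhds_zero_nat (i : ℝ)).const_mul (8 * B)
  · intro n i hi
    have hC0 : 0 ≤ C := (abs_nonneg _).trans (hC 0)
    rw [abs_mul, ← mul_one (8 * C)]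
    refine mul_le_mul (wt_shift_bdd hC (by omega)) ?_ (abs_nonneg _) (by positivity)
    rw [abs_of_nonneg (by positivity)]
    exact div_le_one_of_le₀ (by norm_cast; omega) (by positivity)
  · intro i
    have h5 : Tendsto (fun n : ℕ => ((n - i : ℕ) : ℝ) / n) atTop (𝓝 1) := by
      have h6 : Tendsto (fun n : ℕ => 1 - (i : ℝ) / n) atTop (𝓝 1) := by
        simpa using (tendsto_const_div_atTop_nhds_zero_nat (i : ℝ)).const_sub 1
      refine h6.congr' ?_
      filter_upwards [eventually_gt_atTop i] with n hn
      have hn' : (n : ℝ) ≠ 0 := by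
        have : 0 < n := by omega
        positivity
      rw [Nat.cast_sub hn.le]
      field_simp
    simpa using (tendsto_wt_shift hs.lim i).mul h5

end Inverse

end Asymptotics

/-! ### Basic series with known asymptotics -/

section BasicSeries

lemma tendsto_wt_mul_pow {a : ℝ} (h0 : 0 ≤ a) (h1 : a < 1) :
    Tendsto (fun n : ℕ => wt n * a ^ n) atTop (𝓝 0) := by
  have h := tendsto_pow_const_mul_const_pow_of_abs_lt_one 2 (abs_lt.2 ⟨by linarith, h1⟩)
  refine squeeze_zero (fun n => mul_nonneg (wt_nonneg n) (by positivity)) (fun n => ?_) h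
  refine mul_le_mul_of_nonneg_right ?_ (by positivity)
  unfold wt
  rw [pow_two]
  refine mul_le_mul_of_nonneg_left ?_ (by positivity)
  rw [Real.sqrt_le_left (by positivity)]
  norm_cast
  nlinarith

lemma hasSing_geom {a : ℝ} (h0 : 0 ≤ a) (h1 : a < 1) :
    HasSing (mk fun n => a ^ n) (1 / (1 - a)) 0 := by
  refine ⟨?_, ?_⟩
  · simpa using hasSum_geometric_of_lt_one h0 h1
  · simpa using tendsto_wt_mul_pow h0 h1

lemma geom_mul_one_sub (a : ℝ) : (mk fun n => a ^ n) * (1 - C a * X) = 1 := by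
  ext n
  rw [mul_sub, mul_one, map_sub, mul_left_comm, coeff_C_mul, coeff_one]
  cases n with
  | zero => simp
  | succ n => simp [coeff_succ_mul_X, pow_succ']

lemma nonnegCoeff_geom {a : ℝ} (h0 : 0 ≤ a) : NonnegCoeff (mk fun n => a ^ n) := fun n => by
  rw [coeff_mk]; positivity

lemma hasSing_C (a : ℝ) : HasSing (C a) a 0 := by
  refine ⟨?_, ?_⟩
  · simp only [coeff_C]
    exact hasSum_ite_eq 0 a
  · refine tendsto_const_nhds.congr' ?_
    filter_upwards [eventually_gt_atTop 0] with n hn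
    simp [coeff_C, hn.ne']

lemma hasSing_one : HasSing 1 1 0 := by simpa using hasSing_C 1

lemma hasSing_X : HasSing X 1 0 := by
  refine ⟨?_, ?_⟩
  · simp only [coeff_X]
    exact hasSum_ite_eq 1 1
  · refine tendsto_const_nhds.congr' ?_
    filter_upwards [eventually_gt_atTop 1] with n hn
    simp [coeff_X, hn.ne']

lemma nonnegCoeff_C {a : ℝ} (ha : 0 ≤ a) : NonnegCoeff (C a) := fun n => by
  rw [coeff_C]; split_ifs <;> simp [ha]

lemma nonnegCoeff_X : NonnegCoeff X := fun n => by
  rw [coeff_X]; split_ifs <;> norm_num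

/-- The Catalan generating function at `a * X`. -/
noncomputable def catS (a : ℝ) : ℝ⟦X⟧ := mk fun n => a ^ n * catalan n

lemma catS_eq (a : ℝ) : catS a = 1 + C a * X * catS a ^ 2 := by
  have h : catS a = rescale a (map (Nat.castRingHom ℝ) catalanSeries) := by
    ext n
    simp [catS, coeff_rescale]
  have h2 := congrArg (fun F => rescale a (map (Nat.castRingHom ℝ) F))
    catalanSeries_sq_mul_X_add_one
  simp only [map_add, map_mul, map_pow, map_one, map_X, rescale_X, ← h] at h2
  linear_combination -h2

lemma wallis_centralBinom (n : ℕ) :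
    ((n.centralBinom : ℝ) / 4 ^ n) ^ 2 * ((2 * n + 1) * Real.Wallis.W n) = 1 := by
  rw [Real.Wallis.W_eq_factorial_ratio]
  have h : (n.centralBinom : ℝ) * (n.factorial : ℝ) ^ 2 = (2 * n).factorial := by
    have := Nat.choose_mul_factorial_mul_factorial (show n ≤ 2 * n by omega)
    rw [show 2 * n - n = n by omega] at this
    rw [Nat.centralBinom, ← this]
    push_cast
    ring
  rw [← h, pow_mul, show (2 : ℝ) ^ 4 = 4 ^ 2 by norm_num, ← pow_mul, mul_comm 2 n, pow_mul]
  have h1 : (n.centralBinom : ℝ) ≠ 0 := by exact_mod_cast n.centralBinom_ne_zero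
  have h2 : (n.factorial : ℝ) ≠ 0 := by positivity
  field_simp

lemma tendsto_wt_catalan :
    Tendsto (fun n : ℕ => wt n * ((1 / 4 : ℝ) ^ n * catalan n)) atTop (𝓝 (√(1 / Real.pi))) := by
  have h1 : Tendsto (fun n : ℕ => (n : ℝ) * ((n.centralBinom : ℝ) / 4 ^ n) ^ 2) atTop
      (𝓝 (1 / Real.pi)) := by
    have h2 : Tendsto (fun n : ℕ => (2 + 1 / (n : ℝ)) * Real.Wallis.W n) atTop (𝓝 Real.pi) := by
      have := ((tendsto_const_div_atTop_nhds_zero_nat (1 : ℝ)).const_add 2).mul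
        Real.Wallis.tendsto_W_nhds_pi_div_two
      convert! this using 2
      ring
    have h3 := (h2.inv₀ Real.pi_ne_zero)
    rw [one_div]
    refine h3.congr' ?_
    filter_upwards [eventually_gt_atTop 0] with n hn
    have hn' : (0 : ℝ) < n := by exact_mod_cast hn
    have hW := Real.Wallis.W_pos n
    rw [inv_eq_iff_eq_inv]
    refine eq_inv_of_mul_eq_one_left ?_
    calc _ = ((n.centralBinom : ℝ) / 4 ^ n) ^ 2 * ((2 * n + 1) * Real.Wallis.W n) := by
          field_simp
      _ = 1 := wallis_centralBinom n
  have h4 : Tendsto (fun n : ℕ => (n : ℝ) / (n + 1)) atTop (𝓝 1) :=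
    tendsto_natCast_div_add_atTop 1
  have h5 := h4.mul h1.sqrt
  rw [one_mul] at h5
  refine h5.congr fun n => ?_
  have hc : ((n : ℝ) + 1) * catalan n = n.centralBinom := by
    exact_mod_cast succ_mul_catalan_eq_centralBinom n
  rw [Real.sqrt_mul (by positivity), Real.sqrt_sq (by positivity), ← hc, wt, one_div, inv_pow]
  have : (n : ℝ) + 1 ≠ 0 := by positivity
  field_simp

lemma hasSing_catS_quarter : HasSing (catS (1 / 4)) 2 (√(1 / Real.pi)) := by
  have hlim : Tendsto (fun n => wt n * coeff n (catS (1 / 4))) atTop (𝓝 (√(1 / Real.pi))) := by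
    simpa [catS] using tendsto_wt_catalan
  have hsum : Summable fun n => coeff n (catS (1 / 4)) := by
    obtain ⟨B, hB⟩ := (Metric.isBounded_range_of_tendsto _ hlim).exists_norm_le
    refine summable_of_isBigO_nat
      (Real.summable_one_div_nat_rpow.2 (show (1 : ℝ) < 3 / 2 by norm_num)) ?_
    refine Asymptotics.IsBigO.of_bound B ?_
    filter_upwards [eventually_gt_atTop 0] with n hn
    have hn' : (0 : ℝ) < n := by exact_mod_cast hn
    have h1 := hB _ ⟨n, rfl⟩
    have h2 : (n : ℝ) ^ (3 / 2 : ℝ) = wt n := by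
      rw [wt, Real.sqrt_eq_rpow, ← Real.rpow_one_add' (by positivity) (by norm_num)]
      norm_num
    have h3 := wt_pos hn
    rw [h2, norm_div, norm_one, Real.norm_of_nonneg h3.le, mul_one_div, le_div_iff₀ h3, mul_comm]
    simpa [abs_of_pos h3] using h1
  obtain ⟨k, hk⟩ := hsum
  have h1 := hasSing_one.sum.add (hasSum_coeff_mul
    (hasSum_coeff_mul (hasSing_C (1 / 4)).sum hasSing_X.sum) (hasSum_coeff_mul hk hk))
  simp only [← map_add, ← pow_two, ← catS_eq] at h1
  have h2 := hk.unique h1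
  have h3 : k = 2 := by nlinarith [sq_nonneg (k - 2)]
  exact ⟨h3 ▸ hk, hlim⟩

lemma exists_hasSing_catS_twentieth : ∃ m, m = 1 + m ^ 2 / 20 ∧ HasSing (catS (1 / 20)) m 0 := by
  have hle : ∀ n, coeff n (catS (1 / 20)) = (1 / 5 : ℝ) ^ n * coeff n (catS (1 / 4)) := by
    intro n
    simp only [catS, coeff_mk]
    rw [show (1 / 20 : ℝ) = 1 / 5 * (1 / 4) by norm_num, mul_pow, mul_assoc]
  have hlim : Tendsto (fun n => wt n * coeff n (catS (1 / 20))) atTop (𝓝 0) := by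
    have h1 : Tendsto (fun n : ℕ => (1 / 5 : ℝ) ^ n) atTop (𝓝 0) :=
      tendsto_pow_atTop_nhds_zero_of_lt_one (by norm_num) (by norm_num)
    have h2 := h1.mul hasSing_catS_quarter.lim
    rw [zero_mul] at h2
    refine h2.congr fun n => ?_
    rw [hle]; ring
  have hsum : Summable fun n => coeff n (catS (1 / 20)) := by
    refine Summable.of_norm_bounded hasSing_catS_quarter.sum.summable.norm fun n => ?_
    rw [hle, norm_mul]
    refine mul_le_of_le_one_left (norm_nonneg _) ?_
    rw [Real.norm_of_nonneg (by positivity)]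
    exact pow_le_one₀ (by norm_num) (by norm_num)
  obtain ⟨m, hm⟩ := hsum
  have h1 := hasSing_one.sum.add (hasSum_coeff_mul
    (hasSum_coeff_mul (hasSing_C (1 / 20)).sum hasSing_X.sum) (hasSum_coeff_mul hm hm))
  simp only [← map_add, ← pow_two, ← catS_eq] at h1
  have h2 := hm.unique h1
  exact ⟨m, by linarith, hm, hlim⟩

end BasicSeries

/-! ### The generating functions at `X / 5` -/

section ScaledSeries

/-- The variable, scaled so that the dominant singularity is at `1`. -/
noncomputable def zS : ℝ⟦X⟧ := C (1 / 5) * X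

/-- The series `1 / (1 - z)`. -/
noncomputable def pS : ℝ⟦X⟧ := PowerSeries.mk fun n => (1 / 5) ^ n

/-- The series `1 / (1 - 2 * z)`. -/
noncomputable def twoS : ℝ⟦X⟧ := PowerSeries.mk fun n => (2 / 5) ^ n

/-- The series `1 / (2 - z)`. -/
noncomputable def halfS : ℝ⟦X⟧ := C (1 / 2) * PowerSeries.mk fun n => (1 / 10) ^ n

/-- The Catalan series at `z / (1 - z)`. -/
noncomputable def qS : ℝ⟦X⟧ :=
  C (5 / 4) * catS (1 / 4) + C (1 / 4) * catS (1 / 20)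
    - C (1 / 8) * X * (catS (1 / 4) * catS (1 / 20)) - C (1 / 2)

/-- The series `1 / (1 - z * q)`. -/
noncomputable def hS : ℝ⟦X⟧ := (1 + qS) * halfS

/-- The series `z / (1 - z) * q`. -/
noncomputable def tS : ℝ⟦X⟧ := zS * pS * qS

/-- The kernel of the geometric series giving `vS`. -/
noncomputable def wS : ℝ⟦X⟧ := pS * (tS + zS * zS * tS * hS * twoS)

/-- The inverse of the denominator at `w = 1`. -/
noncomputable def vS : ℝ⟦X⟧ := pS * twoS * (1 - wS)⁻¹

lemma pS_mul : pS * (1 - zS) = 1 := geom_mul_one_sub (1 / 5)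

lemma twoS_mul : twoS * (1 - 2 * zS) = 1 := by
  have h : (C (2 / 5) : ℝ⟦X⟧) = 2 * C (1 / 5) := by
    rw [← map_ofNat C, ← map_mul]; norm_num
  have h1 := geom_mul_one_sub (2 / 5)
  rw [h] at h1
  rw [zS, twoS]
  linear_combination h1

lemma halfS_mul : halfS * (2 - zS) = 1 := by
  have h : (C (1 / 5) : ℝ⟦X⟧) = 2 * C (1 / 10) := by
    rw [← map_ofNat C, ← map_mul]; norm_num
  have h2 : (C (1 / 2) : ℝ⟦X⟧) * 2 = 1 := by
    rw [← map_ofNat C, ← map_mul]; norm_num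
  rw [zS, halfS, h]
  linear_combination geom_mul_one_sub (1 / 10) * 1 +
    (PowerSeries.mk (fun n => (1 / 10 : ℝ) ^ n) * (1 - C (1 / 10) * X)) * h2

lemma qS_quadratic : (1 - zS) * qS = (1 - zS) + zS * qS ^ 2 := by
  have hK := catS_eq (1 / 4)
  have hM := catS_eq (1 / 20)
  have h1 : (8 : ℝ⟦X⟧) * C (1 / 8) = 1 := by rw [← map_ofNat C, ← map_mul]; norm_num
  have h2 : (5 : ℝ⟦X⟧) * C (1 / 5) = 1 := by rw [← map_ofNat C, ← map_mul]; norm_num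
  have h3 : (C (5 / 4) : ℝ⟦X⟧) = 10 * C (1 / 8) := by rw [← map_ofNat C, ← map_mul]; norm_num
  have h4 : (C (1 / 4) : ℝ⟦X⟧) = 2 * C (1 / 8) := by rw [← map_ofNat C, ← map_mul]; norm_num
  have h5 : (C (1 / 2) : ℝ⟦X⟧) = 4 * C (1 / 8) := by rw [← map_ofNat C, ← map_mul]; norm_num
  have h6 : (C (1 / 20) : ℝ⟦X⟧) = 2 * C (1 / 8) * C (1 / 5) := by
    rw [← map_ofNat C, ← map_mul, ← map_mul]; norm_num
  rw [qS, zS]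
  rw [h4] at hK
  rw [h6] at hM
  rw [h3, h4, h5]
  generalize catS (1 / 4) = K at *
  generalize catS (1 / 20) = M at *
  generalize (C (1 / 8) : ℝ⟦X⟧) = t at *
  generalize (C (1 / 5) : ℝ⟦X⟧) = c at *
  generalize (X : ℝ⟦X⟧) = x at *
  clear h3 h4 h5 h6
  grind

lemma qS_eq : qS = 1 + zS * pS * qS ^ 2 := by
  have h1 := pS_mul
  have h2 := qS_quadratic
  linear_combination (pS : ℝ⟦X⟧) * h2 + (1 - qS) * h1

lemma hS_mul : hS * (1 - zS * qS) = 1 := by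
  have h1 := halfS_mul
  have h2 := qS_quadratic
  rw [hS]
  linear_combination h1 + halfS * h2

lemma nonnegCoeff_zS : NonnegCoeff zS := (nonnegCoeff_C (by norm_num)).mul nonnegCoeff_X

lemma nonnegCoeff_pS : NonnegCoeff pS := nonnegCoeff_geom (by norm_num)

lemma coeff_zero_zS_mul (F : ℝ⟦X⟧) : coeff 0 (zS * F) = 0 := by
  simp [zS]

lemma nonnegCoeff_qS : NonnegCoeff qS := by
  intro n
  induction n using Nat.strong_induction_on with
  | _ n ih =>
    rw [qS_eq, map_add, coeff_mul]
    refine add_nonneg ?_ (Finset.sum_nonneg fun ij hij => ?_)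
    · rw [coeff_one]; split_ifs <;> norm_num
    · rcases Nat.eq_zero_or_pos ij.1 with h0 | h0
      · simp [h0, coeff_zero_zS_mul, -coeff_zero_eq_constantCoeff]
      · have := Finset.HasAntidiagonal.mem_antidiagonal.1 hij
        refine mul_nonneg ((nonnegCoeff_zS.mul nonnegCoeff_pS) _) ?_
        rw [pow_two, coeff_mul]
        refine Finset.sum_nonneg fun ab hab => ?_
        have := Finset.HasAntidiagonal.mem_antidiagonal.1 hab
        exact mul_nonneg (ih _ (by omega)) (ih _ (by omega))

lemma nonnegCoeff_one : NonnegCoeff 1 := by simpa using nonnegCoeff_C zero_le_one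

lemma nonnegCoeff_wS : NonnegCoeff wS := by
  have hp := nonnegCoeff_pS
  have hz := nonnegCoeff_zS
  have hq := nonnegCoeff_qS
  have hh : NonnegCoeff hS := (nonnegCoeff_one.add hq).mul
    ((nonnegCoeff_C (by norm_num)).mul (nonnegCoeff_geom (by norm_num)))
  have ht : NonnegCoeff tS := (hz.mul hp).mul hq
  exact hp.mul (ht.add ((((hz.mul hz).mul ht).mul hh).mul (nonnegCoeff_geom (by norm_num))))

lemma coeff_zero_wS : coeff 0 wS = 0 := by
  simp [wS, tS, zS]

lemma one_sub_wS_inv : (1 - wS)⁻¹ = 1 + wS * (1 - wS)⁻¹ := by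
  have h : (1 - wS) * (1 - wS)⁻¹ = 1 := by
    refine PowerSeries.mul_inv_cancel _ ?_
    have := coeff_zero_wS
    rw [coeff_zero_eq_constantCoeff_apply] at this
    simp [this]
  linear_combination h

lemma vS_mul :
    ((1 - zS - tS) * (1 - zS - zS) - zS * zS * tS * hS) * vS = 1 := by
  have h1 := pS_mul
  have h2 := twoS_mul
  have h3 := one_sub_wS_inv
  rw [vS]
  generalize (1 - wS)⁻¹ = V at *
  rw [wS] at h3
  grind

lemma exists_hasSing_qS : ∃ l, l ≠ 0 ∧ HasSing qS 2 l := by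
  obtain ⟨m, hm, hM⟩ := exists_hasSing_catS_twentieth
  have hK := hasSing_catS_quarter
  refine ⟨√(1 / Real.pi) * ((10 - m) / 8), mul_ne_zero ?_ ?_, ?_⟩
  · have := Real.pi_pos
    positivity
  · intro h
    have : m = 10 := by linarith
    subst this
    norm_num at hm
  · refine HasSing.congr (((((hasSing_C _).mul hK).add ((hasSing_C _).mul hM)).sub
      (((hasSing_C _).mul hasSing_X).mul (hK.mul hM))).sub (hasSing_C _)) ?_ ?_ <;> ring

/-- The numerator of the generating function. -/
noncomputable def kS : ℝ⟦X⟧ := zS * zS * zS * (zS * pS) * (qS * qS) * (hS * hS)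

/-- The derivative of the denominator at `w = 1`. -/
noncomputable def bS : ℝ⟦X⟧ := (-(1 - tS) - (1 - zS) - tS * zS * hS) * zS + C 2 * (zS * zS)

lemma exists_hasSing_moments : ∃ l, l ≠ 0 ∧
    HasSing (hS + kS * vS) (20 / 11) (120 / 121 * l) ∧
    HasSing ((kS - bS * (kS * vS)) * vS) (45 / 121) (1750 / 1331 * l) ∧
    HasSing (-(bS * ((kS - bS * (kS * vS)) * vS) + zS * zS * (kS * vS)) * vS)
      (665 / 1331) (34300 / 14641 * l) := by
  obtain ⟨l, hl, hq⟩ := exists_hasSing_qS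
  refine ⟨l, hl, ?_⟩
  have hz : HasSing zS (1 / 5) 0 :=
    ((hasSing_C (1 / 5)).mul hasSing_X).congr (by norm_num) (by norm_num)
  have hp : HasSing pS (5 / 4) 0 :=
    (hasSing_geom (by norm_num) (by norm_num)).congr (by norm_num) rfl
  have h2 : HasSing twoS (5 / 3) 0 :=
    (hasSing_geom (by norm_num) (by norm_num)).congr (by norm_num) rfl
  have h3 : HasSing halfS (5 / 9) 0 :=
    ((hasSing_C (1 / 2)).mul (hasSing_geom (by norm_num) (by norm_num))).congr (by norm_num)
      (by norm_num)
  have hh : HasSing hS (5 / 3) (5 / 9 * l) :=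
    ((hasSing_one.add hq).mul h3).congr (by norm_num) (by ring)
  have ht : HasSing tS (1 / 2) (1 / 4 * l) :=
    ((hz.mul hp).mul hq).congr (by norm_num) (by ring)
  have hw : HasSing wS (25 / 36) (10 / 27 * l) :=
    (hp.mul (ht.add ((((hz.mul hz).mul ht).mul hh).mul h2))).congr (by norm_num) (by ring)
  have hV : HasSing (1 - wS)⁻¹ (36 / 11) (480 / 121 * l) :=
    (hw.inverse (b := 11 / 10) nonnegCoeff_wS coeff_zero_wS one_sub_wS_inv (by norm_num)
      (by norm_num)).congr (by norm_num) (by ring)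
  have hv : HasSing vS (75 / 11) (1000 / 121 * l) :=
    ((hp.mul h2).mul hV).congr (by norm_num) (by ring)
  have hk : HasSing kS (1 / 45) (1 / 27 * l) :=
    (((((hz.mul hz).mul hz).mul (hz.mul hp)).mul (hq.mul hq)).mul (hh.mul hh)).congr
      (by norm_num) (by ring)
  have hb : HasSing bS (-16 / 75) (1 / 45 * l) :=
    ((((hasSing_one.sub ht).neg.sub (hasSing_one.sub hz)).sub ((ht.mul hz).mul hh)).mul hz
      |>.add ((hasSing_C 2).mul (hz.mul hz))).congr (by norm_num) (by ring)
  have h0 : HasSing (kS * vS) (5 / 33) (475 / 1089 * l) :=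
    (hk.mul hv).congr (by norm_num) (by ring)
  have h1 : HasSing ((kS - bS * (kS * vS)) * vS) (45 / 121) (1750 / 1331 * l) :=
    ((hk.sub (hb.mul h0)).mul hv).congr (by norm_num) (by ring)
  exact ⟨(hh.add h0).congr (by norm_num) (by ring), h1,
    (((hb.mul h1).add ((hz.mul hz).mul h0)).neg.mul hv).congr (by norm_num) (by ring)⟩

end ScaledSeries

/-! ### Binomial moments -/

section Moments

/-- The inclusion of scaled real series into series with polynomial coefficients. -/
noncomputable def liftS : ℝ⟦X⟧ →+* (Polynomial ℝ)⟦X⟧ :=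
  (PowerSeries.map Polynomial.C).comp (rescale 5)

/-- The scaled series of `k`-th coefficients. -/
noncomputable def momentS (k : ℕ) (F : (Polynomial ℝ)⟦X⟧) : ℝ⟦X⟧ :=
  PowerSeries.mk fun n => (coeff n F).coeff k / 5 ^ n

lemma liftS_zS : liftS zS = X := by
  simp only [liftS, zS, RingHom.comp_apply, map_mul, rescale_X, PowerSeries.map_X]
  rw [show rescale (5 : ℝ) (C (1 / 5)) = C (1 / 5) by
    ext n; rw [coeff_rescale, coeff_C]; split_ifs with h <;> simp [h]]
  rw [← mul_assoc, ← map_mul, ← map_mul]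
  norm_num

lemma coeff_liftS (F : ℝ⟦X⟧) (n : ℕ) : coeff n (liftS F) = Polynomial.C (5 ^ n * coeff n F) := by
  simp [liftS, coeff_rescale]

lemma momentS_add (k : ℕ) (F G : (Polynomial ℝ)⟦X⟧) :
    momentS k (F + G) = momentS k F + momentS k G := by
  ext n
  simp [momentS, add_div]

lemma momentS_liftS_mul (k : ℕ) (F : ℝ⟦X⟧) (G : (Polynomial ℝ)⟦X⟧) :
    momentS k (liftS F * G) = F * momentS k G := by
  ext n
  simp only [momentS, coeff_mk, coeff_mul, Polynomial.finsetSum_coeff, coeff_liftS,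
    Polynomial.coeff_C_mul, Finset.sum_div]
  refine Finset.sum_congr rfl fun ij hij => ?_
  rw [← Finset.HasAntidiagonal.mem_antidiagonal.1 hij, pow_add]
  field_simp

lemma momentS_zero_one : momentS 0 1 = 1 := by
  ext n
  simp only [momentS, coeff_mk, coeff_one]
  split_ifs with h <;> simp [h]

lemma momentS_succ_one (k : ℕ) : momentS (k + 1) 1 = 0 := by
  ext n
  simp only [momentS, coeff_mk, coeff_one]
  split_ifs with h <;> simp [h, Polynomial.coeff_one]

/-- The weight `1 + ε` marking left points. -/
noncomputable def cS : (Polynomial ℝ)⟦X⟧ := C (1 + Polynomial.X)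

lemma momentS_zero_cS_mul (F : (Polynomial ℝ)⟦X⟧) : momentS 0 (cS * F) = momentS 0 F := by
  ext n
  simp [momentS, cS, add_mul]

lemma momentS_succ_cS_mul (k : ℕ) (F : (Polynomial ℝ)⟦X⟧) :
    momentS (k + 1) (cS * F) = momentS (k + 1) F + momentS k F := by
  ext n
  simp [momentS, cS, add_mul, add_div]

lemma exists_mul_eq_one {F : (Polynomial ℝ)⟦X⟧} (h : constantCoeff F = 1) : ∃ G, G * F = 1 := by
  have : IsUnit F := isUnit_iff_constantCoeff.2 (by rw [h]; exact isUnit_one)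
  obtain ⟨G, hG⟩ := this.exists_left_inv
  exact ⟨G, hG⟩

open scoped Classical in
lemma exists_generating_function : ∃ E : (Polynomial ℝ)⟦X⟧,
    (∀ n, (∑ σ : Equiv.Perm (Fin (n + 1)),
        if AvoidsD σ then ((1 : Polynomial ℝ) + Polynomial.X) ^ leftPts σ else 0) =
      coeff (n + 1) (liftS hS + E)) ∧
    liftS ((1 - tS) * (1 - zS)) * E
      + liftS ((-(1 - tS) - (1 - zS) - tS * zS * hS) * zS) * (cS * E)
      + liftS (zS * zS) * (cS * (cS * E)) = liftS kS * (cS * 1) := by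
  obtain ⟨y, hy⟩ := exists_mul_eq_one (F := 1 - X * cS) (by simp)
  obtain ⟨r, hr⟩ := exists_mul_eq_one (F := 1 - X * y) (by simp)
  obtain ⟨V, hV⟩ := exists_mul_eq_one (F := (1 - X * cS - X * liftS pS * liftS qS) *
    (1 - X * cS - X) - X * cS * (X * liftS pS) * X * liftS qS * liftS hS) (by simp)
  have hyp : Params X (X * C (1 + Polynomial.X)) (liftS pS) (liftS qS) (liftS hS) y r V := by
    refine ⟨?_, ?_, ?_, hy, hr, ?_⟩
    · rw [← liftS_zS, ← map_one liftS, ← map_sub, ← map_mul, pS_mul]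
    · rw [← liftS_zS, ← map_one liftS, ← map_mul, ← map_pow, ← map_mul, ← map_add, ← qS_eq]
    · rw [← liftS_zS, ← map_one liftS, ← map_mul, ← map_sub, ← map_mul, hS_mul]
    · rw [mul_comm]; exact hV
  refine ⟨X * (X * cS * (X * liftS pS) * X * liftS qS ^ 2 * liftS hS ^ 2 * V), fun n => ?_, ?_⟩
  · rw [sum_pow_leftPts, ← hyp.coeff_sol rfl, cS, ← hyp.sol_nil rfl, (coeff (n + 1)).map_add,
      coeff_succ_X_mul, coeff_one]
    simp
  · simp only [tS, kS, map_mul, map_sub, map_neg, map_one, liftS_zS]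
    linear_combination (X * (X * cS * (X * liftS pS) * X * liftS qS ^ 2 * liftS hS ^ 2)) * hV

open scoped Classical in
lemma sum_choose_leftPts :
    (∀ n, (∑ σ : Equiv.Perm (Fin (n + 1)), if AvoidsD σ then (1 : ℝ) else 0) / 5 ^ (n + 1) =
      coeff (n + 1) (hS + kS * vS)) ∧
    (∀ n, (∑ σ : Equiv.Perm (Fin (n + 1)), if AvoidsD σ then (leftPts σ : ℝ) else 0) / 5 ^ (n + 1) =
      coeff (n + 1) ((kS - bS * (kS * vS)) * vS)) ∧
    (∀ n, (∑ σ : Equiv.Perm (Fin (n + 1)), if AvoidsD σ then ((leftPts σ).choose 2 : ℝ) else 0)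
        / 5 ^ (n + 1) =
      coeff (n + 1) (-(bS * ((kS - bS * (kS * vS)) * vS) + zS * zS * (kS * vS)) * vS)) := by
  obtain ⟨E, hE, hEq⟩ := exists_generating_function
  have hmoment : ∀ k n, (∑ σ : Equiv.Perm (Fin (n + 1)),
      if AvoidsD σ then ((leftPts σ).choose k : ℝ) else 0) / 5 ^ (n + 1) =
        coeff (n + 1) (momentS k (liftS hS * 1 + E)) := by
    intro k n
    rw [mul_one, momentS, coeff_mk, ← hE, Polynomial.finsetSum_coeff]
    congr 1
    refine Finset.sum_congr rfl fun σ _ => ?_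
    split_ifs
    · rw [Polynomial.coeff_one_add_X_pow]
    · simp
  have h0 := congrArg (momentS 0) hEq
  have h1 := congrArg (momentS 1) hEq
  have h2 := congrArg (momentS 2) hEq
  simp only [momentS_add, momentS_liftS_mul, momentS_zero_cS_mul, momentS_zero_one,
    momentS_succ_cS_mul 0, momentS_succ_cS_mul 1, momentS_succ_one 0, momentS_succ_one 1,
    Nat.reduceAdd, zero_add] at h0 h1 h2 hmoment
  have hv := vS_mul
  have hC : (C 2 : ℝ⟦X⟧) = 2 := map_ofNat C 2
  have e0 : momentS 0 E = kS * vS := by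
    linear_combination vS * h0 - momentS 0 E * hv
  have e1 : momentS 1 E = (kS - bS * (kS * vS)) * vS := by
    rw [← e0, bS, hC]
    linear_combination vS * h1 - momentS 1 E * hv
  have e2 : momentS 2 E =
      -(bS * ((kS - bS * (kS * vS)) * vS) + zS * zS * (kS * vS)) * vS := by
    rw [← e1, ← e0, bS, hC]
    linear_combination vS * h2 - momentS 2 E * hv
  refine ⟨fun n => ?_, fun n => ?_, fun n => ?_⟩
  · have := hmoment 0 n
    simpa [momentS_zero_one, e0] using this
  · have := hmoment 1 n
    simpa [momentS_succ_one 0, e1] using this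
  · have := hmoment 2 n
    simpa [momentS_succ_one 1, e2] using this

end Moments

open scoped Classical in
theorem leftPts_mean_variance :
    Tendsto (fun n : ℕ =>
        (∑ σ : Equiv.Perm (Fin n), if AvoidsD σ then (leftPts σ : ℝ) else 0)
          / (dCount n : ℝ))
      atTop (nhds (175 / 132)) ∧
    Tendsto (fun n : ℕ =>
        (∑ σ : Equiv.Perm (Fin n), if AvoidsD σ then (leftPts σ : ℝ) ^ 2 else 0)
            / (dCount n : ℝ)
          - ((∑ σ : Equiv.Perm (Fin n), if AvoidsD σ then (leftPts σ : ℝ) else 0)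
            / (dCount n : ℝ)) ^ 2)
      atTop (nhds (74795 / 17424)) := by
  obtain ⟨l, hl, s0, s1, s2⟩ := exists_hasSing_moments
  obtain ⟨c0, c1, c2⟩ := sum_choose_leftPts
  have hcount : ∀ n, (dCount n : ℝ) =
      ∑ σ : Equiv.Perm (Fin n), if AvoidsD σ then (1 : ℝ) else 0 := by
    intro n
    rw [dCount, Nat.card_eq_fintype_card, Fintype.card_subtype, Finset.sum_boole]
  have hsq : ∀ n, (∑ σ : Equiv.Perm (Fin n), if AvoidsD σ then (leftPts σ : ℝ) ^ 2 else 0) =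
      2 * (∑ σ : Equiv.Perm (Fin n), if AvoidsD σ then ((leftPts σ).choose 2 : ℝ) else 0)
        + ∑ σ : Equiv.Perm (Fin n), if AvoidsD σ then (leftPts σ : ℝ) else 0 := by
    intro n
    rw [Finset.mul_sum, ← Finset.sum_add_distrib]
    refine Finset.sum_congr rfl fun σ _ => ?_
    split_ifs
    · rw [Nat.cast_choose_two]; ring
    · simp
  have hl0 : 120 / 121 * l ≠ 0 := by positivity
  have hmean : Tendsto (fun n : ℕ =>
      (∑ σ : Equiv.Perm (Fin n), if AvoidsD σ then (leftPts σ : ℝ) else 0) / (dCount n : ℝ))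
      atTop (𝓝 (175 / 132)) := by
    have h := s1.lim.div s0.lim hl0
    rw [show 1750 / 1331 * l / (120 / 121 * l) = 175 / 132 by field_simp; norm_num] at h
    refine h.congr' ?_
    filter_upwards [eventually_gt_atTop 0] with n hn
    obtain ⟨n, rfl⟩ := Nat.exists_eq_succ_of_ne_zero hn.ne'
    rw [Pi.div_apply, Nat.succ_eq_add_one, ← c0, ← c1, hcount,
      mul_div_mul_left _ _ (wt_pos hn).ne', div_div_div_cancel_right₀ (by positivity)]
  have hchoose : Tendsto (fun n : ℕ =>
      (∑ σ : Equiv.Perm (Fin n), if AvoidsD σ then ((leftPts σ).choose 2 : ℝ) else 0)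
        / (dCount n : ℝ)) atTop (𝓝 (34300 / 14641 / (120 / 121))) := by
    have h := s2.lim.div s0.lim hl0
    rw [mul_div_mul_right _ _ hl] at h
    refine h.congr' ?_
    filter_upwards [eventually_gt_atTop 0] with n hn
    obtain ⟨n, rfl⟩ := Nat.exists_eq_succ_of_ne_zero hn.ne'
    rw [Pi.div_apply, Nat.succ_eq_add_one, ← c0, ← c2, hcount,
      mul_div_mul_left _ _ (wt_pos hn).ne', div_div_div_cancel_right₀ (by positivity)]
  refine ⟨hmean, ?_⟩
  have h := ((hchoose.const_mul 2).add hmean).sub (hmean.pow 2)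
  convert! h using 2
  · rw [hsq]; ring
  · norm_num
end

section
/- Let h(n) denote the number of permutations of length n avoiding 4213, 2413 and 2143, and let d(n) denote the number of permutations of length n avoiding 4213 and 2143. Then both classes have growth rate 5: h(n)^{1/n} → 5 and d(n)^{1/n} → 5 as n → ∞. -/
open Filter Topology PowerSeries

/-! ### Explicit forms of pattern avoidance -/

lemma strictMono_vec4 {n : ℕ} {i j k l : Fin n} (hij : i < j) (hjk : j < k) (hkl : k < l) :
    StrictMono ![i, j, k, l] := by
  rw [Fin.strictMono_iff_lt_succ]
  intro a
  fin_cases a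
  exacts [hij, hjk, hkl]

lemma contains_p4213_iff {n : ℕ} (σ : Equiv.Perm (Fin n)) :
    PatternContains σ p4213 ↔
      ∃ i j k l, i < j ∧ j < k ∧ k < l ∧ σ k < σ j ∧ σ j < σ l ∧ σ l < σ i := by
  constructor
  · rintro ⟨f, hf, h⟩
    exact ⟨f 0, f 1, f 2, f 3, hf (by decide), hf (by decide), hf (by decide),
      (h 2 1).1 (by decide), (h 1 3).1 (by decide), (h 3 0).1 (by decide)⟩
  · rintro ⟨i, j, k, l, hij, hjk, hkl, h₁, h₂, h₃⟩
    refine ⟨_, strictMono_vec4 hij hjk hkl, fun a b => ?_⟩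
    fin_cases a <;> fin_cases b <;> simp [p4213] <;> order

lemma contains_p2143_iff {n : ℕ} (σ : Equiv.Perm (Fin n)) :
    PatternContains σ p2143 ↔
      ∃ i j k l, i < j ∧ j < k ∧ k < l ∧ σ j < σ i ∧ σ i < σ l ∧ σ l < σ k := by
  constructor
  · rintro ⟨f, hf, h⟩
    exact ⟨f 0, f 1, f 2, f 3, hf (by decide), hf (by decide), hf (by decide),
      (h 1 0).1 (by decide), (h 0 3).1 (by decide), (h 3 2).1 (by decide)⟩
  · rintro ⟨i, j, k, l, hij, hjk, hkl, h₁, h₂, h₃⟩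
    refine ⟨_, strictMono_vec4 hij hjk hkl, fun a b => ?_⟩
    fin_cases a <;> fin_cases b <;> simp [p2143] <;> order

/-! ### Inserting a new minimum -/

/-- The permutation obtained from `π` by inserting a new minimal value at position `s`. -/
def insertMin {n : ℕ} (s : Fin (n + 1)) (π : Equiv.Perm (Fin n)) : Equiv.Perm (Fin (n + 1)) :=
  (finSuccEquiv' s).trans ((Equiv.optionCongr π).trans (finSuccEquiv' 0).symm)

@[simp]
lemma insertMin_self {n : ℕ} (s : Fin (n + 1)) (π : Equiv.Perm (Fin n)) :
    insertMin s π s = 0 := by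
  simp [insertMin]

@[simp]
lemma insertMin_succAbove {n : ℕ} (s : Fin (n + 1)) (π : Equiv.Perm (Fin n)) (i : Fin n) :
    insertMin s π (s.succAbove i) = (π i).succ := by
  simp [insertMin]

lemma insertMin_injective (n : ℕ) :
    Function.Injective fun p : Fin (n + 1) × Equiv.Perm (Fin n) => insertMin p.1 p.2 := by
  rintro ⟨s, π⟩ ⟨u, ρ⟩ h
  simp only at h
  have hs : s = u := by
    apply (insertMin u ρ).injective
    rw [insertMin_self, ← h, insertMin_self]
  subst hs
  congr 1
  ext i
  have := DFunLike.congr_fun h (s.succAbove i)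
  simpa [Fin.ext_iff] using this

lemma insertMin_bijective (n : ℕ) :
    Function.Bijective fun p : Fin (n + 1) × Equiv.Perm (Fin n) => insertMin p.1 p.2 := by
  rw [Fintype.bijective_iff_injective_and_card]
  refine ⟨insertMin_injective n, ?_⟩
  simp [Fintype.card_perm, Nat.factorial_succ]

lemma val_succAbove {n : ℕ} (s : Fin (n + 1)) (i : Fin n) :
    (s.succAbove i : ℕ) = if (i : ℕ) < s then (i : ℕ) else i + 1 := by
  unfold Fin.succAbove
  split_ifs with h h' h' <;> simp_all [Fin.lt_def]

/-- A site `s` (the gap before position `s`) at which a new minimum creates neither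
a 4213 nor a 2143. -/
def MinSite {n : ℕ} (π : Equiv.Perm (Fin n)) (s : ℕ) : Prop :=
  (∀ a b c : Fin n, a < b → (b : ℕ) < s → s ≤ c → ¬ (π b < π c ∧ π c < π a)) ∧
  (∀ a b c : Fin n, (a : ℕ) < s → s ≤ b → b < c → ¬ (π a < π c ∧ π c < π b))

lemma AvoidsD.of_insertMin {n : ℕ} {s : Fin (n + 1)} {π : Equiv.Perm (Fin n)}
    (h : AvoidsD (insertMin s π)) : AvoidsD π := by
  unfold AvoidsD PatternAvoids at *
  rw [contains_p4213_iff, contains_p2143_iff] at *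
  refine ⟨fun ⟨i, j, k, l, h₁, h₂, h₃, h₄, h₅, h₆⟩ => h.1 ?_,
    fun ⟨i, j, k, l, h₁, h₂, h₃, h₄, h₅, h₆⟩ => h.2 ?_⟩ <;>
  exact ⟨s.succAbove i, s.succAbove j, s.succAbove k, s.succAbove l, by simpa, by simpa, by simpa,
    by simpa, by simpa, by simpa⟩

lemma AvoidsD.minSite {n : ℕ} {s : Fin (n + 1)} {π : Equiv.Perm (Fin n)}
    (h : AvoidsD (insertMin s π)) : MinSite π s := by
  unfold AvoidsD PatternAvoids at h
  rw [contains_p4213_iff, contains_p2143_iff] at h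
  refine ⟨fun a b c hab hb hc hp => h.1 ?_, fun a b c ha hb hbc hp => h.2 ?_⟩
  · refine ⟨s.succAbove a, s.succAbove b, s, s.succAbove c, by simpa, ?_, ?_, by simp,
      by simpa using hp.1, by simpa using hp.2⟩ <;> rw [Fin.lt_def, val_succAbove] <;> grind
  · refine ⟨s.succAbove a, s, s.succAbove b, s.succAbove c, ?_, ?_, by simpa, by simp,
      by simpa using hp.1, by simpa using hp.2⟩ <;> rw [Fin.lt_def, val_succAbove] <;> grind

lemma MinSite.of_insertMin {n : ℕ} {s : Fin (n + 1)} {π : Equiv.Perm (Fin n)} {u : ℕ}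
    (h : MinSite (insertMin s π) u) (hu : u ≤ s) : MinSite π u := by
  refine ⟨fun a b c hab hb hc hp => h.1 (s.succAbove a) (s.succAbove b) (s.succAbove c)
    (by simpa) ?_ ?_ (by simpa using hp), fun a b c ha hb hbc hp =>
    h.2 (s.succAbove a) (s.succAbove b) (s.succAbove c) ?_ ?_ (by simpa) (by simpa using hp)⟩ <;>
  rw [val_succAbove] <;> grind

/-! ### Sites of a permutation whose `t` largest values increase -/

/-- The sites to the right of which only the `t` largest values occur. -/
def tailSites {n : ℕ} (t : ℕ) (π : Equiv.Perm (Fin n)) : Finset ℕ :=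
  {s ∈ Finset.range (n + 1) | ∀ i : Fin n, s ≤ i → n ≤ π i + t}

open Classical in
/-- The sites available for a new minimum that are not tail sites. -/
noncomputable def innerSites {n : ℕ} (t : ℕ) (π : Equiv.Perm (Fin n)) : Finset ℕ :=
  {s ∈ Finset.range (n + 1) | MinSite π s ∧ s ∉ tailSites t π}

/-- `σ` avoids 4213 and 2143, its `t` largest values increase, and the next value, if any,
lies to the right of one of them. -/
def TopIncreasing {n : ℕ} (t : ℕ) (σ : Equiv.Perm (Fin n)) : Prop :=
  AvoidsD σ ∧ (∀ i j : Fin n, i < j → n ≤ σ i + t → n ≤ σ j + t → σ i < σ j) ∧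
  (t < n → ∃ a z : Fin n, a < z ∧ n ≤ σ a + t ∧ (σ z : ℕ) + t + 1 = n)

lemma exists_topIncreasing {n : ℕ} {σ : Equiv.Perm (Fin n)} (h : AvoidsD σ) :
    ∃ t ≤ n, TopIncreasing t σ := by
  classical
  let P : ℕ → Prop := fun t => ∀ i j : Fin n, i < j → n ≤ σ i + t → n ≤ σ j + t → σ i < σ j
  have hP : P (Nat.findGreatest P n) :=
    Nat.findGreatest_spec (Nat.zero_le n) fun i j _ hi _ => by have := (σ i).2; omega
  refine ⟨Nat.findGreatest P n, Nat.findGreatest_le n, h, hP, fun hlt => ?_⟩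
  have hnot : ¬ P (Nat.findGreatest P n + 1) :=
    Nat.findGreatest_is_greatest (Nat.lt_succ_self _) hlt
  generalize Nat.findGreatest P n = t at hP hlt hnot
  simp only [P, not_forall, not_lt] at hnot
  obtain ⟨i, j, hij, hi, hj, hle⟩ := hnot
  have hne : σ j ≠ σ i := fun h => hij.ne' (σ.injective h)
  have hlt' : σ j < σ i := lt_of_le_of_ne hle hne
  by_cases hjt : n ≤ σ j + t
  · exact absurd (hP i j hij (by omega) hjt) (not_lt.2 hle)
  · exact ⟨i, j, hij, by omega, by omega⟩

lemma exists_succAbove_of_pos {n : ℕ} {s i : Fin (n + 1)} {π : Equiv.Perm (Fin n)}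
    (h : 0 < (insertMin s π i : ℕ)) : ∃ j, s.succAbove j = i ∧ (insertMin s π i : ℕ) = π j + 1 := by
  have hne : i ≠ s := by
    rintro rfl
    simp at h
  obtain ⟨j, rfl⟩ := Fin.exists_succAbove_eq hne
  exact ⟨j, rfl, by simp⟩

lemma TopIncreasing.of_insertMin {n t : ℕ} {s : Fin (n + 1)} {π : Equiv.Perm (Fin n)}
    (h : TopIncreasing t (insertMin s π)) : TopIncreasing t π := by
  obtain ⟨hD, hinc, hz⟩ := h
  refine ⟨hD.of_insertMin, fun i j hij hi hj => ?_, fun htn => ?_⟩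
  · have := hinc (s.succAbove i) (s.succAbove j) (by simpa)
      (by rw [insertMin_succAbove, Fin.val_succ]; omega)
      (by rw [insertMin_succAbove, Fin.val_succ]; omega)
    simpa using this
  · obtain ⟨a, z, haz, ha, hz⟩ := hz (by omega)
    obtain ⟨a, rfl, ha'⟩ := exists_succAbove_of_pos (s := s) (π := π) (i := a) (by omega)
    obtain ⟨z, rfl, hz'⟩ := exists_succAbove_of_pos (s := s) (π := π) (i := z) (by omega)
    exact ⟨a, z, by simpa using haz, by omega, by omega⟩

section Insertion

variable {n t : ℕ} {s : Fin (n + 1)} {π : Equiv.Perm (Fin n)}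

lemma mem_tailSites_of_insertMin (ht : t ≤ n) {u : ℕ} (hu : u ∈ tailSites t (insertMin s π)) :
    (s : ℕ) < u ∧ u - 1 ∈ tailSites t π := by
  simp only [tailSites, Finset.mem_filter, Finset.mem_range] at hu ⊢
  obtain ⟨hun, hu⟩ := hu
  have hs : (s : ℕ) < u := by
    by_contra! hle
    have := hu s hle
    simp at this
    omega
  refine ⟨hs, by omega, fun i hi => ?_⟩
  have := hu (s.succAbove i) (by rw [val_succAbove]; grind)
  rw [insertMin_succAbove, Fin.val_succ] at this
  omega

lemma mem_tailSites_insertMin (hs : (s : ℕ) ∈ tailSites t π) {u : ℕ} (hsu : (s : ℕ) < u)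
    (hu : u < n + 2) : u ∈ tailSites t (insertMin s π) := by
  simp only [tailSites, Finset.mem_filter, Finset.mem_range] at hs ⊢
  refine ⟨hu, fun i hi => ?_⟩
  have hne : i ≠ s := by rintro rfl; omega
  obtain ⟨j, rfl⟩ := Fin.exists_succAbove_eq hne
  rw [val_succAbove] at hi
  have := hs.2 j (by grind)
  rw [insertMin_succAbove, Fin.val_succ]
  omega

lemma card_tailSites_insertMin_le (ht : t ≤ n) :
    (tailSites t (insertMin s π)).card ≤ {x ∈ tailSites t π | (s : ℕ) ≤ x}.card := by
  apply Finset.card_le_card_of_injOn (fun u => u - 1)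
  · intro u hu
    have := mem_tailSites_of_insertMin ht hu
    simp only [Finset.coe_filter, Set.mem_ofPred_eq]
    exact ⟨this.2, by omega⟩
  · intro u hu v hv huv
    have h₁ := mem_tailSites_of_insertMin ht hu
    have h₂ := mem_tailSites_of_insertMin ht hv
    simp only at huv
    omega

lemma card_innerSites_insertMin_tail (hs : (s : ℕ) ∈ tailSites t π) :
    (innerSites t (insertMin s π)).card ≤
      (innerSites t π).card + {x ∈ tailSites t π | x ≤ (s : ℕ)}.card := by
  refine le_trans (Finset.card_le_card fun u hu => ?_) (Finset.card_union_le _ _)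
  simp only [innerSites, Finset.mem_filter, Finset.mem_range, Finset.mem_union] at hu ⊢
  obtain ⟨hun, hmin, hnt⟩ := hu
  have hus : u ≤ s := by
    by_contra! hlt
    exact hnt (mem_tailSites_insertMin hs hlt hun)
  have := hmin.of_insertMin hus
  have := s.2
  by_cases hut : u ∈ tailSites t π
  · exact Or.inr ⟨hut, hus⟩
  · exact Or.inl ⟨by omega, ‹_›, hut⟩

lemma exists_low_of_not_mem_tailSites {n t : ℕ} {π : Equiv.Perm (Fin n)} {u : ℕ} (hu : u < n + 1)
    (h : u ∉ tailSites t π) : ∃ c : Fin n, u ≤ c ∧ (π c : ℕ) + t < n := by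
  simpa [tailSites, hu] using h

lemma card_innerSites_insertMin_inner (hσ : TopIncreasing t (insertMin s π))
    (hs : (s : ℕ) ∈ innerSites t π) (hpos : 0 < (s : ℕ)) :
    (innerSites t (insertMin s π)).card ≤ {x ∈ innerSites t π | x ≤ (s : ℕ)}.card := by
  refine Finset.card_le_card fun u hu => ?_
  simp only [innerSites, Finset.mem_filter, Finset.mem_range] at hs hu ⊢
  obtain ⟨hun, hmin, hnt⟩ := hu
  obtain ⟨hsn, -, hsnt⟩ := hs
  obtain ⟨e, hse, het⟩ := exists_low_of_not_mem_tailSites hsn hsnt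
  have hus : u ≤ s := by
    by_contra! hlt
    obtain ⟨c, huc, hct⟩ := exists_low_of_not_mem_tailSites hun hnt
    obtain ⟨hD, -, hz⟩ := hσ
    obtain ⟨a, z, haz, ha, hz⟩ := hz (by omega)
    set σ := insertMin s π with hσ
    have hσs : σ s = 0 := insertMin_self s π
    have hzero : ∀ x, x ≠ s → σ s < σ x := fun x hx => by
      rw [hσs, Fin.pos_iff_ne_zero]
      intro h
      exact hx (σ.injective (h.trans hσs.symm))
    have hsa : s < a := by
      by_contra! hle
      have hne : a ≠ s := by
        rintro rfl
        rw [hσs, Fin.val_zero] at ha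
        omega
      exact hmin.1 a s c (lt_of_le_of_ne hle hne) hlt huc
        ⟨hzero c (by rintro rfl; omega), by rw [Fin.lt_def]; omega⟩
    refine hD.2 ((contains_p2143_iff σ).2 ⟨0, s, a, z, ?_, hsa, haz, ?_, ?_, ?_⟩)
    · exact Fin.lt_def.2 (by simpa using hpos)
    · exact hzero 0 (by rintro rfl; simp at hpos)
    · have h0 : (σ 0 : ℕ) + t < n + 1 := by
        by_contra! hge
        exact hmin.1 0 s c (Fin.lt_def.2 (by simpa using hpos)) hlt huc
          ⟨hzero c (by rintro rfl; omega), by rw [Fin.lt_def]; omega⟩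
      have hne : σ 0 ≠ σ z := fun h => by
        have := σ.injective h
        subst this
        exact absurd haz (by simp)
      have : (σ 0 : ℕ) ≠ σ z := fun h => hne (Fin.ext h)
      rw [Fin.lt_def]
      omega
    · rw [Fin.lt_def]
      omega
  refine ⟨⟨by omega, hmin.of_insertMin hus, fun h => ?_⟩, hus⟩
  simp only [tailSites, Finset.mem_filter] at h
  have := h.2 e (by omega)
  omega

lemma card_innerSites_insertMin_zero (hσ : TopIncreasing t (insertMin 0 π)) :
    (innerSites t (insertMin 0 π)).card ≤ 2 := by
  set σ := insertMin 0 π with hσdef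
  have hσ0 : σ 0 = 0 := insertMin_self 0 π
  have huniq : ∀ u ∈ innerSites t σ, ∀ v ∈ innerSites t σ, 0 < u → ¬ u < v := by
    intro u hu v hv hu0 huv
    simp only [innerSites, Finset.mem_filter, Finset.mem_range] at hu hv
    obtain ⟨hun, humin, -⟩ := hu
    obtain ⟨hvn, hvmin, hvt⟩ := hv
    obtain ⟨c, hvc, hct⟩ := exists_low_of_not_mem_tailSites hvn hvt
    obtain ⟨-, -, hz⟩ := hσ
    obtain ⟨a, z, haz, ha, hz⟩ := hz (by omega)
    have hinc : ∀ b d : Fin (n + 1), u ≤ b → b < d → ¬ σ d < σ b := by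
      intro b d hb hbd hlt
      refine humin.2 0 b d (by simpa using hu0) hb hbd ⟨?_, hlt⟩
      rw [hσ0, Fin.pos_iff_ne_zero]
      intro h
      have : d = 0 := σ.injective (h.trans hσ0.symm)
      subst this
      simp at hbd
    have hau : (a : ℕ) < u := by
      by_contra! hle
      exact hinc a z hle haz (by rw [Fin.lt_def]; omega)
    have hun' : u < n + 1 := by omega
    have huc : (⟨u, hun'⟩ : Fin (n + 1)) < c := by rw [Fin.lt_def]; simp only; omega
    refine hvmin.1 a ⟨u, hun'⟩ c (by rw [Fin.lt_def]; exact hau) huv hvc ⟨?_, ?_⟩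
    · exact lt_of_le_of_ne (not_lt.1 (hinc _ c le_rfl huc)) fun h => huc.ne (σ.injective h)
    · rw [Fin.lt_def]
      omega
  have hone : ((innerSites t σ).erase 0).card ≤ 1 := by
    rw [Finset.card_le_one]
    intro u hu v hv
    rw [Finset.mem_erase] at hu hv
    exact le_antisymm (not_lt.1 (huniq v hv.2 u hu.2 (Nat.pos_of_ne_zero hv.1)))
      (not_lt.1 (huniq u hu.2 v hv.2 (Nat.pos_of_ne_zero hu.1)))
  have := Finset.pred_card_le_card_erase (s := innerSites t σ) (a := 0)
  omega

end Insertion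

/-! ### The weight argument -/

lemma sum_pow_card_filter_le (N : Finset ℕ) :
    ∑ s ∈ N, (5 / 3 : ℝ) ^ ({x ∈ N | x ≤ s}.card) = 5 / 2 * ((5 / 3 : ℝ) ^ N.card - 1) := by
  induction N using Finset.induction_on_max with
  | empty => simp
  | insert a N ha ih =>
    have haN : a ∉ N := fun h => lt_irrefl _ (ha a h)
    have h₁ : {x ∈ insert a N | x ≤ a} = insert a N := by
      rw [Finset.filter_eq_self]
      intro x hx
      rcases Finset.mem_insert.1 hx with rfl | hx
      exacts [le_rfl, (ha x hx).le]
    have h₂ : ∀ s ∈ N, {x ∈ insert a N | x ≤ s} = {x ∈ N | x ≤ s} := fun s hs => by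
      rw [Finset.filter_insert, if_neg (not_le.2 (ha s hs))]
    rw [Finset.sum_insert haN, h₁, Finset.card_insert_of_notMem haN,
      Finset.sum_congr rfl fun s hs => by rw [h₂ s hs], ih]
    ring

lemma sum_pow_mul_pow_card_filter (N : Finset ℕ) :
    ∑ s ∈ N, (5 : ℝ) ^ ({x ∈ N | s ≤ x}.card) * (5 / 3 : ℝ) ^ ({x ∈ N | x ≤ s}.card) =
      5 / 2 * (5 ^ N.card - (5 / 3 : ℝ) ^ N.card) := by
  induction N using Finset.induction_on_max with
  | empty => simp
  | insert a N ha ih =>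
    have haN : a ∉ N := fun h => lt_irrefl _ (ha a h)
    have h₁ : {x ∈ insert a N | x ≤ a} = insert a N := by
      rw [Finset.filter_eq_self]
      intro x hx
      rcases Finset.mem_insert.1 hx with rfl | hx
      exacts [le_rfl, (ha x hx).le]
    have h₂ : ∀ s ∈ N, {x ∈ insert a N | x ≤ s} = {x ∈ N | x ≤ s} := fun s hs => by
      rw [Finset.filter_insert, if_neg (not_le.2 (ha s hs))]
    have h₃ : {x ∈ insert a N | a ≤ x} = {a} := by
      rw [Finset.filter_insert, if_pos le_rfl, Finset.filter_eq_empty_iff.2 fun x hx =>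
        not_le.2 (ha x hx)]
      rfl
    have h₄ : ∀ s ∈ N, {x ∈ insert a N | s ≤ x}.card = {x ∈ N | s ≤ x}.card + 1 := fun s hs => by
      rw [Finset.filter_insert, if_pos (ha s hs).le,
        Finset.card_insert_of_notMem fun h => haN (Finset.mem_filter.1 h).1]
    have h₅ : ∀ s ∈ N, (5 : ℝ) ^ ({x ∈ insert a N | s ≤ x}.card) *
          (5 / 3 : ℝ) ^ ({x ∈ insert a N | x ≤ s}.card) =
        5 * ((5 : ℝ) ^ ({x ∈ N | s ≤ x}.card) * (5 / 3 : ℝ) ^ ({x ∈ N | x ≤ s}.card)) :=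
      fun s hs => by rw [h₂ s hs, h₄ s hs]; ring
    rw [Finset.sum_insert haN, h₁, h₃, Finset.card_insert_of_notMem haN, Finset.sum_congr rfl h₅,
      ← Finset.mul_sum, ih, Finset.card_singleton]
    ring

/-- The weight controlling the number of ways to extend `π` by smaller values. -/
noncomputable def siteWeight {n : ℕ} (t : ℕ) (π : Equiv.Perm (Fin n)) : ℝ :=
  5 ^ (tailSites t π).card * (5 / 3) ^ (innerSites t π).card

lemma one_le_siteWeight {n : ℕ} (t : ℕ) (π : Equiv.Perm (Fin n)) : 1 ≤ siteWeight t π :=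
  one_le_mul_of_one_le_of_one_le (one_le_pow₀ (by norm_num)) (one_le_pow₀ (by norm_num))

lemma pow_mul_pow_le {a b c d : ℕ} (h₁ : a ≤ b) (h₂ : c ≤ d) :
    (5 : ℝ) ^ a * (5 / 3) ^ c ≤ 5 ^ b * (5 / 3) ^ d :=
  mul_le_mul (pow_le_pow_right₀ (by norm_num) h₁) (pow_le_pow_right₀ (by norm_num) h₂)
    (by positivity) (by positivity)

open Classical in
lemma sum_siteWeight_insertMin_le {n t : ℕ} (ht : t ≤ n) (π : Equiv.Perm (Fin n)) :
    ∑ s : Fin (n + 1) with TopIncreasing t (insertMin s π), siteWeight t (insertMin s π) ≤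
      5 * siteWeight t π := by
  set T := tailSites t π with hT
  set N := innerSites t π with hN
  let bound : ℕ → ℝ := fun s =>
    if s ∈ T then 5 ^ {x ∈ T | s ≤ x}.card * (5 / 3) ^ (N.card + {x ∈ T | x ≤ s}.card)
    else 5 ^ T.card * ((5 / 3) ^ {x ∈ N | x ≤ s}.card + if s = 0 then 10 / 9 else 0)
  have hdisj : Disjoint T N := Finset.disjoint_right.2 fun s hs => by
    simp only [hN, innerSites, Finset.mem_filter] at hs
    exact hs.2.2
  have hbound_nonneg : ∀ s, 0 ≤ bound s := fun s => by
    simp only [bound]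
    split_ifs <;> positivity
  have hle : ∀ s : Fin (n + 1), TopIncreasing t (insertMin s π) →
      (s : ℕ) ∈ T ∪ N ∧ siteWeight t (insertMin s π) ≤ bound s := by
    intro s hs
    by_cases hsT : (s : ℕ) ∈ T
    · refine ⟨Finset.mem_union_left _ hsT, ?_⟩
      simp only [bound, if_pos hsT]
      exact pow_mul_pow_le (card_tailSites_insertMin_le ht) (card_innerSites_insertMin_tail hsT)
    · have hsN : (s : ℕ) ∈ N := by
        simp only [hN, innerSites, Finset.mem_filter, Finset.mem_range]
        exact ⟨s.2, hs.1.minSite, hsT⟩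
      refine ⟨Finset.mem_union_right _ hsN, ?_⟩
      have htail : (tailSites t (insertMin s π)).card ≤ T.card :=
        (card_tailSites_insertMin_le ht).trans (Finset.card_filter_le _ _)
      simp only [bound, if_neg hsT]
      by_cases h0 : (s : ℕ) = 0
      · have hs0 : s = 0 := Fin.ext h0
        subst hs0
        have hcard : {x ∈ N | x ≤ 0}.card = 1 := by
          rw [Finset.card_eq_one]
          refine ⟨0, ?_⟩
          ext x
          simp only [Finset.mem_filter, Finset.mem_singleton]
          constructor
          · intro h; omega
          · rintro rfl; exact ⟨by simpa using hsN, le_rfl⟩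
        have := pow_mul_pow_le htail (card_innerSites_insertMin_zero hs)
        rw [Fin.val_zero, hcard, if_pos rfl]
        refine this.trans (le_of_eq ?_)
        norm_num
      · rw [if_neg h0, add_zero]
        exact pow_mul_pow_le htail
          (card_innerSites_insertMin_inner hs hsN (Nat.pos_of_ne_zero h0))
  calc ∑ s : Fin (n + 1) with TopIncreasing t (insertMin s π), siteWeight t (insertMin s π)
      ≤ ∑ s : Fin (n + 1) with TopIncreasing t (insertMin s π), bound s :=
        Finset.sum_le_sum fun s hs => (hle s (Finset.mem_filter.1 hs).2).2
    _ = ∑ s ∈ ({s : Fin (n + 1) | TopIncreasing t (insertMin s π)} : Finset _).map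
          Fin.valEmbedding, bound s := by rw [Finset.sum_map]; rfl
    _ ≤ ∑ s ∈ T ∪ N, bound s := by
        refine Finset.sum_le_sum_of_subset_of_nonneg (fun s hs => ?_) fun s _ _ => hbound_nonneg s
        obtain ⟨u, hu, rfl⟩ := Finset.mem_map.1 hs
        exact (hle u (Finset.mem_filter.1 hu).2).1
    _ = ∑ s ∈ T, bound s + ∑ s ∈ N, bound s := Finset.sum_union hdisj
    _ ≤ 5 / 2 * (5 ^ T.card * (5 / 3) ^ N.card) + 5 / 2 * (5 ^ T.card * (5 / 3) ^ N.card) := by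
        apply add_le_add
        · have : ∀ s ∈ T, bound s = (5 / 3) ^ N.card *
              ((5 : ℝ) ^ ({x ∈ T | s ≤ x}.card) * (5 / 3 : ℝ) ^ ({x ∈ T | x ≤ s}.card)) := by
            intro s hs
            simp only [bound, if_pos hs]
            ring
          rw [Finset.sum_congr rfl this, ← Finset.mul_sum, sum_pow_mul_pow_card_filter]
          have : (0 : ℝ) ≤ (5 / 3) ^ N.card * (5 / 3) ^ T.card := by positivity
          linarith
        · have : ∀ s ∈ N, bound s = 5 ^ T.card *
              ((5 / 3 : ℝ) ^ ({x ∈ N | x ≤ s}.card) + if s = 0 then 10 / 9 else 0) := by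
            intro s hs
            simp only [bound, if_neg (Finset.disjoint_right.1 hdisj hs)]
          rw [Finset.sum_congr rfl this, ← Finset.mul_sum, Finset.sum_add_distrib,
            sum_pow_card_filter_le, Finset.sum_ite_eq']
          have h₁ : (if 0 ∈ N then (10 / 9 : ℝ) else 0) ≤ 5 / 2 := by split_ifs <;> norm_num
          have h₂ : (0 : ℝ) ≤ 5 ^ T.card := by positivity
          nlinarith [mul_le_mul_of_nonneg_left h₁ h₂]
    _ = 5 * siteWeight t π := by
        rw [siteWeight]
        ring

open Classical in
lemma sum_siteWeight_le (t m : ℕ) :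
    ∑ σ : Equiv.Perm (Fin (t + m)) with TopIncreasing t σ, siteWeight t σ ≤ 5 ^ (t + m + 1) := by
  induction m with
  | zero =>
    have hcard : ({σ : Equiv.Perm (Fin (t + 0)) | TopIncreasing t σ} : Finset _).card ≤ 1 := by
      rw [Finset.card_le_one]
      intro σ hσ τ hτ
      have hmono : ∀ ρ : Equiv.Perm (Fin (t + 0)), TopIncreasing t ρ → StrictMono ρ :=
        fun ρ hρ i j hij => hρ.2.1 i j hij (by omega) (by omega)
      apply DFunLike.coe_injective
      exact (StrictMono.range_inj (hmono σ (Finset.mem_filter.1 hσ).2)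
        (hmono τ (Finset.mem_filter.1 hτ).2)).1 (by simp)
    have hweight : ∀ σ : Equiv.Perm (Fin (t + 0)), siteWeight t σ ≤ 5 ^ (t + 0 + 1) := by
      intro σ
      have htail : tailSites t σ = Finset.range (t + 0 + 1) := by
        rw [tailSites, Finset.filter_eq_self]
        intros
        omega
      have hinner : innerSites t σ = ∅ := by
        rw [innerSites, htail, Finset.filter_eq_empty_iff]
        intro s hs
        simp [hs]
      rw [siteWeight, htail, hinner]
      simp
    calc _ ≤ ∑ σ : Equiv.Perm (Fin (t + 0)) with TopIncreasing t σ, (5 : ℝ) ^ (t + 0 + 1) :=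
          Finset.sum_le_sum fun σ _ => hweight σ
      _ = ({σ : Equiv.Perm (Fin (t + 0)) | TopIncreasing t σ} : Finset _).card *
          (5 : ℝ) ^ (t + 0 + 1) := by rw [Finset.sum_const, nsmul_eq_mul]
      _ ≤ 1 * (5 : ℝ) ^ (t + 0 + 1) := by
          gcongr
          exact_mod_cast hcard
      _ = _ := one_mul _
  | succ m ih =>
    calc ∑ σ : Equiv.Perm (Fin (t + m + 1)) with TopIncreasing t σ, siteWeight t σ
        = ∑ p : Fin (t + m + 1) × Equiv.Perm (Fin (t + m)),
            if TopIncreasing t (insertMin p.1 p.2) then siteWeight t (insertMin p.1 p.2) else 0 := by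
          rw [Finset.sum_filter]
          exact ((insertMin_bijective (t + m)).sum_comp fun σ =>
            if TopIncreasing t σ then siteWeight t σ else 0).symm
      _ = ∑ π : Equiv.Perm (Fin (t + m)),
            ∑ s : Fin (t + m + 1) with TopIncreasing t (insertMin s π),
              siteWeight t (insertMin s π) := by
          rw [Fintype.sum_prod_type_right]
          simp_rw [Finset.sum_filter]
      _ = ∑ π : Equiv.Perm (Fin (t + m)) with TopIncreasing t π,
            ∑ s : Fin (t + m + 1) with TopIncreasing t (insertMin s π),
              siteWeight t (insertMin s π) := by
          symm
          apply Finset.sum_subset (Finset.filter_subset _ _)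
          intro π _ hπ
          rw [Finset.filter_eq_empty_iff.2, Finset.sum_empty]
          intro s _ hs
          exact hπ (Finset.mem_filter.2 ⟨Finset.mem_univ _, hs.of_insertMin⟩)
      _ ≤ ∑ π : Equiv.Perm (Fin (t + m)) with TopIncreasing t π, 5 * siteWeight t π :=
          Finset.sum_le_sum fun π _ => sum_siteWeight_insertMin_le (by omega) π
      _ = 5 * ∑ π : Equiv.Perm (Fin (t + m)) with TopIncreasing t π, siteWeight t π := by
          rw [Finset.mul_sum]
      _ ≤ 5 * 5 ^ (t + m + 1) := by gcongr
      _ = 5 ^ (t + (m + 1) + 1) := by ring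

open Classical in
lemma dCount_le (n : ℕ) : dCount n ≤ (n + 1) * 5 ^ (n + 1) := by
  have hcard : ∀ t ∈ Finset.range (n + 1),
      ({σ : Equiv.Perm (Fin n) | TopIncreasing t σ} : Finset _).card ≤ 5 ^ (n + 1) := by
    intro t ht
    obtain ⟨m, rfl⟩ := Nat.exists_eq_add_of_le (Nat.lt_succ_iff.1 (Finset.mem_range.1 ht))
    have h := sum_siteWeight_le t m
    have h' : (({σ : Equiv.Perm (Fin (t + m)) | TopIncreasing t σ} : Finset _).card : ℝ) ≤
        ∑ σ : Equiv.Perm (Fin (t + m)) with TopIncreasing t σ, siteWeight t σ := by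
      rw [Finset.card_eq_sum_ones, Nat.cast_sum]
      exact Finset.sum_le_sum fun σ _ => by simpa using one_le_siteWeight t σ
    exact_mod_cast h'.trans h
  rw [dCount, Nat.card_eq_fintype_card, Fintype.card_subtype]
  calc _ ≤ ((Finset.range (n + 1)).biUnion fun t =>
        ({σ : Equiv.Perm (Fin n) | TopIncreasing t σ} : Finset _)).card := by
        refine Finset.card_le_card fun σ hσ => ?_
        obtain ⟨t, ht, h⟩ := exists_topIncreasing (Finset.mem_filter.1 hσ).2
        exact Finset.mem_biUnion.2 ⟨t, Finset.mem_range.2 (by omega), by simpa using h⟩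
    _ ≤ (Finset.range (n + 1)).card * 5 ^ (n + 1) := Finset.card_biUnion_le_card_mul _ _ _ hcard
    _ = _ := by rw [Finset.card_range]

/-! ### Counting 213-avoiders from below -/

/-- `σ` avoids 213. -/
def Avoids213 {n : ℕ} (σ : Equiv.Perm (Fin n)) : Prop :=
  ∀ i j k : Fin n, i < j → j < k → ¬ (σ j < σ i ∧ σ i < σ k)

/-- The skew sum: a copy of `α` above and to the left of a copy of `β`. -/
def skewSum {a b : ℕ} (α : Equiv.Perm (Fin a)) (β : Equiv.Perm (Fin b)) :
    Equiv.Perm (Fin (a + b)) :=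
  finSumFinEquiv.symm.trans ((Equiv.sumCongr α β).trans
    ((Equiv.sumComm _ _).trans (finSumFinEquiv.trans (finCongr (add_comm b a)))))

@[simp]
lemma val_skewSum_castAdd {a b : ℕ} (α : Equiv.Perm (Fin a)) (β : Equiv.Perm (Fin b))
    (i : Fin a) : (skewSum α β (Fin.castAdd b i) : ℕ) = b + α i := by
  simp [skewSum, add_comm]

@[simp]
lemma val_skewSum_natAdd {a b : ℕ} (α : Equiv.Perm (Fin a)) (β : Equiv.Perm (Fin b))
    (j : Fin b) : (skewSum α β (Fin.natAdd a j) : ℕ) = β j := by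
  simp [skewSum]

lemma skewSum_injective (a b : ℕ) :
    Function.Injective fun p : Equiv.Perm (Fin a) × Equiv.Perm (Fin b) => skewSum p.1 p.2 := by
  rintro ⟨α, β⟩ ⟨α', β'⟩ h
  simp only at h
  congr 1
  · ext i
    have := congrArg Fin.val (DFunLike.congr_fun h (Fin.castAdd b i))
    simpa using this
  · ext j
    have := congrArg Fin.val (DFunLike.congr_fun h (Fin.natAdd a j))
    simpa using this

lemma skewSum_lt {a b : ℕ} (α : Equiv.Perm (Fin a)) (β : Equiv.Perm (Fin b))
    (i j : Fin (a + b)) (hi : (i : ℕ) < a) (hj : a ≤ (j : ℕ)) : skewSum α β j < skewSum α β i := by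
  induction i using Fin.addCases with
  | right i => simp at hi
  | left i =>
    induction j using Fin.addCases with
    | left j => exact absurd hj (by simp)
    | right j =>
      rw [Fin.lt_def]
      simp only [val_skewSum_castAdd, val_skewSum_natAdd]
      omega

lemma Avoids213.skewSum {a b : ℕ} {α : Equiv.Perm (Fin a)} {β : Equiv.Perm (Fin b)}
    (hα : Avoids213 α) (hβ : Avoids213 β) : Avoids213 (skewSum α β) := by
  intro i j k hij hjk ⟨h₁, h₂⟩
  have hcross := skewSum_lt α β
  have hik : (k : ℕ) < a ∨ a ≤ (i : ℕ) := by
    by_contra! h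
    exact absurd h₂ (not_lt.2 (hcross i k h.2 h.1).le)
  rcases hik with h | h
  · obtain ⟨i, rfl⟩ : ∃ i', i = Fin.castAdd b i' := ⟨⟨i, by omega⟩, rfl⟩
    obtain ⟨j, rfl⟩ : ∃ j', j = Fin.castAdd b j' := ⟨⟨j, by omega⟩, rfl⟩
    obtain ⟨k, rfl⟩ : ∃ k', k = Fin.castAdd b k' := ⟨⟨k, by omega⟩, rfl⟩
    rw [Fin.lt_def, val_skewSum_castAdd, val_skewSum_castAdd] at h₁ h₂
    exact hα i j k hij hjk ⟨by rw [Fin.lt_def]; omega, by rw [Fin.lt_def]; omega⟩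
  · have hlift : ∀ x : Fin (a + b), a ≤ (x : ℕ) → ∃ y, x = Fin.natAdd a y := fun x hx =>
      ⟨⟨x - a, by omega⟩, Fin.ext (by simp; omega)⟩
    obtain ⟨i, rfl⟩ := hlift i h
    obtain ⟨j, rfl⟩ := hlift j (by omega)
    obtain ⟨k, rfl⟩ := hlift k (by omega)
    rw [Fin.lt_def, val_skewSum_natAdd, val_skewSum_natAdd] at h₁ h₂
    exact hβ i j k (by simpa using hij) (by simpa using hjk) ⟨h₁, h₂⟩

lemma Avoids213.insertMin {n : ℕ} {s : Fin (n + 1)} {π : Equiv.Perm (Fin n)} (hπ : Avoids213 π)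
    (hs : ∀ i j : Fin n, (i : ℕ) < s → (s : ℕ) ≤ j → π j < π i) : Avoids213 (insertMin s π) := by
  intro i j k hij hjk ⟨h₁, h₂⟩
  have hi : i ≠ s := by
    rintro rfl
    simp at h₁
  have hk : k ≠ s := by
    rintro rfl
    simp at h₂
  obtain ⟨i, rfl⟩ := Fin.exists_succAbove_eq hi
  obtain ⟨k, rfl⟩ := Fin.exists_succAbove_eq hk
  rw [insertMin_succAbove, insertMin_succAbove, Fin.succ_lt_succ_iff] at h₂
  by_cases hj : j = s
  · subst hj
    rw [Fin.lt_def, val_succAbove] at hij hjk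
    exact absurd h₂ (not_lt.2 (hs i k (by grind) (by grind)).le)
  · obtain ⟨j, rfl⟩ := Fin.exists_succAbove_eq hj
    rw [insertMin_succAbove, insertMin_succAbove, Fin.succ_lt_succ_iff] at h₁
    exact hπ i j k (by simpa using hij) (by simpa using hjk) ⟨h₁, h₂⟩

open Classical in
lemma card_avoids213_mul_le (a b : ℕ) :
    ({α : Equiv.Perm (Fin a) | Avoids213 α} : Finset _).card *
      ({β : Equiv.Perm (Fin b) | Avoids213 β} : Finset _).card ≤
    ({π : Equiv.Perm (Fin (a + b)) |
      Avoids213 (insertMin ⟨a, by omega⟩ π)} : Finset _).card := by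
  rw [← Finset.card_product]
  apply Finset.card_le_card_of_injOn _ _ (skewSum_injective a b).injOn
  rintro ⟨α, β⟩ h
  simp only [Finset.coe_product, Finset.coe_filter, Finset.mem_univ, true_and, Set.mem_prod,
    Set.mem_ofPred_eq] at h ⊢
  exact (h.1.skewSum h.2).insertMin (skewSum_lt α β)

open Classical in
lemma catalan_le_card_avoids213 (n : ℕ) :
    catalan n ≤ ({σ : Equiv.Perm (Fin n) | Avoids213 σ} : Finset _).card := by
  induction n using Nat.strong_induction_on with
  | h n ih =>
  cases n with
  | zero =>
    rw [catalan_zero, Nat.one_le_iff_ne_zero, Finset.card_ne_zero]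
    exact ⟨1, Finset.mem_filter.2 ⟨Finset.mem_univ _, fun i => i.elim0⟩⟩
  | succ n =>
    rw [catalan_succ]
    calc ∑ s : Fin n.succ, catalan s * catalan (n - s)
        ≤ ∑ s : Fin (n + 1),
            ({π : Equiv.Perm (Fin n) | Avoids213 (insertMin s π)} : Finset _).card := by
          refine Finset.sum_le_sum fun s _ => ?_
          obtain ⟨a, ha⟩ := s
          obtain ⟨b, rfl⟩ := Nat.exists_eq_add_of_le (Nat.lt_succ_iff.1 ha)
          rw [Nat.add_sub_cancel_left]
          exact (Nat.mul_le_mul (ih a ha) (ih b (by omega))).trans (card_avoids213_mul_le a b)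
      _ = ({p : Fin (n + 1) × Equiv.Perm (Fin n) |
            Avoids213 (insertMin p.1 p.2)} : Finset _).card := by
          simp_rw [Finset.card_filter]
          rw [Fintype.sum_prod_type]
      _ ≤ _ := by
          apply Finset.card_le_card_of_injOn _ _ (insertMin_injective n).injOn
          intro p hp
          simpa using hp

/-! ### Placing an increasing sequence above a 213-avoider -/

/-- The permutation with the pattern `π` on the positions in `S` and, above it, an increasing
sequence on the remaining positions. -/
def placeBelow {n k : ℕ} {S : Finset (Fin n)} (hS : S.card = k) (π : Equiv.Perm (Fin k)) :
    Equiv.Perm (Fin n) :=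
  (finSumEquivOfFinset hS (by rw [Finset.card_compl, Fintype.card_fin, hS])).symm.trans
    ((Equiv.sumCongr π (Equiv.refl (Fin (n - k)))).trans (finSumFinEquiv.trans
      (finCongr (Nat.add_sub_of_le (hS ▸ card_finset_fin_le S)))))

section PlaceBelow

variable {n k : ℕ} {S : Finset (Fin n)} (hS : S.card = k) (π : Equiv.Perm (Fin k))

@[simp]
lemma val_placeBelow_orderEmbOfFin (i : Fin k) :
    (placeBelow hS π (S.orderEmbOfFin hS i) : ℕ) = π i := by
  have hc : Sᶜ.card = n - k := by rw [Finset.card_compl, Fintype.card_fin, hS]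
  rw [← finSumEquivOfFinset_inl hS hc]
  simp [placeBelow, -finSumEquivOfFinset_inl]

lemma val_placeBelow_compl (hc : Sᶜ.card = n - k) (i : Fin (n - k)) :
    (placeBelow hS π (Sᶜ.orderEmbOfFin hc i) : ℕ) = k + i := by
  rw [← finSumEquivOfFinset_inr hS hc]
  simp [placeBelow, -finSumEquivOfFinset_inr]

lemma exists_orderEmbOfFin_eq {i : Fin n} (hi : i ∈ S) : ∃ x, S.orderEmbOfFin hS x = i := by
  have : i ∈ Set.range (S.orderEmbOfFin hS) := by simpa using hi
  exact this

lemma val_placeBelow_lt_iff (i : Fin n) : (placeBelow hS π i : ℕ) < k ↔ i ∈ S := by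
  by_cases hi : i ∈ S
  · obtain ⟨x, rfl⟩ := exists_orderEmbOfFin_eq hS hi
    simp
  · have hc : Sᶜ.card = n - k := by rw [Finset.card_compl, Fintype.card_fin, hS]
    obtain ⟨x, rfl⟩ := exists_orderEmbOfFin_eq hc (Finset.mem_compl.2 hi)
    simp [val_placeBelow_compl, hi]

lemma placeBelow_lt_of_not_mem {i j : Fin n} (hi : i ∉ S) (hj : j ∉ S) (hij : i < j) :
    placeBelow hS π i < placeBelow hS π j := by
  have hc : Sᶜ.card = n - k := by rw [Finset.card_compl, Fintype.card_fin, hS]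
  obtain ⟨x, rfl⟩ := exists_orderEmbOfFin_eq hc (Finset.mem_compl.2 hi)
  obtain ⟨y, rfl⟩ := exists_orderEmbOfFin_eq hc (Finset.mem_compl.2 hj)
  rw [Fin.lt_def, val_placeBelow_compl, val_placeBelow_compl]
  have : x < y := by simpa using hij
  omega

variable {π}

lemma not_213_placeBelow (hπ : Avoids213 π) {x y z w : Fin n}
    (hxy : x < y) (hyz : y < z) (hwz : w < z)
    (h₁ : placeBelow hS π y < placeBelow hS π x) (h₂ : placeBelow hS π x < placeBelow hS π z)
    (h₃ : placeBelow hS π z < placeBelow hS π w) : False := by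
  have hz : z ∈ S := by
    by_contra hz
    have hw : w ∉ S := by
      have := (val_placeBelow_lt_iff hS π z).not.2 hz
      rw [← val_placeBelow_lt_iff hS π]
      omega
    exact absurd h₃ (not_lt.2 (placeBelow_lt_of_not_mem hS π hw hz hwz).le)
  have hzk := (val_placeBelow_lt_iff hS π z).2 hz
  have hx : x ∈ S := (val_placeBelow_lt_iff hS π x).1 (by omega)
  have hy : y ∈ S := (val_placeBelow_lt_iff hS π y).1 (by omega)
  obtain ⟨x, rfl⟩ := exists_orderEmbOfFin_eq hS hx
  obtain ⟨y, rfl⟩ := exists_orderEmbOfFin_eq hS hy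
  obtain ⟨z, rfl⟩ := exists_orderEmbOfFin_eq hS hz
  rw [Fin.lt_def, val_placeBelow_orderEmbOfFin, val_placeBelow_orderEmbOfFin] at h₁ h₂
  exact hπ x y z (by simpa using hxy) (by simpa using hyz) ⟨h₁, h₂⟩

lemma avoidsH_placeBelow (hπ : Avoids213 π) : AvoidsH (placeBelow hS π) := by
  refine ⟨?_, ?_, ?_⟩ <;> rintro ⟨f, hf, h⟩
  · exact not_213_placeBelow hS hπ (x := f 1) (y := f 2) (z := f 3) (w := f 0) (hf (by decide))
      (hf (by decide)) (hf (by decide)) ((h 2 1).1 (by decide)) ((h 1 3).1 (by decide))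
      ((h 3 0).1 (by decide))
  · exact not_213_placeBelow hS hπ (x := f 0) (y := f 2) (z := f 3) (w := f 1) (hf (by decide))
      (hf (by decide)) (hf (by decide)) ((h 2 0).1 (by decide)) ((h 0 3).1 (by decide))
      ((h 3 1).1 (by decide))
  · exact not_213_placeBelow hS hπ (x := f 0) (y := f 1) (z := f 3) (w := f 2) (hf (by decide))
      (hf (by decide)) (hf (by decide)) ((h 1 0).1 (by decide)) ((h 0 3).1 (by decide))
      ((h 3 2).1 (by decide))

end PlaceBelow

lemma placeBelow_injective (n k : ℕ) :
    Function.Injective fun p : {S : Finset (Fin n) // S.card = k} × Equiv.Perm (Fin k) =>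
      placeBelow p.1.2 p.2 := by
  rintro ⟨⟨S, hS⟩, π⟩ ⟨⟨S', hS'⟩, π'⟩ h
  simp only at h
  have hSS : S = S' := by
    ext i
    rw [← val_placeBelow_lt_iff hS π, h, val_placeBelow_lt_iff hS' π']
  subst hSS
  congr 1
  ext i
  rw [← val_placeBelow_orderEmbOfFin hS π, h, val_placeBelow_orderEmbOfFin]

open Classical in
lemma choose_mul_catalan_le_hCount (n k : ℕ) : n.choose k * catalan k ≤ hCount n := by
  rw [hCount, Nat.card_eq_fintype_card]
  calc n.choose k * catalan k
      ≤ Fintype.card ({S : Finset (Fin n) // S.card = k} ×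
          {π : Equiv.Perm (Fin k) // Avoids213 π}) := by
        rw [Fintype.card_prod, Fintype.card_finset_len, Fintype.card_fin, Fintype.card_subtype]
        exact Nat.mul_le_mul_left _ (catalan_le_card_avoids213 k)
    _ ≤ _ := by
        refine Fintype.card_le_of_injective
          (fun p => ⟨placeBelow p.1.2 p.2.1, avoidsH_placeBelow p.1.2 p.2.2⟩) ?_
        rintro ⟨S, π⟩ ⟨S', π'⟩ h
        have := @placeBelow_injective n k (S, π.1) (S', π'.1) (congrArg Subtype.val h)
        rw [Prod.mk.injEq] at this ⊢
        exact ⟨this.1, Subtype.ext this.2⟩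

lemma four_pow_le_catalan (k : ℕ) : 4 ^ k ≤ 2 * (k + 1) ^ 2 * catalan k := by
  have hC := succ_mul_catalan_eq_centralBinom k
  rcases Nat.eq_zero_or_pos k with rfl | hk
  · simp
  · calc 4 ^ k ≤ 2 * k * k.centralBinom := Nat.four_pow_le_two_mul_self_mul_centralBinom k hk
      _ = 2 * k * ((k + 1) * catalan k) := by rw [hC]
      _ ≤ 2 * (k + 1) * ((k + 1) * catalan k) := by gcongr; omega
      _ = _ := by ring

lemma five_pow_le_hCount (n : ℕ) : 5 ^ n ≤ 2 * (n + 1) ^ 3 * hCount n := by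
  calc 5 ^ n = ∑ k ∈ Finset.range (n + 1), 4 ^ k * 1 ^ (n - k) * n.choose k := by
        simpa using add_pow (4 : ℕ) 1 n
    _ ≤ ∑ k ∈ Finset.range (n + 1), 2 * (n + 1) ^ 2 * hCount n := by
        refine Finset.sum_le_sum fun k hk => ?_
        have hkn : k ≤ n := Nat.lt_succ_iff.1 (Finset.mem_range.1 hk)
        calc 4 ^ k * 1 ^ (n - k) * n.choose k = 4 ^ k * n.choose k := by simp
          _ ≤ 2 * (k + 1) ^ 2 * catalan k * n.choose k := by
              gcongr
              exact four_pow_le_catalan k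
          _ = 2 * (k + 1) ^ 2 * (n.choose k * catalan k) := by ring
          _ ≤ 2 * (n + 1) ^ 2 * hCount n := by
              gcongr
              exact choose_mul_catalan_le_hCount n k
    _ = 2 * (n + 1) ^ 3 * hCount n := by
        rw [Finset.sum_const, Finset.card_range, smul_eq_mul]
        ring

/-! ### Growth rates -/

open Classical in
lemma hCount_le_dCount (n : ℕ) : hCount n ≤ dCount n := by
  rw [hCount, dCount, Nat.card_eq_fintype_card, Nat.card_eq_fintype_card]
  exact Fintype.card_subtype_mono _ _ fun σ h => ⟨h.1, h.2.2⟩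

lemma tendsto_rpow_of_polynomial_bounds {a : ℕ → ℕ}
    (hlow : ∀ n, 5 ^ n ≤ 2 * (n + 1) ^ 3 * a n) (hup : ∀ n, a n ≤ (n + 1) * 5 ^ (n + 1)) :
    Tendsto (fun n : ℕ => (a n : ℝ) ^ (1 / (n : ℝ))) atTop (nhds 5) := by
  have hpoly : Tendsto (fun n : ℕ => ((n : ℝ) + 1) ^ (4 / (n : ℝ))) atTop (nhds 1) := by
    have h := (tendsto_rpow_div_mul_add 4 1 (-1) (by norm_num)).comp
      (tendsto_atTop_add_const_right atTop (1 : ℝ) tendsto_natCast_atTop_atTop)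
    refine h.congr fun n => ?_
    simp
  have hroot : ∀ n : ℕ, n ≠ 0 → ((5 : ℝ) ^ n) ^ (1 / (n : ℝ)) = 5 := fun n hn => by
    rw [one_div, Real.pow_rpow_inv_natCast (by norm_num) hn]
  have hpow : ∀ n : ℕ, (((n : ℝ) + 1) ^ 4) ^ (1 / (n : ℝ)) = ((n : ℝ) + 1) ^ (4 / (n : ℝ)) :=
    fun n => by
      rw [← Real.rpow_natCast, ← Real.rpow_mul (by positivity)]
      congr 1
      push_cast
      ring
  have hlower : Tendsto (fun n : ℕ => 5 / ((n : ℝ) + 1) ^ (4 / (n : ℝ))) atTop (nhds 5) := by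
    simpa [Pi.div_def] using (tendsto_const_nhds (x := (5 : ℝ))).div hpoly one_ne_zero
  have hupper : Tendsto (fun n : ℕ => ((n : ℝ) + 1) ^ (4 / (n : ℝ)) * 5) atTop (nhds 5) := by
    simpa using hpoly.mul_const 5
  refine tendsto_of_tendsto_of_tendsto_of_le_of_le' hlower hupper ?_ ?_
  · filter_upwards [eventually_ge_atTop 4] with n hn
    have h : (5 : ℝ) ^ n ≤ ((n : ℝ) + 1) ^ 4 * a n := by
      have : 5 ^ n ≤ (n + 1) ^ 4 * a n := (hlow n).trans <| by
        rw [pow_succ' (n + 1) 3]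
        gcongr
        omega
      exact_mod_cast this
    have h' := Real.rpow_le_rpow (by positivity) h (by positivity : 0 ≤ 1 / (n : ℝ))
    rw [hroot n (by omega), Real.mul_rpow (by positivity) (by positivity), hpow] at h'
    rw [div_le_iff₀ (by positivity)]
    linarith
  · filter_upwards [eventually_ge_atTop 4] with n hn
    have h : (a n : ℝ) ≤ ((n : ℝ) + 1) ^ 4 * 5 ^ n := by
      have : a n ≤ (n + 1) ^ 4 * 5 ^ n := (hup n).trans <| by
        have h5 : 5 ≤ (n + 1) ^ 3 := le_trans (by omega) (Nat.le_self_pow (by norm_num) (n + 1))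
        calc (n + 1) * 5 ^ (n + 1) = (n + 1) * 5 * 5 ^ n := by ring
          _ ≤ (n + 1) * (n + 1) ^ 3 * 5 ^ n := by gcongr
          _ = _ := by ring
      exact_mod_cast this
    have h' := Real.rpow_le_rpow (by positivity) h (by positivity : 0 ≤ 1 / (n : ℝ))
    rwa [Real.mul_rpow (by positivity) (by positivity), hroot n (by omega), hpow] at h'

theorem growth_rates :
    Tendsto (fun n : ℕ => (hCount n : ℝ) ^ (1 / (n : ℝ))) atTop (nhds 5) ∧
    Tendsto (fun n : ℕ => (dCount n : ℝ) ^ (1 / (n : ℝ))) atTop (nhds 5) := by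
  refine ⟨tendsto_rpow_of_polynomial_bounds five_pow_le_hCount fun n =>
      (hCount_le_dCount n).trans (dCount_le n),
    tendsto_rpow_of_polynomial_bounds (fun n => (five_pow_le_hCount n).trans ?_) dCount_le⟩
  gcongr
  exact hCount_le_dCount n
end
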